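/- arXiv:2312.02639 — 2 statements merged into one kernel-verified Lean document; each statement's English description precedes it below -/
import Mathlib

section
/- Let Γ_n = P_n × P_3 × P_2 and let Y_n be the induced subgraph of Γ_n obtained by deleting the two vertices (n,2,1), (n,2,2). Then for every k ≥ 1 the independence complex I(Y_{2k}) is homotopy equivalent to the sphere S^{3k−1}, and for every k ≥ 0 the independence complex I(Y_{2k+1}) is homotopy equivalent to the sphere S^{3k+1}. -/
/-!
If the link of a vertex `v` of a simplicial complex is a cone with apex `u ≠ v`, then pushing the
mass at `v` onto `u` shows that deleting `v` does not change the homotopy type. In the independence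
complex of a prism `Q × P_2`, the vertex `(q, k)` is dominated by `(p, 1 - k)` as soon as `p` is
adjacent to `q` and all other neighbours of `p` have been deleted.

For `Q` the product of a path with a bipartite graph, one colour class of the last layer being
deleted, take for `p` the copy of `q` in the next layer and delete vertices layer by layer, from the
last layer backwards. What remains of `Q` is a single colour class `S`, so what remains of the
prism is a perfect matching with `|S|` edges. Its independence complex is the boundary of the
cross-polytope of dimension `|S|`, a sphere of dimension `|S| - 1`.
-/

open SimpleGraph

/-- An abstract simplicial complex on the underlying vertex set `V`. -/
structure Cplx (V : Type) where
  faces : Finset V → Prop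
  down_closed : ∀ ⦃σ τ : Finset V⦄, σ ⊆ τ → faces τ → faces σ

/-- The independence complex of a graph: the faces are the independent sets. -/
def indepCpx {V : Type} (G : SimpleGraph V) : Cplx V where
  faces σ := ∀ u ∈ σ, ∀ v ∈ σ, ¬ G.Adj u v
  down_closed := fun _ _ hst h u hu v hv => h u (hst hu) v (hst hv)

open Classical in
/-- The geometric realization of a simplicial complex, as a subspace of `V → ℝ`. -/
def Cplx.space {V : Type} [Fintype V] (K : Cplx V) : Type :=
  {f : V → ℝ // (∑ v, f v = 1) ∧ (∀ v, 0 ≤ f v) ∧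
    K.faces (Finset.univ.filter fun v => f v ≠ 0)}

instance {V : Type} [Fintype V] (K : Cplx V) : TopologicalSpace K.space :=
  instTopologicalSpaceSubtype

/-- The vertex set of the grid graph `P_n × P_3 × P_2`. -/
abbrev GV (n : ℕ) : Type := Fin n × Fin 3 × Fin 2

/-- The grid graph `Γ_n = P_n × P_3 × P_2` (cartesian product of paths). -/
def Gam (n : ℕ) : SimpleGraph (GV n) :=
  (pathGraph n).boxProd ((pathGraph 3).boxProd (pathGraph 2))

/-- The graph `Y_{m+1}`: the induced subgraph of `Γ_{m+1} = P_{m+1} × P_3 × P_2`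
obtained by deleting the vertices `(m+1,2,1)` and `(m+1,2,2)`
(in the 0-based indexing below: `(m,1,0)` and `(m,1,1)`). -/
abbrev Yset (m : ℕ) : Set (GV (m + 1)) :=
  {x | x ≠ (Fin.last m, 1, 0) ∧ x ≠ (Fin.last m, 1, 1)}

def Yg (m : ℕ) : SimpleGraph ↥(Yset m) := (Gam (m + 1)).induce (Yset m)

open scoped ContinuousMap Finset

section ShiftMass

variable {V : Type}

open Classical in
/-- The finite support of a weight function, in the form in which it enters `Cplx.space`. -/
noncomputable def supp [Fintype V] (f : V → ℝ) : Finset V := {v | f v ≠ 0}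

@[simp]
theorem mem_supp [Fintype V] {f : V → ℝ} {v : V} : v ∈ supp f ↔ f v ≠ 0 := by
  simp [supp]

variable [DecidableEq V]

/-- The weight function obtained from `f` by moving the fraction `t` of the mass at `v` to `u`. -/
noncomputable def shiftMass (u v : V) (t : ℝ) (f : V → ℝ) : V → ℝ :=
  f + (t * f v) • (Pi.single u 1 - Pi.single v 1)

theorem continuous_shiftMass (u v : V) :
    Continuous fun p : ℝ × (V → ℝ) => shiftMass u v p.1 p.2 := by
  unfold shiftMass
  fun_prop

theorem shiftMass_of_eq_zero {v : V} {f : V → ℝ} (hf : f v = 0) (u : V) (t : ℝ) :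
    shiftMass u v t f = f := by
  simp [shiftMass, hf]

theorem shiftMass_zero (u v : V) (f : V → ℝ) : shiftMass u v 0 f = f := by
  simp [shiftMass]

theorem shiftMass_one_apply_self {u v : V} (huv : u ≠ v) (f : V → ℝ) :
    shiftMass u v 1 f v = 0 := by
  simp [shiftMass, huv.symm]

theorem shiftMass_nonneg {u v : V} {t : ℝ} (ht : t ∈ unitInterval) {f : V → ℝ}
    (hf : ∀ w, 0 ≤ f w) (w : V) : 0 ≤ shiftMass u v t f w := by
  have hu : 0 ≤ t * f v * Pi.single (M := fun _ => ℝ) u 1 w :=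
    mul_nonneg (mul_nonneg ht.1 (hf v)) (Pi.single_nonneg (α := fun _ => ℝ).2 zero_le_one w)
  have hv : t * f v * Pi.single (M := fun _ => ℝ) v 1 w ≤ f w := by
    obtain rfl | hwv := eq_or_ne w v
    · simpa using mul_le_of_le_one_left (hf w) ht.2
    · simpa [hwv] using hf w
  simp only [shiftMass, Pi.add_apply, Pi.smul_apply, Pi.sub_apply, smul_eq_mul, mul_sub]
  linarith

variable [Fintype V]

theorem sum_shiftMass (u v : V) (t : ℝ) (f : V → ℝ) :
    ∑ w, shiftMass u v t f w = ∑ w, f w := by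
  simp [shiftMass, Finset.sum_add_distrib, ← Finset.mul_sum]

theorem supp_shiftMass_subset {v : V} {f : V → ℝ} (hf : f v ≠ 0) (u : V) (t : ℝ) :
    supp (shiftMass u v t f) ⊆ insert u (supp f) := by
  intro w hw
  simp only [Finset.mem_insert, mem_supp] at hw ⊢
  contrapose! hw
  have hwv : w ≠ v := fun h => hf (h ▸ hw.2)
  simp [shiftMass, hw, hwv]

end ShiftMass

theorem nonempty_homeomorph_unitSphere {E F : Type*} [NormedAddCommGroup E] [NormedSpace ℝ E]
    [NormedAddCommGroup F] [NormedSpace ℝ F] (L : E ≃L[ℝ] F) :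
    Nonempty (Metric.sphere (0 : E) 1 ≃ₜ Metric.sphere (0 : F) 1) := by
  have hinterior : (interior (L '' Metric.closedBall 0 1)).Nonempty := by
    rw [← L.coe_toHomeomorph, ← L.toHomeomorph.image_interior,
      interior_closedBall _ one_ne_zero]
    exact (Metric.nonempty_ball.2 one_pos).image _
  obtain ⟨φ, -, -, hφ⟩ := exists_homeomorph_image_interior_closure_frontier_eq_unitBall
    (s := L '' Metric.closedBall 0 1) ((convex_closedBall 0 1).linear_image L.toLinearMap)
    hinterior (L.lipschitz.isBounded_image Metric.isBounded_closedBall)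
  have himage : φ '' (L '' Metric.sphere 0 1) = Metric.sphere 0 1 := by
    rwa [← L.coe_toHomeomorph, ← L.toHomeomorph.image_frontier,
      frontier_closedBall _ one_ne_zero] at hφ
  exact ⟨((L.toHomeomorph.image _).trans (φ.image _)).trans (Homeomorph.setCongr himage)⟩

namespace Cplx

/-- The subcomplex of the faces of `K` contained in `T`. -/
def restrict {V : Type} (K : Cplx V) (T : Set V) : Cplx V where
  faces σ := ↑σ ⊆ T ∧ K.faces σ
  down_closed _ _ hστ h := ⟨(Finset.coe_subset.2 hστ).trans h.1, K.down_closed hστ h.2⟩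

@[simp]
theorem restrict_univ {V : Type} (K : Cplx V) : K.restrict Set.univ = K := by
  simp [restrict]

theorem restrict_restrict {V : Type} (K : Cplx V) (T U : Set V) :
    (K.restrict T).restrict U = K.restrict (T ∩ U) := by
  simp only [restrict, Set.subset_inter_iff, and_left_comm, and_assoc]

/-- The vertex `v` is dominated by the vertex `u` if the link of `v` is a cone with apex `u`. -/
def IsDominated {V : Type} [DecidableEq V] (K : Cplx V) (v u : V) : Prop :=
  u ≠ v ∧ ∀ ⦃σ⦄, K.faces σ → v ∈ σ → K.faces (insert u σ)

section Realization

variable {V : Type} [Fintype V]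

/-- The weight functions that are barycentric coordinates of a point of the realization of `K`. -/
structure IsBarycentric (K : Cplx V) (f : V → ℝ) : Prop where
  sum_eq_one : ∑ v, f v = 1
  nonneg : ∀ v, 0 ≤ f v
  faces_supp : K.faces (supp f)

variable {K : Cplx V}

/-- The barycentric coordinates of a point of the realization. -/
def coords (x : K.space) : V → ℝ := x.1

/-- The point of the realization with given barycentric coordinates. -/
def IsBarycentric.point {f : V → ℝ} (hf : K.IsBarycentric f) : K.space :=
  ⟨f, hf.sum_eq_one, hf.nonneg, hf.faces_supp⟩

theorem isBarycentric_coords (x : K.space) : K.IsBarycentric (coords x) :=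
  ⟨x.2.1, x.2.2.1, x.2.2.2⟩

theorem coords_injective : Function.Injective (coords : K.space → V → ℝ) :=
  Subtype.val_injective

theorem continuous_coords : Continuous (coords : K.space → V → ℝ) :=
  continuous_subtype_val

theorem continuous_of_coords {X : Type*} [TopologicalSpace X] {g : X → K.space}
    (hg : Continuous fun x => coords (g x)) : Continuous g :=
  continuous_induced_rng.2 hg

theorem isBarycentric_restrict_iff {T : Set V} {f : V → ℝ} :
    (K.restrict T).IsBarycentric f ↔ K.IsBarycentric f ∧ ∀ v ∉ T, f v = 0 := by
  have hsupp : (supp f : Set V) ⊆ T ↔ ∀ v ∉ T, f v = 0 := by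
    simp only [Set.subset_def, Finset.mem_coe, mem_supp, not_imp_comm]
  rw [← hsupp]
  exact ⟨fun h => ⟨⟨h.1, h.2, h.3.2⟩, h.3.1⟩, fun h => ⟨h.1.1, h.1.2, h.2, h.1.3⟩⟩

section Embedding

variable {A : Type} [Fintype A] {L : Cplx A} (e : A ↪ V)

theorem isBarycentric_comp_iff (hLK : ∀ σ : Finset A, L.faces σ ↔ K.faces (σ.map e)) {f : V → ℝ}
    (hf : ∀ v ∉ Set.range e, f v = 0) : L.IsBarycentric (f ∘ e) ↔ K.IsBarycentric f := by
  have hsum : ∑ a, (f ∘ e) a = ∑ v, f v :=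
    Fintype.sum_of_injective e e.injective _ _ hf fun _ => rfl
  have hnonneg : (∀ a, 0 ≤ (f ∘ e) a) ↔ ∀ v, 0 ≤ f v := by
    refine ⟨fun h v => ?_, fun h a => h (e a)⟩
    by_cases hv : v ∈ Set.range e
    · obtain ⟨a, rfl⟩ := hv
      exact h a
    · exact (hf v hv).ge
  have hsupp : (supp (f ∘ e)).map e = supp f := by
    ext v
    by_cases hv : v ∈ Set.range e
    · obtain ⟨a, rfl⟩ := hv
      simp
    · simpa [hf v hv] using fun a _ h => hv ⟨a, h⟩
  have hfaces : L.faces (supp (f ∘ e)) ↔ K.faces (supp f) := by rw [hLK, hsupp]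
  exact ⟨fun h => ⟨hsum ▸ h.1, hnonneg.1 h.2, hfaces.1 h.3⟩,
    fun h => ⟨hsum.trans h.1, hnonneg.2 h.2, hfaces.2 h.3⟩⟩

/-- The realization of a full subcomplex depends only on the complex it induces on its vertices. -/
noncomputable def spaceHomeomorph (hLK : ∀ σ : Finset A, L.faces σ ↔ K.faces (σ.map e)) :
    L.space ≃ₜ (K.restrict (Set.range e)).space where
  toFun x := IsBarycentric.point (f := Function.extend e (coords x) 0) <| by
    have hzero : ∀ v ∉ Set.range e, Function.extend e (coords x) (0 : V → ℝ) v = 0 :=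
      fun v hv => Function.extend_apply' _ _ v hv
    refine isBarycentric_restrict_iff.2 ⟨(isBarycentric_comp_iff e hLK hzero).1 ?_, hzero⟩
    rw [Function.extend_comp e.injective]
    exact isBarycentric_coords x
  invFun y := IsBarycentric.point (f := coords y ∘ e) <|
    have hy := isBarycentric_restrict_iff.1 (isBarycentric_coords y)
    (isBarycentric_comp_iff e hLK hy.2).2 hy.1
  left_inv x := coords_injective (Function.extend_comp e.injective (coords x) 0)
  right_inv y := coords_injective <| funext fun v => by
    by_cases hv : v ∈ Set.range e
    · obtain ⟨a, rfl⟩ := hv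
      exact e.injective.extend_apply _ _ a
    · exact (Function.extend_apply' _ _ v hv).trans
        ((isBarycentric_restrict_iff.1 (isBarycentric_coords y)).2 v hv).symm
  continuous_toFun := continuous_of_coords <| continuous_pi fun v => by
    by_cases hv : v ∈ Set.range e
    · obtain ⟨a, rfl⟩ := hv
      exact ((continuous_apply a).comp continuous_coords).congr fun x =>
        (e.injective.extend_apply (coords x) 0 a).symm
    · exact continuous_const.congr fun x =>
        (Function.extend_apply' (coords x) (0 : V → ℝ) v hv).symm
  continuous_invFun := continuous_of_coords <|
    continuous_pi fun a => (continuous_apply (e a)).comp continuous_coords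

end Embedding

section Collapse

variable [DecidableEq V] {u v : V}

theorem IsDominated.isBarycentric_shiftMass (h : K.IsDominated v u) {t : ℝ}
    (ht : t ∈ unitInterval) {f : V → ℝ} (hf : K.IsBarycentric f) :
    K.IsBarycentric (shiftMass u v t f) := by
  by_cases hv : f v = 0
  · rwa [shiftMass_of_eq_zero hv]
  · exact ⟨(sum_shiftMass u v t f).trans hf.sum_eq_one, shiftMass_nonneg ht hf.nonneg,
      K.down_closed (supp_shiftMass_subset hv u t) (h.2 hf.faces_supp (mem_supp.2 hv))⟩

/-- An elementary strong collapse in the sense of Barmak and Minian. -/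
theorem IsDominated.nonempty_homotopyEquiv (h : K.IsDominated v u) :
    Nonempty (K.space ≃ₕ (K.restrict {v}ᶜ).space) := by
  have hshift (t : unitInterval) (x : K.space) : K.IsBarycentric (shiftMass u v t (coords x)) :=
    h.isBarycentric_shiftMass t.2 (isBarycentric_coords x)
  have hretract (x : K.space) :
      (K.restrict {v}ᶜ).IsBarycentric (shiftMass u v 1 (coords x)) := by
    refine isBarycentric_restrict_iff.2 ⟨hshift 1 x, fun w hw => ?_⟩
    rw [Set.notMem_compl_iff.1 hw, shiftMass_one_apply_self h.1]
  have hincl (x : (K.restrict {v}ᶜ).space) :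
      K.IsBarycentric (coords x) ∧ ∀ w ∉ ({v}ᶜ : Set V), coords x w = 0 :=
    isBarycentric_restrict_iff.1 (isBarycentric_coords x)
  let retract : C(K.space, (K.restrict {v}ᶜ).space) :=
    ⟨fun x => (hretract x).point, continuous_of_coords
      ((continuous_shiftMass u v).comp (continuous_const.prodMk continuous_coords))⟩
  let incl : C((K.restrict {v}ᶜ).space, K.space) :=
    ⟨fun x => (hincl x).1.point, continuous_of_coords continuous_coords⟩
  let homotopy : (ContinuousMap.id K.space).Homotopy (incl.comp retract) :=
    { toFun := fun p => (hshift p.1 p.2).point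
      continuous_toFun := continuous_of_coords <| (continuous_shiftMass u v).comp <|
        (continuous_subtype_val.comp continuous_fst).prodMk (continuous_coords.comp continuous_snd)
      map_zero_left := fun x => coords_injective (shiftMass_zero u v (coords x))
      map_one_left := fun _ => rfl }
  have hretract_incl : retract.comp incl = ContinuousMap.id _ := by
    ext x
    exact coords_injective (shiftMass_of_eq_zero ((hincl x).2 v (by simp)) u 1)
  exact ⟨⟨retract, incl, ⟨homotopy.symm⟩, hretract_incl ▸ ContinuousMap.Homotopic.refl _⟩⟩

/-- The vertices outside `S` are deleted in order of decreasing rank `r`. -/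
theorem nonempty_homotopyEquiv_restrict {α : Type*} [LinearOrder α] (S : Set V) (r : V → α)
    (h : ∀ v ∉ S, ∃ u ∈ S, ∀ σ, K.faces σ → v ∈ σ → (∀ x ∈ σ, x ∈ S ∨ r x ≤ r v) →
      K.faces (insert u σ)) :
    Nonempty (K.space ≃ₕ (K.restrict S).space) := by
  suffices ∀ R : Finset V, Nonempty ((K.restrict (S ∪ R)).space ≃ₕ (K.restrict S).space) by
    have huniv := this Finset.univ
    rwa [Finset.coe_univ, Set.union_univ, restrict_univ] at huniv
  intro R
  induction R using Finset.induction_on_max_value r with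
  | empty =>
    rw [Finset.coe_empty, Set.union_empty]
    exact ⟨.refl _⟩
  | insert v R hvR hmax ih =>
    by_cases hvS : v ∈ S
    · rwa [Finset.coe_insert, Set.union_insert,
        Set.insert_eq_of_mem (Set.mem_union_left _ hvS)]
    obtain ⟨u, huS, hu⟩ := h v hvS
    have hdom : (K.restrict (S ∪ ↑(insert v R))).IsDominated v u := by
      refine ⟨fun huv => hvS (huv ▸ huS), fun σ hσ hvσ => ⟨?_, hu σ hσ.2 hvσ fun x hx => ?_⟩⟩
      · rw [Finset.coe_insert, Set.insert_subset_iff]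
        exact ⟨Or.inl huS, hσ.1⟩
      · refine (hσ.1 hx).imp_right fun hxR => ?_
        obtain rfl | hxR := Finset.mem_insert.1 hxR
        exacts [le_rfl, hmax x hxR]
    have hdel : (S ∪ ↑(insert v R)) ∩ {v}ᶜ = S ∪ (R : Set V) := by
      ext x
      by_cases hxv : x = v <;> simp [hxv, hvS, hvR]
    obtain ⟨collapse⟩ := hdom.nonempty_homotopyEquiv
    rw [restrict_restrict, hdel] at collapse
    exact ih.map collapse.trans

end Collapse

end Realization

section CrossPolytope

/-- The boundary of the cross-polytope with vertices `± i` for `i : ι`, encoded as the summands of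
`ι ⊕ ι`: the faces are the sets without antipodal vertices. -/
def crossPolytope (ι : Type) : Cplx (ι ⊕ ι) where
  faces σ := ∀ a ∈ σ, a.swap ∉ σ
  down_closed _ _ hστ h a ha hb := h a (hστ ha) (hστ hb)

variable {ι : Type} [Fintype ι]

theorem isBarycentric_crossPolytope_iff {f : ι ⊕ ι → ℝ} :
    (crossPolytope ι).IsBarycentric f ↔ ∑ a, f a = 1 ∧ (∀ a, 0 ≤ f a) ∧
      ∀ i, f (.inl i) = 0 ∨ f (.inr i) = 0 := by
  have hfaces : (crossPolytope ι).faces (supp f) ↔ ∀ i, f (.inl i) = 0 ∨ f (.inr i) = 0 := by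
    simp only [crossPolytope, mem_supp, not_not, Sum.forall, Sum.swap_inl, Sum.swap_inr,
      ← forall_and, or_iff_not_imp_left]
    grind
  exact ⟨fun h => ⟨h.1, h.2, hfaces.1 h.3⟩, fun h => ⟨h.1, h.2.1, hfaces.2 h.2.2⟩⟩

theorem isBarycentric_posPart_negPart {y : ι → ℝ} (hy : ∑ i, |y i| = 1) :
    (crossPolytope ι).IsBarycentric (Sum.elim y⁺ y⁻) := by
  refine isBarycentric_crossPolytope_iff.2 ⟨?_, ?_, fun i => ?_⟩
  · simpa [Fintype.sum_sum_type, ← Finset.sum_add_distrib, posPart_add_negPart] using hy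
  · exact Sum.forall.2 ⟨fun i => posPart_nonneg (y i), fun i => negPart_nonneg (y i)⟩
  · exact (le_total (y i) 0).imp posPart_eq_zero.2 negPart_eq_zero.2

theorem elim_posPart_negPart_sub {f : ι ⊕ ι → ℝ} (hf : (crossPolytope ι).IsBarycentric f) :
    Sum.elim (f ∘ .inl - f ∘ .inr)⁺ (f ∘ .inl - f ∘ .inr)⁻ = f := by
  obtain ⟨-, hnonneg, hzero⟩ := isBarycentric_crossPolytope_iff.1 hf
  ext (i | i) <;> obtain h | h := hzero i <;> simp [h, hnonneg]

/-- The barycentric coordinates at `i` and `-i` are the positive and the negative part of the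
`i`-th coordinate in the unit sphere of the `ℓ¹` norm. -/
noncomputable def crossPolytopeHomeomorph :
    (crossPolytope ι).space ≃ₜ Metric.sphere (0 : PiLp 1 fun _ : ι => ℝ) 1 where
  toFun x := ⟨WithLp.toLp 1 (coords x ∘ .inl - coords x ∘ .inr), by
    have hx := isBarycentric_coords x
    rw [mem_sphere_zero_iff_norm, PiLp.norm_eq_of_L1, ← hx.sum_eq_one,
      ← elim_posPart_negPart_sub hx]
    simp [Fintype.sum_sum_type, ← Finset.sum_add_distrib, posPart_add_negPart]⟩
  invFun y := IsBarycentric.point <| isBarycentric_posPart_negPart (y := WithLp.ofLp y.1) <| by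
    have hy := mem_sphere_zero_iff_norm.1 y.2
    rwa [PiLp.norm_eq_of_L1] at hy
  left_inv x := coords_injective (elim_posPart_negPart_sub (isBarycentric_coords x))
  right_inv y := Subtype.ext <| congrArg (WithLp.toLp 1) (posPart_sub_negPart (WithLp.ofLp y.1))
  continuous_toFun := by
    have := continuous_coords (K := crossPolytope ι)
    refine Continuous.subtype_mk ((PiLp.continuous_toLp 1 _).comp ?_) _
    fun_prop
  continuous_invFun := by
    have hcoord (i : ι) : Continuous fun y : Metric.sphere (0 : PiLp 1 fun _ : ι => ℝ) 1 =>
        WithLp.ofLp y.1 i := by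
      fun_prop
    exact continuous_of_coords <| continuous_pi <| Sum.forall.2
      ⟨fun i => continuous_posPart.comp (hcoord i), fun i => continuous_negPart.comp (hcoord i)⟩

theorem nonempty_crossPolytope_homeomorph_sphere :
    Nonempty ((crossPolytope ι).space ≃ₜ Metric.sphere (0 : EuclideanSpace ℝ ι) 1) :=
  (nonempty_homeomorph_unitSphere <| (PiLp.continuousLinearEquiv 1 ℝ fun _ : ι => ℝ).trans
    (PiLp.continuousLinearEquiv 2 ℝ fun _ : ι => ℝ).symm).map crossPolytopeHomeomorph.trans

end CrossPolytope

end Cplx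

section IndependenceComplex

variable {V : Type} {G : SimpleGraph V}

theorem indepCpx_faces_insert [DecidableEq V] {u : V} {σ : Finset V}
    (hσ : (indepCpx G).faces σ) (hu : ∀ x ∈ σ, ¬ G.Adj u x) :
    (indepCpx G).faces (insert u σ) := by
  intro x hx y hy
  rcases Finset.mem_insert.1 hx with rfl | hxσ <;> rcases Finset.mem_insert.1 hy with rfl | hyσ
  · exact G.irrefl
  · exact hu y hyσ
  · exact fun h => hu x hxσ h.symm
  · exact hσ x hxσ y hyσ

theorem crossPolytope_faces_iff_of_adj_iff {ι : Type} (e : ι ⊕ ι ↪ V)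
    (hadj : ∀ a b, G.Adj (e a) (e b) ↔ b = a.swap) (σ : Finset (ι ⊕ ι)) :
    (Cplx.crossPolytope ι).faces σ ↔ (indepCpx G).faces (σ.map e) := by
  simp only [Cplx.crossPolytope, indepCpx, Finset.forall_mem_map, hadj]
  exact forall₂_congr fun a _ => ⟨fun h b hb hba => h (hba ▸ hb), fun h ha => h _ ha rfl⟩

variable [Fintype V]

theorem nonempty_indepCpx_homeomorph {V' : Type} [Fintype V'] {G' : SimpleGraph V'}
    (φ : G ≃g G') : Nonempty ((indepCpx G).space ≃ₜ (indepCpx G').space) := by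
  have hfaces (σ : Finset V) :
      (indepCpx G).faces σ ↔ (indepCpx G').faces (σ.map φ.toEquiv.toEmbedding) := by
    simp only [indepCpx, Finset.forall_mem_map]
    exact forall₄_congr fun a _ b _ => not_congr φ.map_adj_iff.symm
  have h := Cplx.spaceHomeomorph φ.toEquiv.toEmbedding hfaces
  have hrange : Set.range φ.toEquiv.toEmbedding = Set.univ := φ.surjective.range_eq
  rw [hrange, Cplx.restrict_univ] at h
  exact ⟨h⟩

/-- The fold lemma, iterated: a vertex `v` is deleted once the remaining neighbours of some `u`
are all adjacent to `v`. -/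
theorem nonempty_indepCpx_homotopyEquiv_restrict {α : Type*} [LinearOrder α] (S : Set V)
    (r : V → α)
    (h : ∀ v ∉ S, ∃ u ∈ S, ∀ x, G.Adj u x → G.Adj v x ∨ (x ∉ S ∧ r v < r x)) :
    Nonempty ((indepCpx G).space ≃ₕ ((indepCpx G).restrict S).space) := by
  classical
  refine Cplx.nonempty_homotopyEquiv_restrict S r fun v hv => (h v hv).imp fun u hu =>
    ⟨hu.1, fun σ hσ hvσ hrank => indepCpx_faces_insert hσ fun x hx hux => ?_⟩
  obtain hvx | ⟨hxS, hlt⟩ := hu.2 x hux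
  · exact hσ v hvσ x hx hvx
  · exact (hrank x hx).elim hxS hlt.not_ge

end IndependenceComplex

section Prism

variable {W : Type} {Q : SimpleGraph W} {S : Set W}

theorem boxProd_pathGraph_two_adj {x y : W × Fin 2} :
    (Q □ pathGraph 2).Adj x y ↔ Q.Adj x.1 y.1 ∧ x.2 = y.2 ∨ y.2 = x.2.rev ∧ x.1 = y.1 := by
  have hrev : ∀ k l : Fin 2, (pathGraph 2).Adj k l ↔ l = k.rev := by
    simp only [pathGraph_adj]
    decide
  rw [boxProd_adj, hrev]

/-- The vertices of the prism over the points `p i`, with the layers `0` and `1` encoded as the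
summands of `ι ⊕ ι`; the vertical edges correspond to `Sum.swap`. -/
def prismEmbedding {ι : Type} (p : ι ↪ W) : ι ⊕ ι ↪ W × Fin 2 where
  toFun := Sum.elim (fun i => (p i, 0)) (fun i => (p i, 1))
  inj' := by
    rintro (i | i) (j | j) h <;> simp_all

@[simp]
theorem prismEmbedding_inl {ι : Type} (p : ι ↪ W) (i : ι) :
    prismEmbedding p (.inl i) = (p i, 0) :=
  rfl

@[simp]
theorem prismEmbedding_inr {ι : Type} (p : ι ↪ W) (i : ι) :
    prismEmbedding p (.inr i) = (p i, 1) :=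
  rfl

theorem range_prismEmbedding {ι : Type} (p : ι ↪ W) :
    Set.range (prismEmbedding p) = Prod.fst ⁻¹' Set.range p := by
  ext ⟨w, k⟩
  fin_cases k <;> simp

theorem prismEmbedding_adj_iff {ι : Type} {p : ι ↪ W} (hp : Q.IsIndepSet (Set.range p))
    (a b : ι ⊕ ι) :
    (Q □ pathGraph 2).Adj (prismEmbedding p a) (prismEmbedding p b) ↔ b = a.swap := by
  have hQ (i j : ι) : ¬ Q.Adj (p i) (p j) := fun h => hp ⟨i, rfl⟩ ⟨j, rfl⟩ h.ne h
  rw [boxProd_pathGraph_two_adj]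
  obtain i | i := a <;> obtain j | j := b <;> simp [hQ, eq_comm]

variable [Fintype W]

theorem nonempty_indepCpx_prism_restrict_homeomorph_sphere (hS : Q.IsIndepSet S) :
    Nonempty (((indepCpx (Q □ pathGraph 2)).restrict (Prod.fst ⁻¹' S)).space ≃ₜ
      Metric.sphere (0 : EuclideanSpace ℝ (Fin S.ncard)) 1) := by
  obtain ⟨p, hp⟩ : ∃ p : Fin S.ncard ↪ W, Set.range p = S :=
    have e : S ≃ Fin S.ncard := Finite.equivFinOfCardEq rfl
    ⟨e.symm.toEmbedding.trans (.subtype _),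
      (e.symm.surjective.range_comp Subtype.val).trans Subtype.range_coe⟩
  have hsphere := Cplx.spaceHomeomorph (prismEmbedding p) <|
    crossPolytope_faces_iff_of_adj_iff _ (prismEmbedding_adj_iff (hp ▸ hS))
  rw [range_prismEmbedding, hp] at hsphere
  exact Cplx.nonempty_crossPolytope_homeomorph_sphere.map hsphere.symm.trans

theorem nonempty_indepCpx_prism_homotopyEquiv_sphere {α : Type*} [LinearOrder α]
    (hS : Q.IsIndepSet S) (r : W → α)
    (h : ∀ v ∉ S, ∃ u ∈ S, Q.Adj u v ∧ ∀ x, Q.Adj u x → x = v ∨ r v < r x) :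
    Nonempty ((indepCpx (Q □ pathGraph 2)).space ≃ₕ
      Metric.sphere (0 : EuclideanSpace ℝ (Fin S.ncard)) 1) := by
  obtain ⟨sphere⟩ := nonempty_indepCpx_prism_restrict_homeomorph_sphere hS
  refine Nonempty.map (fun e => e.trans sphere.toHomotopyEquiv) <|
    nonempty_indepCpx_homotopyEquiv_restrict (Prod.fst ⁻¹' S) (r ∘ Prod.fst) ?_
  rintro ⟨q, k⟩ hq
  obtain ⟨p, hpS, hpq, hp⟩ := h q hq
  refine ⟨(p, k.rev), hpS, ?_⟩
  rintro ⟨x, l⟩ hx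
  obtain ⟨hpx, rfl⟩ | ⟨rfl, rfl⟩ := boxProd_pathGraph_two_adj.1 hx
  · exact (hp x hpx).imp (fun hxq => boxProd_pathGraph_two_adj.2 (Or.inr ⟨rfl, hxq.symm⟩))
      fun hrank => ⟨fun hxS => hS hpS hxS hpx.ne hpx, hrank⟩
  · exact Or.inl (boxProd_pathGraph_two_adj.2 (Or.inl ⟨hpq.symm, k.rev_rev.symm⟩))

end Prism

section TrimmedProduct

variable {U : Type} {H : SimpleGraph U} (c : H.Coloring Bool) (m : ℕ)

/-- The vertices of `P_{m+1} × H` that remain when, in the last layer, the vertices of colour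
`false` are deleted. -/
abbrev trimmedVerts : Set (Fin (m + 1) × U) :=
  {x | x.1 = Fin.last m → c x.2 = true}

/-- The common generalization of the two-dimensional layers of the graphs `Y_n`: the product
of a path with a bipartite graph, with one colour class of the last layer deleted. -/
def trimmedProd : SimpleGraph (trimmedVerts c m) :=
  (pathGraph (m + 1) □ H).induce (trimmedVerts c m)

/-- The colour class of the bipartite graph `P_{m+1} × H` that contains the remaining vertices
of the last layer. -/
def lastColorClass : Set (Fin (m + 1) × U) :=
  {x | c x.2 = true ↔ Even (m + x.1)}

theorem lastColorClass_subset_trimmedVerts : lastColorClass c m ⊆ trimmedVerts c m :=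
  fun x hx hlast => hx.2 (by simp [hlast])

theorem isIndepSet_lastColorClass : (pathGraph (m + 1) □ H).IsIndepSet (lastColorClass c m) := by
  rintro x hx y hy - hxy
  simp only [lastColorClass, Set.mem_ofPred_eq] at hx hy
  obtain ⟨hpath, hsnd⟩ | ⟨hH, hfst⟩ := boxProd_adj.1 hxy
  · rw [hsnd, hy] at hx
    rw [pathGraph_adj] at hpath
    grind
  · have hcolor := c.valid hH
    rw [hfst] at hx
    grind

theorem exists_mem_lastColorClass_adj {v : Fin (m + 1) × U} (hv : v ∈ trimmedVerts c m)
    (hvS : v ∉ lastColorClass c m) :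
    ∃ u ∈ lastColorClass c m, (pathGraph (m + 1) □ H).Adj u v ∧
      ∀ x, (pathGraph (m + 1) □ H).Adj u x → x = v ∨ v.1 < x.1 := by
  obtain ⟨i, h⟩ := v
  have hi : i ≠ Fin.last m := by
    rintro rfl
    exact hvS (by simpa [lastColorClass] using hv)
  obtain ⟨i, rfl⟩ := Fin.exists_castSucc_eq.2 hi
  refine ⟨(i.succ, h), ?_, ?_, ?_⟩
  · simp only [lastColorClass, Set.mem_ofPred_eq, Fin.val_castSucc, Fin.val_succ] at hvS ⊢
    grind
  · simp [boxProd_adj, pathGraph_adj]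
  · rintro ⟨j, h'⟩ hx
    simp only [boxProd_adj, pathGraph_adj, Fin.val_succ] at hx
    simp only [Prod.mk.injEq, Fin.lt_def, Fin.ext_iff, Fin.val_castSucc]
    grind

theorem sum_range_ite_even (a b : ℕ) :
    ∑ i ∈ Finset.range (m + 1), (if Even i then a else b) = (m / 2 + 1) * a + (m + 1) / 2 * b := by
  induction m with
  | zero => simp
  | succ m ih =>
    rw [Finset.sum_range_succ, ih, show (m + 1 + 1) / 2 = m / 2 + 1 by lia]
    split_ifs with hm
    · rw [show (m + 1) / 2 = m / 2 + 1 by grind]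
      ring
    · rw [show (m + 1) / 2 = m / 2 by grind]
      ring

theorem ncard_lastColorClass [Finite U] : (lastColorClass c m).ncard =
    (m / 2 + 1) * (c.colorClass true).ncard + (m + 1) / 2 * (c.colorClass false).ncard := by
  have := Fintype.ofFinite U
  classical
  have hlayer (n : ℕ) : ({h | c h = true ↔ Even n} : Finset U).card =
      if Even n then (c.colorClass true).ncard else (c.colorClass false).ncard := by
    split_ifs with hn <;> simp [hn, Set.ncard_eq_toFinset_card', Coloring.colorClass]
  calc (lastColorClass c m).ncard
      = ∑ i : Fin (m + 1), ({h | c h = true ↔ Even (m + i : ℕ)} : Finset U).card := by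
        simp only [lastColorClass, Set.ncard_eq_toFinset_card', Set.toFinset_ofPred,
          Finset.card_filter, Fintype.sum_prod_type]
    _ = ∑ i ∈ Finset.range (m + 1),
          if Even i then (c.colorClass true).ncard else (c.colorClass false).ncard := by
        rw [← Finset.sum_range_reflect, Finset.sum_range]
        refine Finset.sum_congr rfl fun i _ => ?_
        rw [hlayer]
        congr 1
        grind
    _ = _ := sum_range_ite_even m _ _

variable [Fintype U]

/-- For `H = P_3` this is the theorem on the graphs `Y_n`. -/
theorem indep_Y_homotopyEquiv_general :
    Nonempty ((indepCpx (trimmedProd c m □ pathGraph 2)).space ≃ₕ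
      Metric.sphere (0 : EuclideanSpace ℝ (Fin
        ((m / 2 + 1) * (c.colorClass true).ncard + (m + 1) / 2 * (c.colorClass false).ncard)))
        1) := by
  let S : Set (trimmedVerts c m) := Subtype.val ⁻¹' lastColorClass c m
  have hcard : S.ncard = (lastColorClass c m).ncard :=
    Set.ncard_preimage_of_injective_subset_range Subtype.val_injective
      (by simpa using lastColorClass_subset_trimmedVerts c m)
  rw [← ncard_lastColorClass, ← hcard]
  refine nonempty_indepCpx_prism_homotopyEquiv_sphere (S := S) (r := fun x => x.1.1) ?_ ?_
  · exact fun x hx y hy hne => isIndepSet_lastColorClass c m hx hy (Subtype.val_injective.ne hne)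
  · intro v hv
    obtain ⟨u, hu, huv, hnbr⟩ := exists_mem_lastColorClass_adj c m v.2 hv
    exact ⟨⟨u, lastColorClass_subset_trimmedVerts c m hu⟩, hu, huv,
      fun x hx => (hnbr x hx).imp_left Subtype.ext⟩

end TrimmedProduct

theorem mem_Yset_iff {m : ℕ} {x : GV (m + 1)} :
    x ∈ Yset m ↔ (x.1, x.2.1) ∈ trimmedVerts (pathGraph.bicoloring 3) m := by
  obtain ⟨i, j, k⟩ := x
  have hcolor : ∀ j : Fin 3, pathGraph.bicoloring 3 j = true ↔ j ≠ 1 := by decide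
  fin_cases k <;> simp [hcolor]

/-- The graph `Y_{m+1}` as the prism over a trimmed product. -/
def ygIso (m : ℕ) : Yg m ≃g trimmedProd (pathGraph.bicoloring 3) m □ pathGraph 2 where
  toFun x := (⟨(x.1.1, x.1.2.1), mem_Yset_iff.1 x.2⟩, x.1.2.2)
  invFun y := ⟨(y.1.1.1, y.1.1.2, y.2), mem_Yset_iff.2 y.1.2⟩
  map_rel_iff' := by
    simp only [trimmedProd, Yg, Gam, boxProd_adj, comap_adj, Function.Embedding.subtype_apply,
      Equiv.coe_fn_mk, Subtype.ext_iff, Prod.ext_iff]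
    tauto

theorem ncard_colorClass_bicoloring_three_true :
    ((pathGraph.bicoloring 3).colorClass true).ncard = 2 := by
  rw [Set.ncard_eq_toFinset_card']
  decide

theorem ncard_colorClass_bicoloring_three_false :
    ((pathGraph.bicoloring 3).colorClass false).ncard = 1 := by
  rw [Set.ncard_eq_toFinset_card']
  decide

theorem nonempty_indepCpx_Yg_homotopyEquiv_sphere {m d : ℕ}
    (hd : (m / 2 + 1) * 2 + (m + 1) / 2 = d) :
    Nonempty ((indepCpx (Yg m)).space ≃ₕ Metric.sphere (0 : EuclideanSpace ℝ (Fin d)) 1) := by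
  obtain ⟨iso⟩ := nonempty_indepCpx_homeomorph (ygIso m)
  obtain ⟨sphere⟩ := indep_Y_homotopyEquiv_general (pathGraph.bicoloring 3) m
  rw [ncard_colorClass_bicoloring_three_true, ncard_colorClass_bicoloring_three_false,
    mul_one, hd] at sphere
  exact ⟨iso.toHomotopyEquiv.trans sphere⟩

/-- Lemma 6.3: the independence complex of `Y_{2k}` is homotopy equivalent to
`S^{3k-1}`, and the independence complex of `Y_{2k+1}` is homotopy equivalent to
`S^{3k+1}`. -/
theorem indep_Y_homotopyEquiv :
    (∀ k : ℕ, 1 ≤ k → Nonempty (ContinuousMap.HomotopyEquiv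
      (indepCpx (Yg (2 * k - 1))).space
      (Metric.sphere (0 : EuclideanSpace ℝ (Fin (3 * k))) 1))) ∧
    (∀ k : ℕ, Nonempty (ContinuousMap.HomotopyEquiv
      (indepCpx (Yg (2 * k))).space
      (Metric.sphere (0 : EuclideanSpace ℝ (Fin (3 * k + 2))) 1))) := by
  constructor
  · intro k hk
    exact nonempty_indepCpx_Yg_homotopyEquiv_sphere (by lia)
  · intro k
    exact nonempty_indepCpx_Yg_homotopyEquiv_sphere (by lia)
end

section
/- Let Γ_n = P_n × P_3 × P_2. Then the independence complex I(Γ_n) has the following homotopy type: I(Γ_{6m}) ≃ (∨_5 S^{9m−1}) ∨ (∨_6 S^{9m−2}) ∨ ⋯ ∨ (∨_6 S^{8m}) ∨ (∨_2 S^{8m−1}) for m ≥ 1; I(Γ_{6m+1}) ≃ S^{9m+1} ∨ (∨_6 S^{9m}) ∨ ⋯ ∨ (∨_6 S^{8m+1}) for m ≥ 0; I(Γ_2) ≃ S^2 ∨ S^2 ∨ S^2 and I(Γ_{6m+2}) ≃ (∨_5 S^{9m+2}) ∨ (∨_6 S^{9m+1}) ∨ ⋯ ∨ (∨_6 S^{8m+3})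 ∨ (∨_4 S^{8m+2}) for m ≥ 1; I(Γ_{6m+3}) ≃ S^{9m+4} ∨ (∨_6 S^{9m+3}) ∨ ⋯ ∨ (∨_6 S^{8m+4}) ∨ (∨_2 S^{8m+3}) for m ≥ 0; I(Γ_{6m+4}) ≃ (∨_5 S^{9m+5}) ∨ (∨_6 S^{9m+4}) ∨ ⋯ ∨ (∨_6 S^{8m+5}) for m ≥ 0; and I(Γ_{6m+5}) ≃ S^{9m+7} ∨ (∨_6 S^{9m+6}) ∨ ⋯ ∨ (∨_6 S^{8m+7}) ∨ (∨_4 S^{8m+6}) for m ≥ 0. Here ∨_r S^d denotes a wedge of r copies of the d-sphere, and '⋯' ranges over wedges of 6 spheres in each intermediate dimension. -/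
open SimpleGraph

/-- The `d`-dimensional unit sphere. -/
abbrev sph (d : ℕ) : Type := Metric.sphere (0 : EuclideanSpace ℝ (Fin (d + 1))) 1

/-- A base point on the `d`-sphere. -/
noncomputable def basePt (d : ℕ) : sph d :=
  ⟨EuclideanSpace.single 0 1, by simp [EuclideanSpace.norm_single]⟩

/-- The wedge of `c d` copies of the `d`-sphere, over all dimensions `d`
(the basepoints of all the spheres are identified). -/
noncomputable def sphereWedge (c : ℕ → ℕ) : Type :=
  Quot (fun (x y : Σ d : ℕ, Fin (c d) × sph d) =>
    x = y ∨ (x.2.2 = basePt x.1 ∧ y.2.2 = basePt y.1))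

noncomputable instance (c : ℕ → ℕ) : TopologicalSpace (sphereWedge c) :=
  instTopologicalSpaceQuot

/-!
Removing from a flag complex a vertex, or an edge, whose link is a cone does not change the homotopy
type: the mass of its open star can be pushed to the apex. For an independence complex, this removes
a vertex `a` whose neighbourhood contains that of another vertex, and it splits off isolated edges
as suspensions. If the inclusion of the link of `p` in the deletion of `p` is null-homotopic, then
the whole complex is the wedge of the deletion and the suspension of the link.

In the grid, the link and the deletion of a point in the middle of the first layer simplify to grids
with fewer layers and a modified front, and all the inclusions involved are null-homotopic:
enlarging a subcomplex by dominated vertices preserves null-homotopy, which pushes the question from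
the front to the far end of the grid. This gives a recursion for the number of spheres in each
dimension. All equivalences of wedges stay inside flag complexes, with the spheres modelled by
boundaries of cross-polytopes.
-/

/-- A finite flag complex with vertices in a type `V`. The relation `Rel` encodes both the
vertices and the edges: `a` is a vertex iff `Rel a a`, and a set is a face iff any two of its
elements, equal or not, are related. -/
@[ext]
structure FlagComplex (V : Type) where
  Rel : V → V → Prop
  symm : ∀ {a b : V}, Rel a b → Rel b a
  finite_vertices : {a | Rel a a}.Finite

namespace FlagComplex

variable {V V' W W' : Type}

/-- `f` is a system of barycentric coordinates supported on a face of `F`. A `finsum` with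
infinite support is zero, so the last condition includes the finiteness of the support. -/
structure IsPoint (F : FlagComplex V) (f : V → ℝ) : Prop where
  nonneg : ∀ v, 0 ≤ f v
  rel : ∀ ⦃u v⦄, f u ≠ 0 → f v ≠ 0 → F.Rel u v
  finsum_eq_one : ∑ᶠ v, f v = 1

/-- The geometric realization, with the topology of pointwise convergence of barycentric
coordinates. -/
abbrev Realization (F : FlagComplex V) : Type := {f : V → ℝ // F.IsPoint f}

/-- The flag complex obtained by removing the edge `{a, b}`, or the vertex `a` if `a = b`. -/
def deletePair (F : FlagComplex V) (a b : V) : FlagComplex V where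
  Rel u v := F.Rel u v ∧ ¬ ((u = a ∧ v = b) ∨ (u = b ∧ v = a))
  symm h := ⟨F.symm h.1, fun h' => h.2 (by tauto)⟩
  finite_vertices := F.finite_vertices.subset fun _ h => h.1

/-- The pair `a, b` is dominated by `x`: every common neighbour of `a` and `b` is related to `x`.
When `x ∉ {a, b}`, this says that the link of the face `{a, b}` is a cone with apex `x`. -/
def Dominates (F : FlagComplex V) (x a b : V) : Prop :=
  ∀ u, F.Rel u u → F.Rel u a → F.Rel u b → F.Rel u x

section Push

variable {a b x : V} {f : V → ℝ}

open Classical in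
/-- The direction which takes one unit of mass from each of `a` and `b` (only once if `a = b`) and
gives all of it to `x`. -/
noncomputable def pushDir (a b x v : V) : ℝ :=
  (if v = x then (({a, b} : Finset V).card : ℝ) else 0) - if v ∈ ({a, b} : Finset V) then 1 else 0

lemma pushDir_left (hx : x ≠ a) : pushDir a b x a = -1 := by simp [pushDir, hx.symm]

lemma pushDir_right (hx : x ≠ b) : pushDir a b x b = -1 := by simp [pushDir, hx.symm]

lemma pushDir_nonneg {v : V} (ha : v ≠ a) (hb : v ≠ b) : 0 ≤ pushDir a b x v := by
  simp only [pushDir, Finset.mem_insert, Finset.mem_singleton, ha, hb, or_self, if_false, sub_zero]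
  split_ifs <;> positivity

lemma pushDir_eq_zero {v : V} (ha : v ≠ a) (hb : v ≠ b) (hx : v ≠ x) : pushDir a b x v = 0 := by
  simp [pushDir, ha, hb, hx]

lemma support_pushDir_subset (a b x : V) : (pushDir a b x).support ⊆ {a, b, x} := by
  intro v hv
  by_contra h
  simp only [Set.mem_insert_iff, Set.mem_singleton_iff, not_or] at h
  exact hv (pushDir_eq_zero h.1 h.2.1 h.2.2)

lemma finite_support_pushDir (a b x : V) : (pushDir a b x).support.Finite :=
  (Set.toFinite _).subset (support_pushDir_subset a b x)

lemma finsum_pushDir (a b x : V) : ∑ᶠ v, pushDir a b x v = 0 := by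
  classical
  rw [finsum_eq_sum_of_support_subset (s := {a, b, x}) _
    (by simpa using support_pushDir_subset a b x)]
  simp only [pushDir, Finset.sum_sub_distrib, Finset.sum_ite_eq', Finset.sum_ite_mem]
  rw [if_pos (by simp), Finset.inter_eq_right.2 (by grind)]
  simp

/-- Moves the fraction `t` of the common mass of `a` and `b` to `x`. -/
noncomputable def push (a b x : V) (t : ℝ) (f : V → ℝ) (v : V) : ℝ :=
  f v + t * min (f a) (f b) * pushDir a b x v

lemma continuous_push : Continuous fun p : ℝ × (V → ℝ) => push a b x p.1 p.2 := by
  unfold push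
  fun_prop

@[simp] lemma push_zero : push a b x 0 f = f := by
  funext v
  simp [push]

lemma push_eq_self {t : ℝ} (h : min (f a) (f b) = 0) : push a b x t f = f := by
  funext v
  simp [push, h]

lemma push_one_eq_zero (hxa : x ≠ a) (hxb : x ≠ b) :
    push a b x 1 f a = 0 ∨ push a b x 1 f b = 0 := by
  simp only [push, pushDir_left hxa, pushDir_right hxb]
  rcases min_choice (f a) (f b) with h | h <;> simp [h]

lemma push_nonneg (hxa : x ≠ a) (hxb : x ≠ b) {t : ℝ} (ht : t ∈ unitInterval)
    (hf : ∀ v, 0 ≤ f v) (v : V) : 0 ≤ push a b x t f v := by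
  have hm : 0 ≤ min (f a) (f b) := le_min (hf a) (hf b)
  have htm : t * min (f a) (f b) ≤ min (f a) (f b) := mul_le_of_le_one_left hm ht.2
  unfold push
  by_cases hva : v = a
  · subst hva
    rw [pushDir_left hxa]
    linarith [min_le_left (f v) (f b)]
  by_cases hvb : v = b
  · subst hvb
    rw [pushDir_right hxb]
    linarith [min_le_right (f a) (f v)]
  · exact add_nonneg (hf v) (mul_nonneg (mul_nonneg ht.1 hm) (pushDir_nonneg hva hvb))

lemma finsum_push (t : ℝ) (hf : f.support.Finite) : ∑ᶠ v, push a b x t f v = ∑ᶠ v, f v := by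
  have hd : (fun v => t * min (f a) (f b) * pushDir a b x v).support.Finite :=
    (finite_support_pushDir a b x).subset (Function.support_mul_subset_right _ _)
  simp only [push]
  rw [finsum_add_distrib hf hd, ← mul_finsum, finsum_pushDir, mul_zero, add_zero]

end Push

section Collapse

variable {F : FlagComplex V} {a b x : V} {f : V → ℝ}

lemma IsPoint.finite_support (hf : F.IsPoint f) : f.support.Finite :=
  F.finite_vertices.subset fun _ hv => hf.rel hv hv

lemma IsPoint.min_eq_zero_of_deletePair (hf : (F.deletePair a b).IsPoint f) :
    min (f a) (f b) = 0 := by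
  by_contra hm
  have ha : f a ≠ 0 := fun h => hm (by rw [h]; exact min_eq_left (hf.nonneg b))
  have hb : f b ≠ 0 := fun h => hm (by rw [h]; exact min_eq_right (hf.nonneg a))
  exact (hf.rel ha hb).2 (Or.inl ⟨rfl, rfl⟩)

lemma IsPoint.of_deletePair (hf : (F.deletePair a b).IsPoint f) : F.IsPoint f :=
  ⟨hf.nonneg, fun _ _ hu hv => (hf.rel hu hv).1, hf.finsum_eq_one⟩

lemma IsPoint.push (hx : F.Rel x x) (hxa : x ≠ a) (hxb : x ≠ b) (h : F.Dominates x a b)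
    {t : ℝ} (ht : t ∈ unitInterval) (hf : F.IsPoint f) : F.IsPoint (push a b x t f) := by
  refine ⟨push_nonneg hxa hxb ht hf.nonneg, fun u v hu hv => ?_,
    (finsum_push t hf.finite_support).trans hf.finsum_eq_one⟩
  by_cases hm : min (f a) (f b) = 0
  · rw [push_eq_self hm] at hu hv
    exact hf.rel hu hv
  have hfa : f a ≠ 0 := fun h => hm (by rw [h]; exact min_eq_left (hf.nonneg b))
  have hfb : f b ≠ 0 := fun h => hm (by rw [h]; exact min_eq_right (hf.nonneg a))
  have support_push : ∀ v, FlagComplex.push a b x t f v ≠ 0 → f v ≠ 0 ∨ v = x := by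
    intro v hv
    by_contra! hc
    have hva : v ≠ a := fun e => hfa (e ▸ hc.1)
    have hvb : v ≠ b := fun e => hfb (e ▸ hc.1)
    exact hv (by simp [FlagComplex.push, hc.1, pushDir_eq_zero hva hvb hc.2])
  have rel_apex : ∀ v, f v ≠ 0 → F.Rel v x := fun v hv =>
    h v (hf.rel hv hv) (hf.rel hv hfa) (hf.rel hv hfb)
  rcases support_push u hu with hu | hu <;> rcases support_push v hv with hv | hv
  exacts [hf.rel hu hv, hv ▸ rel_apex u hu, hu ▸ F.symm (rel_apex v hv), hu ▸ hv ▸ hx]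

lemma IsPoint.push_one (hx : F.Rel x x) (hxa : x ≠ a) (hxb : x ≠ b) (h : F.Dominates x a b)
    (hf : F.IsPoint f) : (F.deletePair a b).IsPoint (FlagComplex.push a b x 1 f) := by
  have hp := hf.push hx hxa hxb h unitInterval.one_mem
  refine ⟨hp.nonneg, fun u v hu hv => ⟨hp.rel hu hv, ?_⟩, hp.finsum_eq_one⟩
  have := push_one_eq_zero (f := f) hxa hxb
  rintro (⟨hua, hvb⟩ | ⟨hub, hva⟩)
  · exact this.elim (hua ▸ hu) (hvb ▸ hv)
  · exact this.elim (hva ▸ hv) (hub ▸ hu)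

/-- The deformation retraction pushes the mass of the open star of `{a, b}` towards `x`. -/
theorem nonempty_homotopyEquiv_deletePair (hx : F.Rel x x) (hxa : x ≠ a) (hxb : x ≠ b)
    (h : F.Dominates x a b) :
    Nonempty (ContinuousMap.HomotopyEquiv F.Realization (F.deletePair a b).Realization) := by
  have continuous_pushing : Continuous fun p : unitInterval × F.Realization =>
      push a b x (p.1 : ℝ) p.2.1 :=
    continuous_push.comp ((continuous_subtype_val.comp continuous_fst).prodMk
      (continuous_subtype_val.comp continuous_snd))
  let retraction : C(F.Realization, (F.deletePair a b).Realization) :=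
    ⟨fun f => ⟨push a b x 1 f.1, f.2.push_one hx hxa hxb h⟩,
      (continuous_pushing.comp (Continuous.prodMk_right (1 : unitInterval))).subtype_mk _⟩
  let inclusion : C((F.deletePair a b).Realization, F.Realization) :=
    ⟨fun f => ⟨f.1, f.2.of_deletePair⟩, continuous_subtype_val.subtype_mk _⟩
  let pushing : ContinuousMap.Homotopy (ContinuousMap.id _) (inclusion.comp retraction) :=
    { toFun := fun p => ⟨push a b x p.1 p.2.1, p.2.2.push hx hxa hxb h p.1.2⟩
      continuous_toFun := continuous_pushing.subtype_mk _
      map_zero_left := fun _ => Subtype.ext push_zero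
      map_one_left := fun _ => rfl }
  have retraction_inclusion : retraction.comp inclusion = ContinuousMap.id _ :=
    ContinuousMap.ext fun f => Subtype.ext (push_eq_self f.2.min_eq_zero_of_deletePair)
  exact ⟨⟨retraction, inclusion, ⟨pushing.symm⟩,
    retraction_inclusion ▸ ContinuousMap.Homotopic.refl _⟩⟩

end Collapse

/-- An isomorphism of flag complexes: a bijection between the vertices, given by functions whose
values at elements which are not vertices are irrelevant. -/
structure Iso (F : FlagComplex V) (G : FlagComplex W) where
  toFun : V → W
  invFun : W → V
  rel_iff : ∀ u v, F.Rel u u → F.Rel v v → (G.Rel (toFun u) (toFun v) ↔ F.Rel u v)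
  rel_invFun : ∀ w, G.Rel w w → F.Rel (invFun w) (invFun w)
  left_inv : ∀ u, F.Rel u u → invFun (toFun u) = u
  right_inv : ∀ w, G.Rel w w → toFun (invFun w) = w

namespace Iso

variable {F : FlagComplex V} {G : FlagComplex W}

lemma rel_toFun (e : Iso F G) {u : V} (hu : F.Rel u u) : G.Rel (e.toFun u) (e.toFun u) :=
  (e.rel_iff u u hu hu).2 hu

/-- The inverse isomorphism. -/
def symm (e : Iso F G) : Iso G F where
  toFun := e.invFun
  invFun := e.toFun
  rel_iff u v hu hv := by
    rw [← e.rel_iff _ _ (e.rel_invFun u hu) (e.rel_invFun v hv), e.right_inv u hu, e.right_inv v hv]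
  rel_invFun _ := e.rel_toFun
  left_inv := e.right_inv
  right_inv := e.left_inv

/-- The map of realizations induced by an isomorphism, in barycentric coordinates. -/
noncomputable def transport (e : Iso F G) (f : V → ℝ) : W → ℝ :=
  {w | G.Rel w w}.indicator (f ∘ e.invFun)

lemma continuous_transport (e : Iso F G) : Continuous e.transport := by
  refine continuous_pi fun w => ?_
  by_cases hw : w ∈ {w | G.Rel w w}
  · simpa only [transport, Set.indicator_of_mem hw, Function.comp_apply]
      using continuous_apply (e.invFun w)
  · simpa only [transport, Set.indicator_of_notMem hw] using continuous_const

lemma isPoint_transport (e : Iso F G) {f : V → ℝ} (hf : F.IsPoint f) :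
    G.IsPoint (e.transport f) := by
  refine ⟨fun w => Set.indicator_nonneg (fun w _ => hf.nonneg _) w, fun u v hu hv => ?_, ?_⟩
  · obtain ⟨hu, hfu⟩ := Set.indicator_apply_ne_zero.1 hu
    obtain ⟨hv, hfv⟩ := Set.indicator_apply_ne_zero.1 hv
    exact (e.symm.rel_iff u v hu hv).1 (hf.rel hfu hfv)
  · have bijOn : Set.BijOn e.invFun {w | G.Rel w w} {v | F.Rel v v} :=
      ⟨e.rel_invFun, Set.LeftInvOn.injOn e.right_inv,
        fun v hv => ⟨e.toFun v, e.rel_toFun hv, e.left_inv v hv⟩⟩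
    calc ∑ᶠ w, e.transport f w = ∑ᶠ w ∈ {w | G.Rel w w}, f (e.invFun w) := (finsum_mem_def _ _).symm
      _ = ∑ᶠ v ∈ {v | F.Rel v v}, f v :=
        finsum_mem_eq_of_bijOn e.invFun bijOn fun _ _ => rfl
      _ = ∑ᶠ v, f v := (finsum_mem_def _ _).trans <|
        congrArg finsum (Set.indicator_eq_self.2 fun _ hv => hf.rel hv hv)
      _ = 1 := hf.finsum_eq_one

lemma transport_symm_transport (e : Iso F G) {f : V → ℝ} (hf : F.IsPoint f) :
    e.symm.transport (e.transport f) = f := by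
  funext u
  by_cases hu : F.Rel u u
  · simp only [transport, Set.indicator, Set.mem_ofPred_eq, hu, Function.comp_apply, symm,
      e.rel_toFun hu, e.left_inv u hu, if_true]
  · have hfu : f u = 0 := by_contra fun h => hu (hf.rel h h)
    simp only [transport, Set.indicator, Set.mem_ofPred_eq, hu, if_false, hfu]

/-- The homeomorphism of realizations induced by an isomorphism. -/
noncomputable def realization (e : Iso F G) : F.Realization ≃ₜ G.Realization where
  toFun f := ⟨e.transport f.1, e.isPoint_transport f.2⟩
  invFun f := ⟨e.symm.transport f.1, e.symm.isPoint_transport f.2⟩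
  left_inv f := Subtype.ext (e.transport_symm_transport f.2)
  right_inv f := Subtype.ext (e.symm.transport_symm_transport f.2)
  continuous_toFun := (e.continuous_transport.comp continuous_subtype_val).subtype_mk _
  continuous_invFun := (e.symm.continuous_transport.comp continuous_subtype_val).subtype_mk _

end Iso

/-- The equivalence relation generated by isomorphism and by the removal of vertices and edges
whose link is a cone. -/
inductive SimpleEquiv : ∀ {V W : Type}, FlagComplex V → FlagComplex W → Prop
  | refl {V : Type} (F : FlagComplex V) : SimpleEquiv F F
  | symm {V W : Type} {F : FlagComplex V} {G : FlagComplex W} : SimpleEquiv F G → SimpleEquiv G F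
  | trans {U V W : Type} {F : FlagComplex U} {G : FlagComplex V} {H : FlagComplex W} :
      SimpleEquiv F G → SimpleEquiv G H → SimpleEquiv F H
  | collapse {V : Type} (F : FlagComplex V) (a b x : V) (hx : F.Rel x x) (hxa : x ≠ a) (hxb : x ≠ b)
      (h : F.Dominates x a b) : SimpleEquiv F (F.deletePair a b)
  | of_iso {V W : Type} {F : FlagComplex V} {G : FlagComplex W} (e : Iso F G) : SimpleEquiv F G

infix:50 " ≈ₛ " => SimpleEquiv

instance {U V W : Type} : Trans (SimpleEquiv (V := U) (W := V)) (SimpleEquiv (V := V) (W := W))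
    (SimpleEquiv (V := U) (W := W)) := ⟨SimpleEquiv.trans⟩

theorem SimpleEquiv.nonempty_homotopyEquiv {F : FlagComplex V} {G : FlagComplex W} (h : F ≈ₛ G) :
    Nonempty (ContinuousMap.HomotopyEquiv F.Realization G.Realization) := by
  induction h with
  | refl F => exact ⟨ContinuousMap.HomotopyEquiv.refl _⟩
  | symm _ ih => exact ih.map ContinuousMap.HomotopyEquiv.symm
  | trans _ _ ih₁ ih₂ => exact ih₁.elim fun e₁ => ih₂.map fun e₂ => e₁.trans e₂
  | collapse F a b x hx hxa hxb h => exact nonempty_homotopyEquiv_deletePair hx hxa hxb h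
  | of_iso e => exact ⟨e.realization.toHomotopyEquiv⟩

namespace SimpleEquiv

theorem of_rel_iff {F G : FlagComplex V} (hdiag : ∀ a, F.Rel a a ↔ G.Rel a a)
    (h : ∀ a b, F.Rel a a → F.Rel b b → (F.Rel a b ↔ G.Rel a b)) : F ≈ₛ G :=
  of_iso ⟨id, id, fun a b ha hb => (h a b ha hb).symm, fun a ha => (hdiag a).2 ha, fun _ _ => rfl,
    fun _ _ => rfl⟩

end SimpleEquiv

/-- The flag complex obtained by removing all pairs of a list. -/
def deletePairs (F : FlagComplex V) : List (V × V) → FlagComplex V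
  | [] => F
  | p :: L => (F.deletePairs L).deletePair p.1 p.2

lemma rel_deletePairs {F : FlagComplex V} {L : List (V × V)} {u v : V} :
    (F.deletePairs L).Rel u v ↔ F.Rel u v ∧ (u, v) ∉ L ∧ (v, u) ∉ L := by
  induction L with
  | nil => simp [deletePairs]
  | cons p L ih =>
    simp only [deletePairs, deletePair, ih, List.mem_cons, Prod.ext_iff]
    tauto

/-- Since `x` keeps dominating a pair while other pairs are removed, the pairs can be removed one by
one. -/
theorem SimpleEquiv.deletePairs {F : FlagComplex V} {L : List (V × V)}
    (h : ∀ p ∈ L, F.Rel p.1 p.1 ∧ F.Rel p.2 p.2 ∧ F.Rel p.1 p.2 ∧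
      ∃ x, (F.deletePairs L).Rel x x ∧
        ∀ u, F.Rel u u → F.Rel u p.1 → F.Rel u p.2 → (F.deletePairs L).Rel u x) :
    F ≈ₛ F.deletePairs L := by
  suffices ∀ M ⊆ L, F ≈ₛ F.deletePairs M from this L (List.Subset.refl L)
  intro M
  induction M with
  | nil => exact fun _ => refl F
  | cons p M ih =>
    intro hM
    have hML : M ⊆ L := fun q hq => hM (List.mem_cons_of_mem p hq)
    have hpL : p ∈ L := hM List.mem_cons_self
    obtain ⟨h₁, h₂, h₁₂, x, hx, hux⟩ := h p hpL
    have of_L : ∀ {u v}, (F.deletePairs L).Rel u v → (F.deletePairs M).Rel u v := fun huv =>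
      have huv := rel_deletePairs.1 huv
      rel_deletePairs.2 ⟨huv.1, fun hm => huv.2.1 (hML hm), fun hm => huv.2.2 (hML hm)⟩
    have hx₁ : x ≠ p.1 := by
      rintro rfl
      exact (rel_deletePairs.1 (hux p.2 h₂ (F.symm h₁₂) h₂)).2.2 hpL
    have hx₂ : x ≠ p.2 := by
      rintro rfl
      exact (rel_deletePairs.1 (hux p.1 h₁ h₁ h₁₂)).2.1 hpL
    refine (ih hML).trans (collapse _ p.1 p.2 x (of_L hx) hx₁ hx₂ fun u hu hu₁ hu₂ => of_L ?_)
    exact hux u (rel_deletePairs.1 hu).1 (rel_deletePairs.1 hu₁).1 (rel_deletePairs.1 hu₂).1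

/-- The full subcomplex with vertices in `P`. -/
def restrict (F : FlagComplex V) (P : V → Prop) : FlagComplex V where
  Rel u v := F.Rel u v ∧ P u ∧ P v
  symm h := ⟨F.symm h.1, h.2.2, h.2.1⟩
  finite_vertices := F.finite_vertices.subset fun _ h => h.1

lemma exists_list_mem_iff (F : FlagComplex V) (P : V → V → Prop) :
    ∃ L : List (V × V), ∀ u v, (u, v) ∈ L ↔ F.Rel u u ∧ F.Rel v v ∧ P u v := by
  have hfin : {p : V × V | F.Rel p.1 p.1 ∧ F.Rel p.2 p.2 ∧ P p.1 p.2}.Finite :=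
    (F.finite_vertices.prod F.finite_vertices).subset fun p hp => ⟨hp.1, hp.2.1⟩
  exact ⟨hfin.toFinset.toList, fun u v => by simp⟩

namespace SimpleEquiv

theorem restrict {F : FlagComplex V} (P : V → Prop)
    (h : ∀ a, F.Rel a a → ¬ P a → ∃ x, F.Rel x x ∧ P x ∧ ∀ u, F.Rel u u → F.Rel u a → F.Rel u x) :
    F ≈ₛ F.restrict P := by
  obtain ⟨L, hL⟩ := F.exists_list_mem_iff fun u v => u = v ∧ ¬ P u
  have rel_iff : ∀ {u v}, P v → ((F.deletePairs L).Rel u v ↔ F.Rel u v) := fun {u v} hv =>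
    ⟨fun h => (rel_deletePairs.1 h).1, fun h => rel_deletePairs.2 ⟨h,
      fun hm => ((hL u v).1 hm).2.2.2 (((hL u v).1 hm).2.2.1 ▸ hv),
      fun hm => ((hL v u).1 hm).2.2.2 hv⟩⟩
  have vertex_iff : ∀ a, (F.deletePairs L).Rel a a ↔ F.Rel a a ∧ P a := fun a =>
    ⟨fun ha => ⟨(rel_deletePairs.1 ha).1, by_contra fun hPa => (rel_deletePairs.1 ha).2.1
      ((hL a a).2 ⟨(rel_deletePairs.1 ha).1, (rel_deletePairs.1 ha).1, rfl, hPa⟩)⟩,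
      fun ha => (rel_iff ha.2).2 ha.1⟩
  calc F ≈ₛ F.deletePairs L := by
        refine deletePairs fun ⟨a, b⟩ hp => ?_
        obtain ⟨ha, -, rfl, hPa⟩ := (hL a b).1 hp
        obtain ⟨x, hx, hPx, hux⟩ := h a ha hPa
        exact ⟨ha, ha, ha, x, (rel_iff hPx).2 hx, fun u hu hua _ => (rel_iff hPx).2 (hux u hu hua)⟩
    _ ≈ₛ F.restrict P := by
        refine of_rel_iff (fun a => ?_) fun a b ha hb => ?_
        · simp only [vertex_iff, FlagComplex.restrict, and_self]
        · have hPa := ((vertex_iff a).1 ha).2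
          have hPb := ((vertex_iff b).1 hb).2
          simp only [rel_iff hPb, FlagComplex.restrict, hPa, hPb, and_self, and_true]

theorem of_remove_edges {F G : FlagComplex V} (hle : ∀ a b, G.Rel a b → F.Rel a b)
    (hdiag : ∀ a, F.Rel a a → G.Rel a a)
    (h : ∀ a b, F.Rel a b → ¬ G.Rel a b → ∃ x, G.Rel x x ∧
      ∀ u, F.Rel u u → F.Rel u a → F.Rel u b → G.Rel u x) : F ≈ₛ G := by
  obtain ⟨L, hL⟩ := F.exists_list_mem_iff fun u v => F.Rel u v ∧ ¬ G.Rel u v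
  have of_G : ∀ {u v}, G.Rel u v → (F.deletePairs L).Rel u v := fun {u v} huv =>
    rel_deletePairs.2 ⟨hle u v huv, fun hm => ((hL u v).1 hm).2.2.2 huv,
      fun hm => ((hL v u).1 hm).2.2.2 (G.symm huv)⟩
  calc F ≈ₛ F.deletePairs L := by
        refine deletePairs fun ⟨a, b⟩ hp => ?_
        obtain ⟨ha, hb, hab, hab'⟩ := (hL a b).1 hp
        obtain ⟨x, hx, hux⟩ := h a b hab hab'
        exact ⟨ha, hb, hab, x, of_G hx, fun u hu hua hub => of_G (hux u hu hua hub)⟩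
    _ ≈ₛ G := by
        refine of_rel_iff (fun a => ⟨fun ha => hdiag a (rel_deletePairs.1 ha).1, of_G⟩)
          fun a b ha hb => ⟨fun hab => by_contra fun hab' => (rel_deletePairs.1 hab).2.1 ?_, of_G⟩
        exact (hL a b).2 ⟨(rel_deletePairs.1 ha).1, (rel_deletePairs.1 hb).1,
          (rel_deletePairs.1 hab).1, hab'⟩

end SimpleEquiv

/-- The relation of `glue`. -/
def glueRel (F : FlagComplex V) (G : FlagComplex W) (c : V → W → Prop) : V ⊕ W → V ⊕ W → Prop
  | .inl u, .inl v => F.Rel u v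
  | .inl u, .inr t => c u t
  | .inr t, .inl u => c u t
  | .inr s, .inr t => G.Rel s t

/-- The flag complex on the disjoint union of the vertices of `F` and `G`, where the edges between
the two parts are given by `c`. -/
def glue (F : FlagComplex V) (G : FlagComplex W) (c : V → W → Prop) : FlagComplex (V ⊕ W) where
  Rel := glueRel F G c
  symm := by
    rintro (a | a) (b | b) h
    exacts [F.symm h, h, h, G.symm h]
  finite_vertices :=
    ((F.finite_vertices.image Sum.inl).union (G.finite_vertices.image Sum.inr)).subset <| by
      rintro (a | a) h
      exacts [Or.inl ⟨a, h, rfl⟩, Or.inr ⟨a, h, rfl⟩]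

section Glue

variable {F : FlagComplex V} {G : FlagComplex W} {c c' : V → W → Prop}

lemma glue_deletePair (a b : V) :
    glue (F.deletePair a b) G c = (glue F G c).deletePair (.inl a) (.inl b) := by
  ext (u | u) (v | v) <;> simp [glue, glueRel, deletePair]

/-- Gluing a fixed complex to isomorphic complexes gives isomorphic complexes. -/
def Iso.glue {F' : FlagComplex V'} {c' : V' → W → Prop} (e : Iso F F')
    (hc : ∀ u t, F.Rel u u → G.Rel t t → (c' (e.toFun u) t ↔ c u t)) :
    Iso (glue F G c) (glue F' G c') where
  toFun := Sum.map e.toFun id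
  invFun := Sum.map e.invFun id
  rel_iff := by
    rintro (u | s) (v | t) hu hv
    exacts [e.rel_iff u v hu hv, hc u t hu hv, hc v s hv hu, Iff.rfl]
  rel_invFun := by
    rintro (u | t) h
    exacts [e.rel_invFun u h, h]
  left_inv := by
    rintro (u | t) h
    exacts [congrArg Sum.inl (e.left_inv u h), rfl]
  right_inv := by
    rintro (u | t) h
    exacts [congrArg Sum.inl (e.right_inv u h), rfl]

lemma glue_congr (h : ∀ u t, F.Rel u u → G.Rel t t → (c u t ↔ c' u t)) :
    glue F G c ≈ₛ glue F G c' :=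
  .of_iso (Iso.glue ⟨id, id, fun _ _ _ _ => Iff.rfl, fun _ h => h, fun _ _ => rfl, fun _ _ => rfl⟩
    fun u t hu ht => (h u t hu ht).symm)

lemma glue_comm : glue F G c ≈ₛ glue G F fun t u => c u t := by
  refine .of_iso ⟨Sum.swap, Sum.swap, ?_, ?_, fun u _ => u.swap_swap, fun u _ => u.swap_swap⟩
  · rintro (u | s) (v | t) - - <;> rfl
  · rintro (u | s) h <;> exact h

lemma glue_collapse {a b x : V} (hx : F.Rel x x) (hxa : x ≠ a) (hxb : x ≠ b)
    (h : F.Dominates x a b) (hc : ∀ t, c a t → c b t → c x t) :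
    glue F G c ≈ₛ glue (F.deletePair a b) G c := by
  rw [glue_deletePair]
  refine .collapse _ _ _ (.inl x) hx (Sum.inl_injective.ne hxa) (Sum.inl_injective.ne hxb) ?_
  rintro (u | t) hu hua hub
  exacts [h u hu hua hub, hc t hua hub]

lemma glue_remove (hle : ∀ u t, c' u t → c u t)
    (h : ∀ u t, c u t → ¬ c' u t →
      (∃ x, F.Rel x x ∧ (∀ v, F.Rel v v → F.Rel v u → c v t → F.Rel v x) ∧
        ∀ s, G.Rel s s → c u s → G.Rel s t → c' x s) ∨
      (∃ x, G.Rel x x ∧ (∀ v, F.Rel v v → F.Rel v u → c v t → c' v x) ∧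
        ∀ s, G.Rel s s → c u s → G.Rel s t → G.Rel s x)) :
    glue F G c ≈ₛ glue F G c' := by
  have exists_dominating : ∀ u t, c u t → ¬ c' u t → ∃ x, (glue F G c').Rel x x ∧
      ∀ y, (glue F G c).Rel y y → (glue F G c).Rel y (.inl u) → (glue F G c).Rel y (.inr t) →
        (glue F G c').Rel y x := by
    intro u t hut hut'
    rcases h u t hut hut' with ⟨x, hx, hF, hG⟩ | ⟨x, hx, hF, hG⟩
    · refine ⟨.inl x, hx, ?_⟩
      rintro (v | s)
      exacts [hF v, hG s]
    · refine ⟨.inr x, hx, ?_⟩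
      rintro (v | s)
      exacts [hF v, hG s]
  refine .of_remove_edges ?_ ?_ ?_
  · rintro (a | a) (b | b) hab
    exacts [hab, hle a b hab, hle b a hab, hab]
  · rintro (a | a) ha <;> exact ha
  · rintro (a | a) (b | b) hab hab'
    · exact absurd hab hab'
    · exact exists_dominating a b hab hab'
    · obtain ⟨x, hx, hy⟩ := exists_dominating b a hab hab'
      exact ⟨x, hx, fun y h₁ h₂ h₃ => hy y h₁ h₃ h₂⟩
    · exact absurd hab hab'

lemma glue_restrict (P : W → Prop)
    (h : ∀ t, G.Rel t t → ¬ P t → ∃ x, F.Rel x x ∧ (∀ u, F.Rel u u → c u t → F.Rel u x) ∧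
      ∀ s, G.Rel s s → G.Rel s t → c x s) :
    glue F G c ≈ₛ glue F (G.restrict P) c := by
  refine (SimpleEquiv.restrict (Sum.elim (fun _ => True) P) ?_).trans (.of_rel_iff ?_ ?_)
  · rintro (a | t) ha hP
    · exact absurd trivial hP
    · obtain ⟨x, hx, hF, hG⟩ := h t ha hP
      refine ⟨.inl x, hx, trivial, ?_⟩
      rintro (u | s)
      exacts [hF u, hG s]
  · rintro (a | t) <;> simp [restrict, glue, glueRel]
  · rintro (a | s) (b | t) ⟨-, hs, -⟩ ⟨-, ht, -⟩ <;> simp_all [restrict, glue, glueRel]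

end Glue

/-- The complex without vertices. -/
def nothing : FlagComplex Empty := ⟨fun _ _ => False, fun h => h, Set.toFinite _⟩

/-- The complex with one vertex. -/
def point : FlagComplex Unit := ⟨fun _ _ => True, fun h => h, Set.toFinite _⟩

/-- The complex with two vertices and no edge, a model of the `0`-sphere. -/
def poles : FlagComplex Bool := ⟨fun s t => s = t, fun h => h.symm, Set.toFinite _⟩

/-- The complex `F` with a cone attached to the full subcomplex with vertices in `B`. -/
def cone (F : FlagComplex V) (B : V → Prop) : FlagComplex (V ⊕ Unit) := glue F point fun u _ => B u

/-- The suspension, as the join with two points. -/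
def susp (F : FlagComplex V) : FlagComplex (V ⊕ Bool) := glue F poles fun _ _ => True

/-- The complexes `F` and `G` joined by an edge from `w` to `z`, a model of their wedge. -/
def edgeWedge (F : FlagComplex V) (w : V) (G : FlagComplex W) (z : W) : FlagComplex (V ⊕ W) :=
  glue F G fun u t => u = w ∧ t = z

lemma glue_nothing (F : FlagComplex V) (c : V → Empty → Prop) : glue F nothing c ≈ₛ F := by
  refine .of_iso ⟨Sum.elim id Empty.elim, Sum.inl, ?_, fun _ h => h, ?_, fun _ _ => rfl⟩
  · rintro (u | u) (v | v) - -
    exacts [Iff.rfl, v.elim, u.elim, u.elim]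
  · rintro (u | u) -
    exacts [rfl, u.elim]

theorem SimpleEquiv.susp {F : FlagComplex V} {G : FlagComplex W} (h : F ≈ₛ G) :
    F.susp ≈ₛ G.susp := by
  induction h with
  | refl F => exact .refl _
  | symm _ ih => exact ih.symm
  | trans _ _ ih₁ ih₂ => exact ih₁.trans ih₂
  | collapse F a b x hx hxa hxb h => exact glue_collapse hx hxa hxb h fun _ _ _ => trivial
  | of_iso e => exact .of_iso (e.glue fun _ _ _ _ => Iff.rfl)

theorem edgeWedge_comm (F : FlagComplex V) (w : V) (G : FlagComplex W) (z : W) :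
    edgeWedge F w G z ≈ₛ edgeWedge G z F w :=
  glue_comm.trans (glue_congr fun _ _ _ _ => and_comm)

theorem edgeWedge_slide {F : FlagComplex V} {w w' : V} (G : FlagComplex W) (z : W)
    (hw : F.Rel w w) (hw' : F.Rel w' w') (h : F.Rel w w') :
    edgeWedge F w G z ≈ₛ edgeWedge F w' G z := by
  have remove_edge : ∀ {w w' : V}, F.Rel w w → F.Rel w w' →
      glue F G (fun u t => (u = w ∨ u = w') ∧ t = z) ≈ₛ edgeWedge F w G z := by
    intro w w' hw h
    refine glue_remove (fun u t h => ⟨Or.inl h.1, h.2⟩) fun u t _ _ => Or.inl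
      ⟨w, hw, ?_, fun s _ hs _ => ⟨rfl, hs.2⟩⟩
    rintro v - - ⟨rfl | rfl, -⟩
    exacts [hw, F.symm h]
  calc edgeWedge F w G z ≈ₛ glue F G (fun u t => (u = w ∨ u = w') ∧ t = z) :=
        (remove_edge hw h).symm
    _ ≈ₛ glue F G (fun u t => (u = w' ∨ u = w) ∧ t = z) := glue_congr fun u t _ _ => by rw [or_comm]
    _ ≈ₛ edgeWedge F w' G z := remove_edge hw' (F.symm h)

/-- Every wedge of `F` with some other complex is equivalent to a wedge of `F'` with that complex,
for a suitable attaching point of `F'`. -/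
def WedgeCompat (F : FlagComplex V) (F' : FlagComplex V') : Prop :=
  ∀ w, F.Rel w w → ∃ w', F'.Rel w' w' ∧
    ∀ {W : Type} (G : FlagComplex W) (z : W), edgeWedge F w G z ≈ₛ edgeWedge F' w' G z

lemma WedgeCompat.refl (F : FlagComplex V) : WedgeCompat F F :=
  fun w hw => ⟨w, hw, fun _ _ => .refl _⟩

lemma WedgeCompat.trans {F : FlagComplex V} {F' : FlagComplex V'} {F'' : FlagComplex W}
    (h : WedgeCompat F F') (h' : WedgeCompat F' F'') : WedgeCompat F F'' := fun w hw =>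
  let ⟨w', hw', e⟩ := h w hw
  let ⟨w'', hw'', e'⟩ := h' w' hw'
  ⟨w'', hw'', fun G z => (e G z).trans (e' G z)⟩

lemma Iso.wedgeCompat {F : FlagComplex V} {F' : FlagComplex V'} (e : Iso F F') :
    WedgeCompat F F' := fun w hw => ⟨e.toFun w, e.rel_toFun hw, fun _ _ =>
  .of_iso (e.glue fun u _ hu _ => and_congr_left fun _ =>
    ⟨fun h => by rw [← e.left_inv u hu, h, e.left_inv w hw], congrArg e.toFun⟩)⟩

section

variable {F : FlagComplex V} {a b x : V}

lemma edgeWedge_collapse (hx : F.Rel x x) (hxa : x ≠ a) (hxb : x ≠ b) (h : F.Dominates x a b)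
    {w : V} (hw : (F.deletePair a b).Rel w w) (G : FlagComplex W) (z : W) :
    edgeWedge F w G z ≈ₛ edgeWedge (F.deletePair a b) w G z := by
  refine glue_collapse hx hxa hxb h ?_
  rintro t ⟨rfl, -⟩ ⟨rfl, -⟩
  exact (hw.2 (Or.inl ⟨rfl, rfl⟩)).elim

lemma wedgeCompat_deletePair (hx : F.Rel x x) (hxa : x ≠ a) (hxb : x ≠ b)
    (h : F.Dominates x a b) : WedgeCompat F (F.deletePair a b) := by
  intro w hw
  by_cases hw' : (F.deletePair a b).Rel w w
  · exact ⟨w, hw', edgeWedge_collapse hx hxa hxb h hw'⟩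
  · obtain ⟨rfl, rfl⟩ : w = a ∧ w = b := by
      by_contra hc
      exact hw' ⟨hw, by tauto⟩
    have hx' : (F.deletePair w w).Rel x x := ⟨hx, by tauto⟩
    exact ⟨x, hx', fun G z => (edgeWedge_slide G z hw hx (h w hw hw hw)).trans
      (edgeWedge_collapse hx hxa hxb h hx' G z)⟩

lemma deletePair_wedgeCompat (hx : F.Rel x x) (hxa : x ≠ a) (hxb : x ≠ b)
    (h : F.Dominates x a b) : WedgeCompat (F.deletePair a b) F :=
  fun w hw => ⟨w, hw.1, fun G z => (edgeWedge_collapse hx hxa hxb h hw G z).symm⟩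

end

namespace SimpleEquiv

theorem wedgeCompat_and_symm {F : FlagComplex V} {F' : FlagComplex V'} (h : F ≈ₛ F') :
    WedgeCompat F F' ∧ WedgeCompat F' F := by
  induction h with
  | refl F => exact ⟨.refl F, .refl F⟩
  | symm _ ih => exact ih.symm
  | trans _ _ ih₁ ih₂ => exact ⟨ih₁.1.trans ih₂.1, ih₂.2.trans ih₁.2⟩
  | collapse F a b x hx hxa hxb h =>
    exact ⟨wedgeCompat_deletePair hx hxa hxb h, deletePair_wedgeCompat hx hxa hxb h⟩
  | of_iso e => exact ⟨e.wedgeCompat, e.symm.wedgeCompat⟩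

theorem wedgeCompat {F : FlagComplex V} {F' : FlagComplex V'} (h : F ≈ₛ F') : WedgeCompat F F' :=
  h.wedgeCompat_and_symm.1

end SimpleEquiv

section DominatedCone

variable {F : FlagComplex V} {L : V → Prop} {w : V}

/-- The edges between `F` and `susp (F.restrict L)` when both poles are joined to `L`, and the pole
`true` and the copy of `L` are placed next to `w`. Together with `bridgeOnePole` this interpolates
between the cone over `L` and the wedge with the suspension of `L`. -/
def bridgeTwoPoles (F : FlagComplex V) (L : V → Prop) (w u : V) : V ⊕ Bool → Prop
  | .inl t => (L u ∨ u = w) ∧ F.Rel u t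
  | .inr s => L u ∨ (s = true ∧ u = w)

/-- The edges of `bridgeTwoPoles` without those at the pole `false`. -/
def bridgeOnePole (F : FlagComplex V) (L : V → Prop) (w u : V) : V ⊕ Bool → Prop
  | .inl t => (L u ∨ u = w) ∧ F.Rel u t
  | .inr s => s = true ∧ (L u ∨ u = w)

lemma cone_eqv_bridgeTwoPoles (hw : F.Rel w w) (hL : ∀ u, L u → F.Rel w u) :
    cone F L ≈ₛ glue F (susp (F.restrict L)) (bridgeTwoPoles F L w) := by
  have remove_dominated : glue F (susp (F.restrict L)) (bridgeTwoPoles F L w) ≈ₛ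
      glue F ((susp (F.restrict L)).restrict (· = .inr false)) (bridgeTwoPoles F L w) := by
    refine glue_restrict _ ?_
    rintro (t | (_ | _)) ht hP
    · refine ⟨t, ht.1, fun u _ hc => hc.2, ?_⟩
      rintro (s | s) - hst
      exacts [⟨Or.inl ht.2.1, F.symm hst.1⟩, Or.inl ht.2.1]
    · exact absurd rfl hP
    · refine ⟨w, hw, ?_, ?_⟩
      · rintro u - (hc | ⟨-, rfl⟩)
        exacts [F.symm (hL u hc), hw]
      · rintro (s | s) hs hst
        exacts [⟨Or.inr rfl, hL s hs.2.1⟩, Or.inr ⟨hst, rfl⟩]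
  refine .trans (.of_iso ⟨Sum.map id fun _ => .inr false, Sum.map id fun _ => (), ?_, ?_, ?_, ?_⟩)
    remove_dominated.symm
  · rintro (a | a) (b | b) - - <;>
      simp [glue, cone, glueRel, bridgeTwoPoles, restrict, susp, poles, point]
  · rintro (a | a) ha
    exacts [ha, trivial]
  · rintro (a | a) - <;> rfl
  · rintro (a | a) ha
    exacts [rfl, congrArg Sum.inr ha.2.1.symm]

lemma bridgeTwoPoles_eqv_bridgeOnePole (hL : ∀ u, L u → F.Rel u u) :
    glue F (susp (F.restrict L)) (bridgeTwoPoles F L w) ≈ₛ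
      glue F (susp (F.restrict L)) (bridgeOnePole F L w) := by
  refine glue_remove ?_ ?_
  · rintro u (t | s) h
    exacts [h, h.2.elim Or.inl fun hu => Or.inr ⟨h.1, hu⟩]
  · rintro u (t | (_ | _)) h h'
    · exact absurd h h'
    · have hu : L u := h.elim id fun h => absurd h.1 Bool.false_ne_true
      refine Or.inr ⟨.inl u, ⟨hL u hu, hu, hu⟩, fun v _ hvu hv =>
        ⟨Or.inl (hv.elim id fun h => absurd h.1 Bool.false_ne_true), hvu⟩, ?_⟩
      rintro (s | s) hs hus -
      exacts [⟨F.symm hus.2, hs.2.1, hu⟩, trivial]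
    · exact absurd ⟨rfl, h.imp id And.right⟩ h'

lemma bridgeOnePole_eqv_edgeWedge (hw : F.Rel w w) (hL : ∀ u, L u → F.Rel w u) :
    glue F (susp (F.restrict L)) (bridgeOnePole F L w) ≈ₛ
      edgeWedge F w (susp (F.restrict L)) (.inr true) := by
  have rel_apex : ∀ v, L v ∨ v = w → F.Rel v w := by
    rintro v (hv | rfl)
    exacts [F.symm (hL v hv), hw]
  let bridge : V → V ⊕ Bool → Prop := fun u =>
    Sum.elim (fun t => u = w ∧ L t) fun s => s = true ∧ (L u ∨ u = w)
  calc glue F (susp (F.restrict L)) (bridgeOnePole F L w)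
      ≈ₛ glue F (susp (F.restrict L)) bridge := by
        refine glue_remove ?_ ?_
        · rintro u (t | s) h
          exacts [⟨Or.inr h.1, h.1 ▸ hL t h.2⟩, h]
        · rintro u (t | s) h h'
          · refine Or.inl ⟨w, hw, fun v _ _ hv => rel_apex v hv.1, ?_⟩
            rintro (s | s) hs hc -
            exacts [⟨rfl, hs.2.1⟩, ⟨hc.1, Or.inr rfl⟩]
          · exact absurd h h'
    _ ≈ₛ edgeWedge F w (susp (F.restrict L)) (.inr true) := by
        refine glue_remove ?_ ?_
        · rintro u t ⟨rfl, rfl⟩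
          exact ⟨rfl, Or.inr rfl⟩
        · rintro u (t | s) h h'
          · refine Or.inr ⟨.inr true, rfl, fun v _ _ hc => ⟨hc.1, rfl⟩, ?_⟩
            rintro (s | s) - hc -
            exacts [trivial, hc.1]
          · obtain ⟨rfl, -⟩ := h
            refine Or.inl ⟨w, hw, fun v _ _ hv => rel_apex v hv.2, ?_⟩
            rintro (s | s) - hc -
            exacts [absurd ⟨hc.1, rfl⟩ h', ⟨rfl, congrArg Sum.inr hc.1⟩]

theorem cone_eqv_edgeWedge (hw : F.Rel w w) (hL : ∀ u, L u → F.Rel u u)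
    (hwL : ∀ u, L u → F.Rel w u) :
    cone F L ≈ₛ edgeWedge F w (susp (F.restrict L)) (.inr true) :=
  calc cone F L ≈ₛ glue F (susp (F.restrict L)) (bridgeTwoPoles F L w) :=
        cone_eqv_bridgeTwoPoles hw hwL
    _ ≈ₛ glue F (susp (F.restrict L)) (bridgeOnePole F L w) := bridgeTwoPoles_eqv_bridgeOnePole hL
    _ ≈ₛ edgeWedge F w (susp (F.restrict L)) (.inr true) := bridgeOnePole_eqv_edgeWedge hw hwL

end DominatedCone

section ConeExt

variable {F : FlagComplex V} {G : FlagComplex W} {C C' : V → Prop} {c : V → W → Prop}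

/-- Extends a cross relation to a cone, with the new vertex related to nothing. -/
def coneExt (c : V → W → Prop) : V ⊕ Unit → W → Prop := Sum.elim c fun _ _ => False

lemma glue_cone_shrink (hC : ∀ u, C' u → C u)
    (h : ∀ y, C y → ¬ C' y → ∃ x, F.Rel x x ∧ C' x ∧
      ∀ t, F.Rel t t → C t → F.Rel t y → F.Rel t x) :
    glue (cone F C) G (coneExt c) ≈ₛ glue (cone F C') G (coneExt c) := by
  have exists_dominating : ∀ y, C y → ¬ C' y →
      ∃ x, (glue (cone F C') G (coneExt c)).Rel x x ∧
        ∀ u, (glue (cone F C) G (coneExt c)).Rel u u →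
          (glue (cone F C) G (coneExt c)).Rel u (.inl (.inl y)) →
          (glue (cone F C) G (coneExt c)).Rel u (.inl (.inr ())) →
          (glue (cone F C') G (coneExt c)).Rel u x := by
    intro y hy hy'
    obtain ⟨x, hx, hxC, htx⟩ := h y hy hy'
    refine ⟨.inl (.inl x), hx, ?_⟩
    rintro ((t | t) | t) ht hty hta
    exacts [htx t ht hta hty, hxC, hta.elim]
  refine .of_remove_edges ?_ ?_ ?_
  · rintro ((a | a) | a) ((b | b) | b) hab
    exacts [hab, hC _ hab, hab, hC _ hab, hab, hab, hab, hab, hab]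
  · rintro ((a | a) | a) ha <;> exact ha
  · rintro ((a | a) | a) ((b | b) | b) hab hab' <;> try exact absurd hab hab'
    · exact exists_dominating a hab hab'
    · obtain ⟨x, hx, hu⟩ := exists_dominating b hab hab'
      exact ⟨x, hx, fun u h₁ h₂ h₃ => hu u h₁ h₃ h₂⟩

lemma glue_cone_absorb {w : V} (hw : F.Rel w w) (hCw : C w)
    (h : ∀ t, F.Rel t t → C t → F.Rel t w) :
    glue (cone F C) G (coneExt c) ≈ₛ glue F G c := by
  have remove_apex := SimpleEquiv.restrict (F := glue (cone F C) G (coneExt c))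
    (Sum.elim (Sum.elim (fun _ => True) fun _ => False) fun _ => True) <| by
      rintro ((a | a) | a) - hP
      · exact absurd trivial hP
      · refine ⟨.inl (.inl w), hw, trivial, ?_⟩
        rintro ((u | u) | u) hu hua
        exacts [h u hu hua, hCw, hua.elim]
      · exact absurd trivial hP
  refine remove_apex.trans (.of_iso ⟨Sum.map (Sum.elim id fun _ => w) id, Sum.map .inl id,
    ?_, ?_, ?_, ?_⟩)
  · rintro ((a | a) | a) ((b | b) | b) ha hb
    exacts [(and_iff_left ⟨trivial, trivial⟩).symm, hb.2.1.elim,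
      (and_iff_left ⟨trivial, trivial⟩).symm, ha.2.1.elim, ha.2.1.elim, ha.2.1.elim,
      (and_iff_left ⟨trivial, trivial⟩).symm, hb.2.1.elim,
      (and_iff_left ⟨trivial, trivial⟩).symm]
  · rintro (a | a) ha <;> exact ⟨ha, trivial, trivial⟩
  · rintro ((u | u) | u) hu
    exacts [rfl, hu.2.1.elim, rfl]
  · rintro (a | a) - <;> rfl

end ConeExt

/-- The full subcomplex of `F` with vertices in `B` is a cone in some complex `M` which contains `F`
and is equivalent to `F`, even after gluing other complexes to `F`. In particular the inclusion of
the subcomplex in `F` is null-homotopic. -/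
def NullIn (F : FlagComplex V) (B : V → Prop) : Prop :=
  ∃ (U : Type) (M : FlagComplex U) (i : V → U) (w : U), Function.Injective i ∧
    (∀ u v, M.Rel (i u) (i v) ↔ F.Rel u v) ∧ M.Rel w w ∧
    (∀ u, F.Rel u u → B u → M.Rel (i u) w) ∧
    ∀ {W : Type} (G : FlagComplex W) (c : V → W → Prop),
      glue M G (fun m t => ∃ u, i u = m ∧ c u t) ≈ₛ glue F G c

namespace NullIn

variable {F : FlagComplex V} {B B' : V → Prop}

theorem of_apex (w : V) (hw : F.Rel w w) (h : ∀ u, F.Rel u u → B u → F.Rel u w) : NullIn F B :=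
  ⟨V, F, id, w, Function.injective_id, fun _ _ => Iff.rfl, hw, h, fun _ _ =>
    glue_congr fun _ _ _ _ => by simp⟩

/-- Adds dominated vertices to `B ∩ B'`. The new ambient complex is the old one with a cone attached
to `B` and the old apex. -/
theorem of_dominated (h' : NullIn F B')
    (h : ∀ y, F.Rel y y → B y → ¬ B' y → ∃ x, F.Rel x x ∧ B x ∧ B' x ∧
      ∀ t, F.Rel t t → B t → F.Rel t y → F.Rel t x) : NullIn F B := by
  obtain ⟨U, M, i, w, hi, hrel, hw, hwB, hglue⟩ := h'
  let C : U → Prop := fun m => m = w ∨ ∃ u, F.Rel u u ∧ i u = m ∧ B u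
  let C' : U → Prop := fun m => m = w ∨ ∃ u, F.Rel u u ∧ i u = m ∧ B u ∧ B' u
  refine ⟨U ⊕ Unit, cone M C, Sum.inl ∘ i, .inr (), Sum.inl_injective.comp hi, hrel, trivial,
    fun u hu hB => Or.inr ⟨u, hu, rfl, hB⟩, fun {W} G c => ?_⟩
  have sub : ∀ m, C' m → C m := by
    rintro u (rfl | ⟨u, hu, rfl, hB, -⟩)
    exacts [Or.inl rfl, Or.inr ⟨u, hu, rfl, hB⟩]
  have dominated : ∀ m, C m → ¬ C' m → ∃ x, M.Rel x x ∧ C' x ∧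
      ∀ t, M.Rel t t → C t → M.Rel t m → M.Rel t x := by
    rintro m (rfl | ⟨u, hu, rfl, hB⟩) hm
    · exact absurd (Or.inl rfl) hm
    · obtain ⟨x, hx, hBx, hBx', hxt⟩ := h u hu hB fun hB' => hm (Or.inr ⟨u, hu, rfl, hB, hB'⟩)
      refine ⟨i x, (hrel x x).2 hx, Or.inr ⟨x, hx, rfl, hBx, hBx'⟩, ?_⟩
      rintro t - (rfl | ⟨t, ht, rfl, hBt⟩) htu
      exacts [M.symm (hwB x hx hBx'), (hrel t x).2 (hxt t ht hBt ((hrel t u).1 htu))]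
  have apex : ∀ m, M.Rel m m → C' m → M.Rel m w := by
    rintro m hm (rfl | ⟨t, ht, rfl, -, hBt⟩)
    exacts [hm, hwB t ht hBt]
  calc glue (cone M C) G (fun m t => ∃ u, (Sum.inl ∘ i) u = m ∧ c u t)
      ≈ₛ glue (cone M C) G (coneExt fun m t => ∃ u, i u = m ∧ c u t) :=
        glue_congr fun m t _ _ => by cases m <;> simp [coneExt]
    _ ≈ₛ glue (cone M C') G (coneExt fun m t => ∃ u, i u = m ∧ c u t) :=
        glue_cone_shrink sub dominated
    _ ≈ₛ glue M G (fun m t => ∃ u, i u = m ∧ c u t) := glue_cone_absorb hw (Or.inl rfl) apex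
    _ ≈ₛ glue F G c := hglue G c

theorem cone_eqv_edgeWedge (h : NullIn F B) (hB : ∀ u, B u → F.Rel u u) :
    ∃ w z, F.Rel w w ∧ (susp (F.restrict B)).Rel z z ∧
      cone F B ≈ₛ edgeWedge F w (susp (F.restrict B)) z := by
  obtain ⟨U, M, i, w, hi, hrel, hw, hwB, hglue⟩ := h
  let L : U → Prop := fun m => ∃ u, i u = m ∧ B u
  have ambient : M ≈ₛ F :=
    calc M ≈ₛ glue M nothing (fun m _ => ∃ u, i u = m ∧ True) := (glue_nothing _ _).symm
      _ ≈ₛ glue F nothing (fun _ _ => True) := hglue nothing fun _ _ => True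
      _ ≈ₛ F := glue_nothing _ _
  obtain ⟨w', hw', slide_base⟩ := ambient.wedgeCompat w hw
  obtain ⟨j, hj⟩ := (haveI : Nonempty V := ⟨w'⟩; hi.hasLeftInverse)
  have sub : M.restrict L ≈ₛ F.restrict B := by
    refine .symm (.of_iso ⟨i, j, fun u v hu hv => ?_, ?_, fun u _ => hj u, ?_⟩)
    · exact ⟨fun h => ⟨(hrel u v).1 h.1, hu.2.1, hv.2.1⟩,
        fun h => ⟨(hrel u v).2 h.1, ⟨u, rfl, h.2.1⟩, ⟨v, rfl, h.2.2⟩⟩⟩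
    · rintro m ⟨-, ⟨u, rfl, hu⟩, -⟩
      rw [hj u]
      exact ⟨hB u hu, hu, hu⟩
    · rintro m ⟨-, ⟨u, rfl, -⟩, -⟩
      exact congrArg i (hj u)
  obtain ⟨z, hz, slide_susp⟩ := sub.susp.wedgeCompat (.inr true) rfl
  refine ⟨w', z, hw', hz, ?_⟩
  calc cone F B ≈ₛ cone M L := (hglue point fun u _ => B u).symm
    _ ≈ₛ edgeWedge M w (susp (M.restrict L)) (.inr true) := by
        refine FlagComplex.cone_eqv_edgeWedge hw ?_ ?_
        · rintro m ⟨u, rfl, hu⟩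
          exact (hrel u u).2 (hB u hu)
        · rintro m ⟨u, rfl, hu⟩
          exact M.symm (hwB u (hB u hu) hu)
    _ ≈ₛ edgeWedge F w' (susp (M.restrict L)) (.inr true) := slide_base _ _
    _ ≈ₛ edgeWedge (susp (M.restrict L)) (.inr true) F w' := edgeWedge_comm _ _ _ _
    _ ≈ₛ edgeWedge (susp (F.restrict B)) z F w' := slide_susp _ _
    _ ≈ₛ edgeWedge F w' (susp (F.restrict B)) z := edgeWedge_comm _ _ _ _

end NullIn

section Bouquet

variable {ι κ : Type} {d : ι → ℕ}

/-- The points `(i, k, s)` with `k ≤ d i`, without `(i, 0, true)`. -/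
def IsBouquetVertex (d : ι → ℕ) (p : ι × ℕ × Bool) : Prop :=
  p.2.1 ≤ d p.1 ∧ (p.2.1 = 0 → p.2.2 = false)

/-- The relation of `bouquet`. -/
def bouquetRel (d : ι → ℕ) : Option (ι × ℕ × Bool) → Option (ι × ℕ × Bool) → Prop
  | none, none => True
  | none, some q => q.2.1 ≠ 0 ∧ IsBouquetVertex d q
  | some p, none => p.2.1 ≠ 0 ∧ IsBouquetVertex d p
  | some p, some q => p.1 = q.1 ∧ IsBouquetVertex d p ∧ IsBouquetVertex d q ∧
      (p.2.1 = q.2.1 → p.2.2 = q.2.2)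

/-- The wedge of the boundaries of cross-polytopes of dimensions `d i + 1`, a model of the wedge of
the spheres of dimensions `d i`. The vertices of the `i`-th one are the pairs `(k, s)` with
`k ≤ d i`, where the vertex `(0, true)` is replaced by the common base vertex `none`. -/
def bouquet [Finite ι] (d : ι → ℕ) : FlagComplex (Option (ι × ℕ × Bool)) where
  Rel := bouquetRel d
  symm := by
    rintro (_ | p) (_ | q) h
    exacts [h, h, h, ⟨h.1.symm, h.2.2.1, h.2.1, fun e => (h.2.2.2 e.symm).symm⟩]
  finite_vertices := by
    have : {p : ι × ℕ × Bool | p.2.1 ≤ d p.1}.Finite := by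
      have h : (⋃ i : ι, (fun q : ℕ × Bool => (i, q)) '' (Set.Iic (d i) ×ˢ Set.univ)).Finite :=
        Set.finite_iUnion fun i => ((Set.finite_Iic _).prod Set.finite_univ).image _
      exact h.subset fun ⟨i, q⟩ hq => Set.mem_iUnion.2 ⟨i, q, ⟨hq, trivial⟩, rfl⟩
    refine ((this.image some).insert none).subset ?_
    rintro (_ | p) h
    exacts [Or.inl rfl, Or.inr ⟨p, h.2.1.1, rfl⟩]

lemma bouquet_rel_some_self [Finite ι] {p : ι × ℕ × Bool} :
    (bouquet d).Rel (some p) (some p) ↔ IsBouquetVertex d p :=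
  ⟨fun h => h.2.1, fun h => ⟨rfl, h, h, fun _ => rfl⟩⟩

lemma IsBouquetVertex.succ {p : ι × ℕ × Bool} (h : IsBouquetVertex d p) :
    IsBouquetVertex (fun i => d i + 1) p :=
  ⟨Nat.le_succ_of_le h.1, h.2⟩

/-- The vertices of `bouquet fun i => d i + 1` which are vertices of `bouquet d`. -/
def IsLow (d : ι → ℕ) : Option (ι × ℕ × Bool) → Prop :=
  fun u => u.elim True fun p => p.2.1 ≤ d p.1

/-- Joins each pole to the low vertices and to the top vertices on its own side. -/
def bouquetPoleRel (d : ι → ℕ) (u : Option (ι × ℕ × Bool)) (s : Bool) : Prop :=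
  u.elim True fun p => p.2.1 ≤ d p.1 ∨ p.2.2 = s

/-- Joins each pole to the base vertex and to the top vertices on its own side. -/
def bouquetPoleTopRel (d : ι → ℕ) (u : Option (ι × ℕ × Bool)) (s : Bool) : Prop :=
  u.elim True fun p => p.2.1 = d p.1 + 1 ∧ p.2.2 = s

lemma glue_bouquetPoleRel_eqv_susp [Finite ι] (d : ι → ℕ) :
    glue (bouquet fun i => d i + 1) poles (bouquetPoleRel d) ≈ₛ susp (bouquet d) := by
  have remove_top : glue poles (bouquet fun i => d i + 1) (fun s u => bouquetPoleRel d u s) ≈ₛ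
      glue poles ((bouquet fun i => d i + 1).restrict (IsLow d))
        (fun s u => bouquetPoleRel d u s) := by
    refine glue_restrict (IsLow d) ?_
    rintro (_ | ⟨i, k, s⟩) - hlow
    · exact absurd trivial hlow
    · have hk : ¬ k ≤ d i := hlow
      refine ⟨s, rfl, fun u _ hu => (hu.resolve_left hk).symm, ?_⟩
      rintro (_ | ⟨j, l, t⟩) - hut
      · trivial
      · obtain ⟨rfl, ⟨hl, -⟩, ⟨hk', -⟩, hside⟩ := hut
        by_cases hlj : l ≤ d j
        · exact Or.inl hlj
        · exact Or.inr (hside (by dsimp only at *; omega))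
  have low_eqv : (bouquet fun i => d i + 1).restrict (IsLow d) ≈ₛ bouquet d := by
    refine .of_rel_iff ?_ ?_
    · rintro (_ | p)
      exacts [iff_of_true ⟨trivial, trivial, trivial⟩ trivial,
        ⟨fun h => bouquet_rel_some_self.2 ⟨h.2.1, h.1.2.1.2⟩,
          fun h => ⟨bouquet_rel_some_self.2 h.2.1.succ, h.2.1.1, h.2.1.1⟩⟩]
    · rintro (_ | p) (_ | q) ⟨-, hp, -⟩ ⟨-, hq, -⟩
      exacts [iff_of_true ⟨trivial, trivial, trivial⟩ trivial,
        ⟨fun h => ⟨h.1.1, hq, h.1.2.2⟩, fun h => ⟨⟨h.1, h.2.succ⟩, trivial, hq⟩⟩,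
        ⟨fun h => ⟨h.1.1, hp, h.1.2.2⟩, fun h => ⟨⟨h.1, h.2.succ⟩, hp, trivial⟩⟩,
        ⟨fun h => ⟨h.1.1, ⟨hp, h.1.2.1.2⟩, ⟨hq, h.1.2.2.1.2⟩, h.1.2.2.2⟩,
          fun h => ⟨⟨h.1, h.2.1.succ, h.2.2.1.succ, h.2.2.2⟩, hp, hq⟩⟩]
  have join : glue poles ((bouquet fun i => d i + 1).restrict (IsLow d))
      (fun s u => bouquetPoleRel d u s) ≈ₛ
      glue poles ((bouquet fun i => d i + 1).restrict (IsLow d)) fun _ _ => True := by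
    refine glue_congr ?_
    rintro s (_ | p) - ⟨-, hp, -⟩
    exacts [Iff.rfl, iff_of_true (Or.inl hp) trivial]
  exact glue_comm.trans (remove_top.trans (join.trans (glue_comm.trans low_eqv.susp)))

lemma glue_bouquetPoleRel_eqv_top [Finite ι] (d : ι → ℕ) :
    glue (bouquet fun i => d i + 1) poles (bouquetPoleRel d) ≈ₛ
      glue (bouquet fun i => d i + 1) poles (bouquetPoleTopRel d) := by
  refine glue_remove ?_ ?_
  · rintro (_ | p) s h
    exacts [trivial, Or.inr h.2]
  · rintro (_ | ⟨i, k, t⟩) s h h'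
    · exact absurd trivial h'
    have top : IsBouquetVertex (fun i => d i + 1) (i, d i + 1, s) :=
      ⟨le_rfl, fun h => absurd h (Nat.succ_ne_zero _)⟩
    refine Or.inl ⟨some (i, d i + 1, s), bouquet_rel_some_self.2 top, ?_,
      fun s' _ _ hs => ⟨rfl, hs.symm⟩⟩
    rintro (_ | ⟨j, l, t'⟩) - hvu hvs
    · exact ⟨Nat.succ_ne_zero _, top⟩
    · obtain ⟨rfl, hj, -, -⟩ := hvu
      exact ⟨rfl, hj, top, fun hl => hvs.resolve_left (by dsimp only at *; omega)⟩

lemma glue_bouquetPoleTopRel_eqv [Finite ι] (d : ι → ℕ) :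
    glue (bouquet fun i => d i + 1) poles (bouquetPoleTopRel d) ≈ₛ bouquet fun i => d i + 1 := by
  refine (glue_restrict (fun _ => False) ?_).trans ?_
  · refine fun t _ _ => ⟨none, trivial, ?_, fun _ _ _ => trivial⟩
    rintro (_ | p) hp hpt
    exacts [trivial, ⟨ne_of_eq_of_ne hpt.1 (Nat.succ_ne_zero _), hp.2.1⟩]
  · refine .of_iso ⟨Sum.elim id fun _ => none, Sum.inl, ?_, fun _ hu => hu, ?_, fun _ _ => rfl⟩
    · rintro (u | s) (v | t) hu hv
      exacts [Iff.rfl, hv.2.1.elim, hu.2.1.elim, hu.2.1.elim]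
    · rintro (u | s) hu
      exacts [rfl, hu.2.1.elim]

theorem susp_bouquet [Finite ι] (d : ι → ℕ) : susp (bouquet d) ≈ₛ bouquet fun i => d i + 1 :=
  (glue_bouquetPoleRel_eqv_susp d).symm.trans
    ((glue_bouquetPoleRel_eqv_top d).trans (glue_bouquetPoleTopRel_eqv d))

/-- The isomorphism identifying the two base vertices by omitting the second one. -/
def bouquetSumIso [Finite ι] [Finite κ] (d : ι → ℕ) (e : κ → ℕ) :
    Iso (glue (bouquet d) ((bouquet e).restrict (· ≠ none))
      fun u t => u = none ∧ (bouquet e).Rel none t) (bouquet (Sum.elim d e)) where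
  toFun := Sum.elim (Option.map (Prod.map Sum.inl id)) (Option.map (Prod.map Sum.inr id))
  invFun u := u.elim (.inl none) fun p =>
    p.1.elim (fun i => .inl (some (i, p.2))) fun j => .inr (some (j, p.2))
  rel_iff := by
    rintro ((_ | ⟨i, p⟩) | (_ | ⟨i, p⟩)) ((_ | ⟨j, q⟩) | (_ | ⟨j, q⟩)) hu hv <;>
      simp [glue, glueRel, bouquet, bouquetRel, restrict, IsBouquetVertex] at hu hv ⊢
  rel_invFun := by
    rintro (_ | ⟨i | i, p⟩) hu
    exacts [trivial, bouquet_rel_some_self.2 hu.2.1,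
      ⟨bouquet_rel_some_self.2 hu.2.1, Option.some_ne_none _, Option.some_ne_none _⟩]
  left_inv := by
    rintro ((_ | ⟨i, p⟩) | (_ | ⟨i, p⟩)) hu
    exacts [rfl, rfl, (hu.2.1 rfl).elim, rfl]
  right_inv := by
    rintro (_ | ⟨i | i, p⟩) - <;> rfl

theorem edgeWedge_bouquet [Finite ι] [Finite κ] (d : ι → ℕ) (e : κ → ℕ) :
    edgeWedge (bouquet d) none (bouquet e) none ≈ₛ bouquet (Sum.elim d e) := by
  calc edgeWedge (bouquet d) none (bouquet e) none
      ≈ₛ glue (bouquet d) (bouquet e) fun u t => u = none ∧ (bouquet e).Rel none t := by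
        refine .symm (glue_remove ?_ ?_)
        · rintro u t ⟨rfl, rfl⟩
          exact ⟨rfl, trivial⟩
        · rintro u t ⟨rfl, -⟩ -
          exact Or.inr ⟨none, trivial, fun v _ _ hvt => ⟨hvt.1, rfl⟩,
            fun s _ hc _ => (bouquet e).symm hc.2⟩
    _ ≈ₛ glue (bouquet d) ((bouquet e).restrict (· ≠ none))
        fun u t => u = none ∧ (bouquet e).Rel none t := by
        refine glue_restrict _ fun t _ ht => ?_
        obtain rfl : t = none := not_not.1 ht
        refine ⟨none, trivial, ?_, fun s _ hs => ⟨rfl, (bouquet e).symm hs⟩⟩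
        rintro u - ⟨rfl, -⟩
        trivial
    _ ≈ₛ bouquet (Sum.elim d e) := .of_iso (bouquetSumIso d e)

lemma edgeWedge_bouquet_slide [Finite ι] (hd : ∀ i, d i ≠ 0) {w : Option (ι × ℕ × Bool)}
    (hw : (bouquet d).Rel w w) {W : Type} (G : FlagComplex W) (z : W) :
    edgeWedge (bouquet d) w G z ≈ₛ edgeWedge (bouquet d) none G z := by
  have slide_of_ne_zero : ∀ p, (bouquet d).Rel (some p) (some p) → p.2.1 ≠ 0 →
      edgeWedge (bouquet d) (some p) G z ≈ₛ edgeWedge (bouquet d) none G z :=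
    fun p hp hk => edgeWedge_slide G z hp trivial ⟨hk, bouquet_rel_some_self.1 hp⟩
  rcases w with _ | ⟨i, k, s⟩
  · exact .refl _
  rcases eq_or_ne k 0 with rfl | hk
  · have above : IsBouquetVertex d (i, 1, true) :=
      ⟨Nat.one_le_iff_ne_zero.2 (hd i), fun h => absurd h one_ne_zero⟩
    exact (edgeWedge_slide G z hw (bouquet_rel_some_self.2 above)
      ⟨rfl, bouquet_rel_some_self.1 hw, above, fun h => absurd h zero_ne_one⟩).trans
      (slide_of_ne_zero _ (bouquet_rel_some_self.2 above) one_ne_zero)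
  · exact slide_of_ne_zero _ hw hk

end Bouquet

/-- The sequence `c`, moved up by one and starting with zero. -/
def shift (c : ℕ → ℕ) : ℕ → ℕ
  | 0 => 0
  | k + 1 => c k

section SphereWedge

variable {V W : Type} {F : FlagComplex V} {G : FlagComplex W} {c c' : ℕ → ℕ}

/-- The complex is equivalent to a wedge of spheres, with `c k` spheres of dimension `k`. -/
def IsSphereWedge (F : FlagComplex V) (c : ℕ → ℕ) : Prop :=
  ∃ (ι : Type) (_ : Finite ι) (d : ι → ℕ), (∀ k, Nat.card {i // d i = k} = c k) ∧ F ≈ₛ bouquet d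

namespace IsSphereWedge

theorem congr (h : IsSphereWedge G c) (e : F ≈ₛ G) : IsSphereWedge F c := by
  obtain ⟨ι, hι, d, hd, e'⟩ := h
  exact ⟨ι, hι, d, hd, e.trans e'⟩

theorem susp (h : IsSphereWedge F c) : IsSphereWedge F.susp (shift c) := by
  obtain ⟨ι, hι, d, hd, e⟩ := h
  refine ⟨ι, hι, fun i => d i + 1, ?_, e.susp.trans (susp_bouquet d)⟩
  rintro (_ | k)
  · simp [shift]
  · simpa [shift] using hd k

theorem edgeWedge (hF : IsSphereWedge F c) (hG : IsSphereWedge G c') (h0 : c 0 = 0)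
    (h0' : c' 0 = 0) {w : V} {z : W} (hw : F.Rel w w) (hz : G.Rel z z) :
    IsSphereWedge (edgeWedge F w G z) (c + c') := by
  obtain ⟨ι, hι, d, hd, eF⟩ := hF
  obtain ⟨κ, hκ, e, he, eG⟩ := hG
  have hd0 : ∀ i, d i ≠ 0 := fun i hi =>
    (Finite.card_eq_zero_iff.1 ((hd 0).trans h0)).elim ⟨i, hi⟩
  have he0 : ∀ i, e i ≠ 0 := fun i hi =>
    (Finite.card_eq_zero_iff.1 ((he 0).trans h0')).elim ⟨i, hi⟩
  obtain ⟨w', hw', slide_F⟩ := eF.wedgeCompat w hw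
  obtain ⟨z', hz', slide_G⟩ := eG.wedgeCompat z hz
  refine ⟨ι ⊕ κ, inferInstance, Sum.elim d e, fun k => ?_, ?_⟩
  · rw [Pi.add_apply, ← hd, ← he, ← Nat.card_sum]
    exact Nat.card_congr (Equiv.subtypeSum (p := fun i => Sum.elim d e i = k))
  · calc FlagComplex.edgeWedge F w G z
        ≈ₛ FlagComplex.edgeWedge (bouquet d) w' G z := slide_F G z
      _ ≈ₛ FlagComplex.edgeWedge (bouquet d) none G z := edgeWedge_bouquet_slide hd0 hw' G z
      _ ≈ₛ FlagComplex.edgeWedge G z (bouquet d) none := edgeWedge_comm _ _ _ _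
      _ ≈ₛ FlagComplex.edgeWedge (bouquet e) z' (bouquet d) none := slide_G _ _
      _ ≈ₛ FlagComplex.edgeWedge (bouquet e) none (bouquet d) none :=
        edgeWedge_bouquet_slide he0 hz' _ _
      _ ≈ₛ FlagComplex.edgeWedge (bouquet d) none (bouquet e) none := edgeWedge_comm _ _ _ _
      _ ≈ₛ bouquet (Sum.elim d e) := edgeWedge_bouquet d e

theorem of_apex (x : V) (hx : F.Rel x x) (h : ∀ u, F.Rel u u → F.Rel u x) : IsSphereWedge F 0 := by
  refine ⟨Empty, inferInstance, Empty.elim, by simp, ?_⟩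
  calc F ≈ₛ F.restrict (· = x) := .restrict _ fun a _ _ => ⟨x, hx, rfl, fun u hu _ => h u hu⟩
    _ ≈ₛ bouquet Empty.elim := by
      refine .of_iso ⟨fun _ => none, fun _ => x, ?_, fun _ _ => ⟨hx, rfl, rfl⟩,
        fun u hu => hu.2.1.symm, ?_⟩
      · rintro u v ⟨-, rfl, -⟩ ⟨-, rfl, -⟩
        exact iff_of_true trivial ⟨hx, rfl, rfl⟩
      · rintro (_ | ⟨i, _⟩) -
        exacts [rfl, i.elim]

theorem susp_of_empty (h : ∀ u, ¬ F.Rel u u) : IsSphereWedge F.susp (Pi.single 0 1) := by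
  have bottom : IsBouquetVertex (fun _ : Unit => 0) ((), 0, false) := ⟨le_rfl, fun _ => rfl⟩
  have eq_bottom : ∀ p, IsBouquetVertex (fun _ : Unit => 0) p → p = ((), 0, false) := by
    rintro ⟨i, k, s⟩ ⟨hk, hs⟩
    obtain rfl : k = 0 := Nat.le_zero.1 hk
    rw [show s = false from hs rfl]
  refine ⟨Unit, inferInstance, fun _ => 0, fun k => ?_, .symm (.of_iso ⟨fun u => .inr u.isSome,
    Sum.elim (fun _ => none) fun s => if s then some ((), 0, false) else none, ?_, ?_, ?_, ?_⟩)⟩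
  · rcases k with _ | k <;> simp
  · rintro (_ | p) (_ | q) hp hq
    · exact iff_of_true rfl trivial
    · obtain rfl := eq_bottom q hq.2.1
      exact iff_of_false nofun fun h => h.1 rfl
    · obtain rfl := eq_bottom p hp.2.1
      exact iff_of_false nofun fun h => h.1 rfl
    · obtain rfl := eq_bottom p hp.2.1
      obtain rfl := eq_bottom q hq.2.1
      exact iff_of_true rfl hp
  · rintro (u | (_ | _)) hu
    exacts [(h u hu).elim, trivial, bouquet_rel_some_self.2 bottom]
  · rintro (_ | p) hp
    · rfl
    · obtain rfl := eq_bottom p hp.2.1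
      rfl
  · rintro (u | (_ | _)) hu
    exacts [(h u hu).elim, rfl, rfl]

end IsSphereWedge

/-- The complex is equivalent to a wedge of spheres, with `c k` spheres of dimension `k - 1`, where
the complex without vertices is the sphere of dimension `-1`. -/
def IsShiftedSphereWedge (F : FlagComplex V) (c : ℕ → ℕ) : Prop :=
  (c = Pi.single 0 1 ∧ ∀ u, ¬ F.Rel u u) ∨ (c 0 = 0 ∧ IsSphereWedge F fun k => c (k + 1))

namespace IsShiftedSphereWedge

theorem of_isEmpty (h : ∀ u, ¬ F.Rel u u) : IsShiftedSphereWedge F (Pi.single 0 1) :=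
  Or.inl ⟨rfl, h⟩

theorem of_apex (x : V) (hx : F.Rel x x) (h : ∀ u, F.Rel u u → F.Rel u x) :
    IsShiftedSphereWedge F 0 :=
  Or.inr ⟨rfl, .of_apex x hx h⟩

theorem susp (h : IsShiftedSphereWedge F c) : IsShiftedSphereWedge F.susp (shift c) := by
  refine Or.inr ⟨rfl, ?_⟩
  change IsSphereWedge _ c
  rcases h with ⟨rfl, h⟩ | ⟨h0, h⟩
  · exact .susp_of_empty h
  · convert h.susp using 1
    funext k
    rcases k with _ | k
    exacts [h0, rfl]

theorem isSphereWedge (h : IsShiftedSphereWedge F c) (h0 : c 0 = 0) :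
    IsSphereWedge F fun k => c (k + 1) := by
  rcases h with ⟨rfl, -⟩ | h
  · simp at h0
  · exact h.2

theorem cone {B : V → Prop} (hF : IsShiftedSphereWedge F c)
    (hB : IsShiftedSphereWedge (F.restrict B) c') (h0 : c 0 = 0) (h1 : c 1 = 0) (h0' : c' 0 = 0)
    (hnull : NullIn F B) (hBF : ∀ u, B u → F.Rel u u) :
    IsShiftedSphereWedge (cone F B) (c + shift c') := by
  obtain ⟨w, z, hw, hz, e⟩ := hnull.cone_eqv_edgeWedge hBF
  refine Or.inr ⟨by simp [h0, shift], .congr ?_ e⟩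
  convert (hF.isSphereWedge h0).edgeWedge (hB.isSphereWedge h0').susp h1 rfl hw hz using 1
  funext k
  rcases k with _ | k
  · simp [shift, h0']
  · rfl

end IsShiftedSphereWedge

end SphereWedge

theorem SimpleEquiv.exists_vertex_iff {V W : Type} {F : FlagComplex V} {G : FlagComplex W}
    (h : F ≈ₛ G) : (∃ u, F.Rel u u) ↔ ∃ u, G.Rel u u := by
  induction h with
  | refl => exact Iff.rfl
  | symm _ ih => exact ih.symm
  | trans _ _ ih₁ ih₂ => exact ih₁.trans ih₂
  | collapse F a b x hx hxa _ _ => exact iff_of_true ⟨x, hx⟩ ⟨x, hx, by tauto⟩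
  | of_iso e => exact ⟨fun ⟨u, hu⟩ => ⟨_, e.rel_toFun hu⟩, fun ⟨u, hu⟩ => ⟨_, e.symm.rel_toFun hu⟩⟩

theorem IsShiftedSphereWedge.congr {V W : Type} {F : FlagComplex V} {G : FlagComplex W} {c : ℕ → ℕ}
    (h : IsShiftedSphereWedge G c) (e : F ≈ₛ G) : IsShiftedSphereWedge F c :=
  h.imp (And.imp_right fun h u hu => not_exists.2 h (e.exists_vertex_iff.1 ⟨u, hu⟩))
    (And.imp_right fun h => h.congr e)

section IndepComplex

variable {V : Type} {G : SimpleGraph V} {S T : Set V} {p q : V}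

/-- The independence complex of the full subgraph of `G` on `S`. -/
def indepComplex (G : SimpleGraph V) (S : Set V) [Finite S] : FlagComplex V where
  Rel a b := a ∈ S ∧ b ∈ S ∧ ¬ G.Adj a b
  symm h := ⟨h.2.1, h.1, fun h' => h.2.2 h'.symm⟩
  finite_vertices := S.toFinite.subset fun _ h => h.1

lemma indepComplex_rel_self [Finite S] {a : V} : (indepComplex G S).Rel a a ↔ a ∈ S :=
  ⟨fun h => h.1, fun h => ⟨h, h, G.irrefl⟩⟩

lemma indepComplex_restrict [Finite S] [Finite T] (h : T ⊆ S) :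
    (indepComplex G S).restrict (· ∈ T) ≈ₛ indepComplex G T :=
  .of_rel_iff (fun _ => ⟨fun h => ⟨h.2.1, h.2.2, h.1.2.2⟩, fun hT => ⟨⟨h hT.1, h hT.2.1, hT.2.2⟩,
    hT.1, hT.2.1⟩⟩) fun _ _ _ _ => ⟨fun h => ⟨h.2.1, h.2.2, h.1.2.2⟩,
    fun hT => ⟨⟨h hT.1, h hT.2.1, hT.2.2⟩, hT.1, hT.2.1⟩⟩

theorem indepComplex_fold [Finite S] [Finite T] (hTS : T ⊆ S)
    (h : ∀ a ∈ S, a ∉ T → ∃ x ∈ T, ∀ u ∈ S, G.Adj u x → G.Adj u a) :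
    indepComplex G S ≈ₛ indepComplex G T := by
  refine .trans (.restrict (· ∈ T) fun a ha haT => ?_) (indepComplex_restrict hTS)
  obtain ⟨x, hx, hxa⟩ := h a ha.1 haT
  exact ⟨x, indepComplex_rel_self.2 (hTS hx), hx, fun u hu hua =>
    ⟨hu.1, hTS hx, fun hux => hua.2.2 (hxa u hu.1 hux)⟩⟩

open Classical in
theorem indepComplex_insert [Finite S] (hp : p ∉ S) :
    indepComplex G (insert p S) ≈ₛ cone (indepComplex G S) fun a => a ∈ S ∧ ¬ G.Adj a p := by
  refine .symm (.of_iso ⟨Sum.elim id fun _ => p, fun a => if a = p then .inr () else .inl a,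
    ?_, ?_, ?_, ?_⟩)
  · rintro (a | _) (b | _) ha hb
    · exact ⟨fun h => ⟨ha.1, hb.1, h.2.2⟩, fun h => ⟨Or.inr h.1, Or.inr h.2.1, h.2.2⟩⟩
    · exact ⟨fun h => ⟨ha.1, h.2.2⟩, fun h => ⟨Or.inr h.1, Or.inl rfl, h.2⟩⟩
    · exact ⟨fun h => ⟨hb.1, fun h' => h.2.2 h'.symm⟩,
        fun h => ⟨Or.inl rfl, Or.inr h.1, fun h' => h.2 h'.symm⟩⟩
    · exact iff_of_true (indepComplex_rel_self.2 (Or.inl rfl)) trivial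
  · intro a ha
    rcases eq_or_ne a p with rfl | hap
    · simp only [if_true]
      exact trivial
    · simp only [if_neg hap]
      exact indepComplex_rel_self.2 (ha.1.resolve_left hap)
  · rintro (a | _) ha
    · exact if_neg fun hap : a = p => hp (hap ▸ ha.1)
    · exact if_pos rfl
  · intro a _
    by_cases hap : a = p <;> simp [hap]

open Classical in
theorem indepComplex_insert_edge [Finite S] (hpq : G.Adj p q) (hp : ∀ a ∈ S, ¬ G.Adj a p)
    (hq : ∀ a ∈ S, ¬ G.Adj a q) :
    indepComplex G (insert p (insert q S)) ≈ₛ susp (indepComplex G S) := by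
  have hpS : p ∉ S := fun h => hq p h hpq
  have hqS : q ∉ S := fun h => hp q h hpq.symm
  have hqp : q ≠ p := hpq.ne'
  refine .symm (.of_iso ⟨Sum.elim id fun s => cond s p q,
    fun a => if a = p then .inr true else if a = q then .inr false else .inl a, ?_, ?_, ?_, ?_⟩)
  · rintro (a | (_ | _)) (b | (_ | _)) ha hb <;>
      simp only [susp, glue, glueRel, indepComplex, poles] at ha hb ⊢ <;>
      simp_all [G.adj_comm]
  · intro a ha
    rcases eq_or_ne a p with rfl | hap
    · simp only [if_true]
      exact rfl
    rcases eq_or_ne a q with rfl | haq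
    · simp only [if_neg hap, if_true]
      exact rfl
    · simp only [if_neg hap, if_neg haq]
      exact indepComplex_rel_self.2 ((ha.1.resolve_left hap).resolve_left haq)
  · rintro (a | (_ | _)) ha
    · have hap : a ≠ p := fun h => hpS (h ▸ ha.1)
      have haq : a ≠ q := fun h => hqS (h ▸ ha.1)
      simp [hap, haq]
    · simp [hqp]
    · simp
  · intro a _
    by_cases hap : a = p <;> by_cases haq : a = q <;> simp [hap, haq, hqp]

end IndepComplex

/-- Adjacency in the grid, for points whose third coordinate is at most one. -/
@[grind =] def gridAdj (i j l i' j' l' : ℕ) : Prop :=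
  (i = i' ∧ j = j' ∧ l ≠ l') ∨ (i = i' ∧ l = l' ∧ (j = j' + 1 ∨ j' = j + 1)) ∨
    (j = j' ∧ l = l' ∧ (i = i' + 1 ∨ i' = i + 1))

/-- The graph on triples of natural numbers in which `Γ_n` is the full subgraph on the points
`(i, j, l)` with `i < n`, `j < 3` and `l < 2`. -/
def gridGraph : SimpleGraph (ℕ × ℕ × ℕ) where
  Adj a b := gridAdj a.1 a.2.1 a.2.2 b.1 b.2.1 b.2.2
  symm := ⟨fun a b => by unfold gridAdj; omega⟩
  loopless := ⟨fun a => by unfold gridAdj; omega⟩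

/-- The points of the `n × 3 × 2` grid which lie in `S`. -/
def gridSet (n : ℕ) (S : ℕ → ℕ → ℕ → Prop) : Set (ℕ × ℕ × ℕ) :=
  {a | a.1 < n ∧ a.2.1 < 3 ∧ a.2.2 < 2 ∧ S a.1 a.2.1 a.2.2}

instance (n : ℕ) (S : ℕ → ℕ → ℕ → Prop) : Finite (gridSet n S) :=
  ((Set.finite_Iio n).prod ((Set.finite_Iio 3).prod (Set.finite_Iio 2))).subset
    fun _ ha => ⟨ha.1, ha.2.1, ha.2.2.1⟩

/-- The independence complex of the full subgraph of `Γ_n` on `S`. -/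
abbrev grid (n : ℕ) (S : ℕ → ℕ → ℕ → Prop) : FlagComplex (ℕ × ℕ × ℕ) :=
  indepComplex gridGraph (gridSet n S)

/-- The independence complex on `S` is a wedge of spheres, with `c k` spheres of dimension
`k - 1`. -/
def IsGridWedge (n : ℕ) (S : ℕ → ℕ → ℕ → Prop) (c : ℕ → ℕ) : Prop :=
  IsShiftedSphereWedge (grid n S) c

/-- The inclusion of the independence complex on `B` in that on `A` is null-homotopic, in the sense
of `NullIn`. -/
def GridNullIn (n : ℕ) (A B : ℕ → ℕ → ℕ → Prop) : Prop := NullIn (grid n A) (· ∈ gridSet n B)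

lemma gridSet_subset {n : ℕ} {S S' : ℕ → ℕ → ℕ → Prop}
    (h : ∀ i j l, i < n → j < 3 → l < 2 → S' i j l → S i j l) : gridSet n S' ⊆ gridSet n S :=
  fun _ ha => ⟨ha.1, ha.2.1, ha.2.2.1, h _ _ _ ha.1 ha.2.1 ha.2.2.1 ha.2.2.2⟩

/-- If `p.1` lies in `S`, then `p.2` lies in `A`, `S` and `S'`, and all its neighbours in `S` are
also neighbours of `p.1`. -/
@[grind =] def DominatedPair (n : ℕ) (A S S' : ℕ → ℕ → ℕ → Prop)
    (p : (ℕ × ℕ × ℕ) × ℕ × ℕ × ℕ) : Prop :=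
  p.1.1 < n → p.1.2.1 < 3 → p.1.2.2 < 2 → S p.1.1 p.1.2.1 p.1.2.2 →
    (p.2.1 < n ∧ p.2.2.1 < 3 ∧ p.2.2.2 < 2 ∧ A p.2.1 p.2.2.1 p.2.2.2 ∧ S p.2.1 p.2.2.1 p.2.2.2 ∧
      S' p.2.1 p.2.2.1 p.2.2.2) ∧ ∀ i j l, i < n → j < 3 → l < 2 → S i j l →
        gridAdj i j l p.2.1 p.2.2.1 p.2.2.2 → gridAdj i j l p.1.1 p.1.2.1 p.1.2.2

/-- Each point of `S` outside `S'` is dominated in `S` by a point of `A`, `S` and `S'`. The list `L`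
of pairs of a dominated and a dominating point makes the witnesses explicit. -/
structure Dominated (n : ℕ) (A S S' : ℕ → ℕ → ℕ → Prop) (L : List ((ℕ × ℕ × ℕ) × ℕ × ℕ × ℕ)) :
    Prop where
  cover : ∀ i j l, i < n → j < 3 → l < 2 → S i j l → ¬ S' i j l → (i, j, l) ∈ L.map Prod.fst
  dominated : L.Forall (DominatedPair n A S S')

section Grid

variable {n : ℕ} {A B B' S S' : ℕ → ℕ → ℕ → Prop} {L : List ((ℕ × ℕ × ℕ) × ℕ × ℕ × ℕ)}
  {c c' : ℕ → ℕ}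

theorem Dominated.exists_dominating (h : Dominated n A S S' L) {a : ℕ × ℕ × ℕ}
    (ha : a ∈ gridSet n S) (ha' : a ∉ gridSet n S') :
    ∃ x ∈ gridSet n A, x ∈ gridSet n S ∧ x ∈ gridSet n S' ∧
      ∀ u ∈ gridSet n S, gridGraph.Adj u x → gridGraph.Adj u a := by
  obtain ⟨p, hp, rfl : p.1 = a⟩ := List.mem_map.1 (h.cover _ _ _ ha.1 ha.2.1 ha.2.2.1 ha.2.2.2
    fun hS => ha' ⟨ha.1, ha.2.1, ha.2.2.1, hS⟩)
  obtain ⟨⟨h₁, h₂, h₃, hA, hS, hS'⟩, hd⟩ :=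
    List.forall_iff_forall_mem.1 h.dominated p hp ha.1 ha.2.1 ha.2.2.1 ha.2.2.2
  exact ⟨p.2, ⟨h₁, h₂, h₃, hA⟩, ⟨h₁, h₂, h₃, hS⟩, ⟨h₁, h₂, h₃, hS'⟩,
    fun u hu => hd _ _ _ hu.1 hu.2.1 hu.2.2.1 hu.2.2.2⟩

namespace GridNullIn

theorem of_apex (w₁ w₂ w₃ : ℕ) (hw : w₁ < n ∧ w₂ < 3 ∧ w₃ < 2 ∧ A w₁ w₂ w₃)
    (h : ∀ i j l, i < n → j < 3 → l < 2 → B i j l → ¬ gridAdj i j l w₁ w₂ w₃) :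
    GridNullIn n A B :=
  NullIn.of_apex (w₁, w₂, w₃) (indepComplex_rel_self.2 hw) fun _ hu hB =>
    ⟨hu.1, hw, h _ _ _ hB.1 hB.2.1 hB.2.2.1 hB.2.2.2⟩

theorem of_dominated (h : GridNullIn n A B') (L : List ((ℕ × ℕ × ℕ) × ℕ × ℕ × ℕ))
    (hL : Dominated n A B B' L) : GridNullIn n A B :=
  NullIn.of_dominated h fun _ _ hB hB' =>
    let ⟨x, hxA, hxB, hxB', hx⟩ := hL.exists_dominating hB hB'
    ⟨x, indepComplex_rel_self.2 hxA, hxB, hxB', fun t ht htB hty =>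
      ⟨ht.1, hxA, fun htx => hty.2.2 (hx t htB htx)⟩⟩

end GridNullIn

namespace IsGridWedge

theorem of_empty (h : ∀ i j l, i < n → j < 3 → l < 2 → ¬ S i j l) :
    IsGridWedge n S (Pi.single 0 1) :=
  .of_isEmpty fun _ hu => h _ _ _ hu.1.1 hu.1.2.1 hu.1.2.2.1 hu.1.2.2.2

theorem of_isolated (x₁ x₂ x₃ : ℕ) (hx : x₁ < n ∧ x₂ < 3 ∧ x₃ < 2 ∧ S x₁ x₂ x₃)
    (h : ∀ i j l, i < n → j < 3 → l < 2 → S i j l → ¬ gridAdj i j l x₁ x₂ x₃) :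
    IsGridWedge n S 0 :=
  .of_apex (x₁, x₂, x₃) (indepComplex_rel_self.2 hx) fun _ hu =>
    ⟨hu.1, hx, h _ _ _ hu.1.1 hu.1.2.1 hu.1.2.2.1 hu.1.2.2.2⟩

theorem fold (h : IsGridWedge n S' c) (hS : ∀ i j l, i < n → j < 3 → l < 2 → S' i j l → S i j l)
    (L : List ((ℕ × ℕ × ℕ) × ℕ × ℕ × ℕ)) (hL : Dominated n S S S' L) : IsGridWedge n S c :=
  IsShiftedSphereWedge.congr h <| indepComplex_fold (gridSet_subset hS) fun _ ha ha' =>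
    let ⟨x, _, _, hx, hd⟩ := hL.exists_dominating ha ha'
    ⟨x, hx, hd⟩

theorem addEdge (h : IsGridWedge n S c) (p₁ p₂ p₃ q₁ q₂ q₃ : ℕ) (hp : p₁ < n ∧ p₂ < 3 ∧ p₃ < 2)
    (hq : q₁ < n ∧ q₂ < 3 ∧ q₃ < 2) (hpq : gridAdj p₁ p₂ p₃ q₁ q₂ q₃)
    (hadj : ∀ i j l, i < n → j < 3 → l < 2 → S i j l →
      ¬ gridAdj i j l p₁ p₂ p₃ ∧ ¬ gridAdj i j l q₁ q₂ q₃) :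
    IsGridWedge n (fun i j l => S i j l ∨ (i = p₁ ∧ j = p₂ ∧ l = p₃) ∨ (i = q₁ ∧ j = q₂ ∧ l = q₃))
      (shift c) := by
  have hset : gridSet n (fun i j l => S i j l ∨ (i = p₁ ∧ j = p₂ ∧ l = p₃) ∨
      (i = q₁ ∧ j = q₂ ∧ l = q₃)) = insert (p₁, p₂, p₃) (insert (q₁, q₂, q₃) (gridSet n S)) := by
    ext ⟨i, j, l⟩
    simp only [gridSet, Set.mem_insert_iff, Set.mem_ofPred_eq, Prod.mk.injEq]
    grind
  have hna (a) (ha : a ∈ gridSet n S) := hadj _ _ _ ha.1 ha.2.1 ha.2.2.1 ha.2.2.2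
  refine IsShiftedSphereWedge.congr (IsShiftedSphereWedge.susp h) ?_
  simp only [grid, hset]
  exact indepComplex_insert_edge hpq (fun a ha => (hna a ha).1) fun a ha => (hna a ha).2

theorem split (hA : IsGridWedge n A c) (hB : IsGridWedge n B c') (v₁ v₂ v₃ : ℕ)
    (hv : v₁ < n ∧ v₂ < 3 ∧ v₃ < 2 ∧ S v₁ v₂ v₃)
    (hSA : ∀ i j l, i < n → j < 3 → l < 2 →
      (A i j l ↔ S i j l ∧ ¬ (i = v₁ ∧ j = v₂ ∧ l = v₃)))
    (hSB : ∀ i j l, i < n → j < 3 → l < 2 → (B i j l ↔ A i j l ∧ ¬ gridAdj i j l v₁ v₂ v₃))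
    (h0 : c 0 = 0) (h1 : c 1 = 0) (h0' : c' 0 = 0) (hnull : GridNullIn n A B) :
    IsGridWedge n S (c + shift c') := by
  have hBA : gridSet n B ⊆ gridSet n A :=
    gridSet_subset fun i j l hi hj hl h => ((hSB i j l hi hj hl).1 h).1
  have hset : gridSet n S = insert (v₁, v₂, v₃) (gridSet n A) := by
    ext ⟨i, j, l⟩
    simp only [gridSet, Set.mem_insert_iff, Set.mem_ofPred_eq, Prod.mk.injEq]
    grind
  have hlink : (fun a => a ∈ gridSet n A ∧ ¬ gridGraph.Adj a (v₁, v₂, v₃)) = (· ∈ gridSet n B) := by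
    funext ⟨i, j, l⟩
    simp only [gridSet, gridGraph, Set.mem_ofPred_eq]
    grind
  have hv' : (v₁, v₂, v₃) ∉ gridSet n A := fun h =>
    ((hSA _ _ _ hv.1 hv.2.1 hv.2.2.1).1 h.2.2.2).2 ⟨rfl, rfl, rfl⟩
  refine IsShiftedSphereWedge.congr (IsShiftedSphereWedge.cone hA
    (hB.congr (indepComplex_restrict hBA)) h0 h1 h0' hnull
    fun u hu => indepComplex_rel_self.2 (hBA hu)) ?_
  simp only [grid, hset, ← hlink]
  exact indepComplex_insert hv'

end IsGridWedge

end Grid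

lemma shift_single (N : ℕ) : shift (Pi.single N 1) = Pi.single (N + 1) 1 := by
  funext k
  rcases k with _ | k <;> simp [shift, Pi.single_apply]

lemma shift_zero : shift 0 = 0 := by
  funext k
  rcases k with _ | k <;> rfl

/-- The layers from `k` on, with only the middle column of layer `k`. -/
@[grind =] def midRegion (k i j _l : ℕ) : Prop := k ≤ i ∧ (i = k → j = 1)

/-- The layers from `k` on, without the middle column of layer `k`. -/
@[grind =] def sideRegion (k i j _l : ℕ) : Prop := k ≤ i ∧ (i = k → j ≠ 1)

/-- The layers from `k` on, with an independent triple in layer `k`. -/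
@[grind =] def tripleRegion (k a i j l : ℕ) : Prop := k ≤ i ∧ (i = k → (j = 1 ↔ l ≠ a))

/-- The layers from `k` on, without two points of layer `k` and one of layer `k + 1`. -/
@[grind =] def xRegion (k a i j l : ℕ) : Prop :=
  k ≤ i ∧ (i = k → l ≠ a → j = 1) ∧ (i = k + 1 → l = a → j ≠ 1)

/-- The layers from `k` on, without one point of layer `k` and two of layer `k + 1`. -/
@[grind =] def yRegion (k a i j l : ℕ) : Prop :=
  k ≤ i ∧ (i = k → l = a → j ≠ 1) ∧ (i = k + 1 → l ≠ a → j = 1)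

/-- The layers from `k + 1` on, with an independent triple in layer `k + 1` and a pendant point in
layer `k`, without one point of layer `k + 2`. -/
@[grind =] def zRegion (k a i j l : ℕ) : Prop :=
  (k + 1 ≤ i ∧ (i = k + 1 → (j = 1 ↔ l ≠ a)) ∧ (i = k + 2 → j = 1 → l = a)) ∨
    (i = k ∧ j = 1 ∧ l ≠ a)

/-- The layers from `k` on, with two pendant edges between the layers `k` and `k + 1`. -/
@[grind =] def edgeRegion (k a i j l : ℕ) : Prop :=
  k ≤ i ∧ (i ≤ k + 1 → j ≠ 1 ∧ l = a) ∧ (i = k + 2 → l = a → j = 1)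

section Regions

variable {n : ℕ} {A J : ℕ → ℕ → ℕ → Prop} {k a b : ℕ}

theorem isGridWedge_mid_side (m : ℕ) : ∀ k, k + m = n →
    IsGridWedge n (midRegion k) (Pi.single (3 * m / 2) 1) ∧
      IsGridWedge n (sideRegion k) (Pi.single ((3 * m + 1) / 2) 1) := by
  induction m with
  | zero => exact fun k hk => ⟨.of_empty (by grind), .of_empty (by grind)⟩
  | succ m ih =>
    intro k hk
    obtain ⟨hmid, hside⟩ := ih (k + 1) (by omega)
    constructor
    · have h := hside.addEdge k 1 0 k 1 1 (by omega) (by omega) (by grind) (by grind)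
      rw [shift_single, show (3 * m + 1) / 2 + 1 = 3 * (m + 1) / 2 by omega] at h
      exact h.fold (by grind) [((k + 1, 1, 0), (k, 1, 1)), ((k + 1, 1, 1), (k, 1, 0))]
        ⟨by grind, by and_intros <;> grind [List.Forall]⟩
    · have h := (hmid.addEdge k 0 0 k 0 1 (by omega) (by omega) (by grind) (by grind)).addEdge
        k 2 0 k 2 1 (by omega) (by omega) (by grind) (by grind)
      rw [shift_single, shift_single, show 3 * m / 2 + 1 + 1 = (3 * (m + 1) + 1) / 2 by omega] at h
      exact h.fold (by grind) [((k + 1, 0, 0), (k, 0, 1)), ((k + 1, 0, 1), (k, 0, 0)),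
        ((k + 1, 2, 0), (k, 2, 1)), ((k + 1, 2, 1), (k, 2, 0))]
        ⟨by grind, by and_intros <;> grind [List.Forall]⟩

theorem IsGridWedge.add_triple_edges {c : ℕ → ℕ} (hab : a + b = 1) (hk : k + 2 ≤ n)
    (h : IsGridWedge n (tripleRegion (k + 2) b) c) :
    IsGridWedge n (fun i j l => k ≤ i ∧ (i ≤ k + 1 → (j = 1 ↔ l ≠ a)) ∧
      (i = k + 2 → (j = 1 ↔ l ≠ b))) (shift (shift (shift c))) := by
  have h' := ((h.addEdge k 0 a (k + 1) 0 a (by omega) (by omega) (by grind) (by grind)).addEdge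
    k 1 b (k + 1) 1 b (by omega) (by omega) (by grind) (by grind)).addEdge
    k 2 a (k + 1) 2 a (by omega) (by omega) (by grind) (by grind)
  exact h'.fold (by grind) [] ⟨by grind, trivial⟩

/-- The number of spheres of each dimension plus one, for `tripleRegion` with `m` layers. -/
def tripleCount (m : ℕ) : ℕ → ℕ := if m % 2 = 0 then Pi.single (3 * m / 2) 1 else 0

lemma shift_tripleCount (m : ℕ) : shift (shift (shift (tripleCount m))) = tripleCount (m + 2) := by
  unfold tripleCount
  split_ifs with h1 h2 h2
  · rw [shift_single, shift_single, shift_single,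
      show 3 * m / 2 + 1 + 1 + 1 = 3 * (m + 2) / 2 by omega]
  · omega
  · omega
  · rw [shift_zero, shift_zero, shift_zero]

theorem isGridWedge_tripleRegion : ∀ m k a b, a + b = 1 → k + m = n →
    IsGridWedge n (tripleRegion k a) (tripleCount m)
  | 0, _, _, _, _, _ => .of_empty (by grind)
  | 1, k, a, b, hab, hk => .of_isolated k 0 a (by grind) (by grind)
  | m + 2, k, a, b, hab, hk => by
    have h := (isGridWedge_tripleRegion m (k + 2) b a (by omega) (by omega)).add_triple_edges
      (k := k) hab (by omega)
    rw [shift_tripleCount] at h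
    exact h.fold (by grind) [((k + 1, 0, b), (k, 0, a)), ((k + 2, 0, a), (k, 0, a)),
      ((k + 1, 2, b), (k, 2, a)), ((k + 2, 2, a), (k, 2, a)),
      ((k + 1, 1, a), (k, 1, b)), ((k + 2, 1, b), (k, 1, b))]
      ⟨by grind, by and_intros <;> grind [List.Forall]⟩

theorem gridNullIn_xRegion_one (hab : a + b = 1) (hk : k + 2 = n)
    (hJ : ∀ i j l, J i j l → i + 1 ≤ k ∧ (i + 1 = k → j ≠ 1))
    (hA : ∀ i j l, i < n → j < 3 → l < 2 → (i = k ∧ j = 1) ∨ k + 1 ≤ i → A i j l) :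
    GridNullIn n A fun i j l => J i j l ∨ xRegion (k + 1) a i j l := by
  have h : GridNullIn n A fun i j l => J i j l ∨ (k + 1 ≤ i ∧ (i = k + 1 → (j = 1 ↔ l = b))) ∨
      (i = k ∧ j = 1 ∧ l = b) := .of_apex (k + 1) 0 a (by grind) (by grind)
  have h' : GridNullIn n A fun i j l => J i j l ∨ xRegion (k + 1) a i j l ∨
      (i = k ∧ j = 1 ∧ l = b) := h.of_dominated [((k + 1, 1, a), (k, 1, b))]
    ⟨by grind, by grind [List.Forall]⟩
  exact h'.of_dominated [] ⟨by grind, trivial⟩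

theorem gridNullIn_xRegion_step (hab : a + b = 1) (hk : k + 3 ≤ n)
    (hJ : ∀ i j l, J i j l → i + 1 ≤ k ∧ (i + 1 = k → j ≠ 1))
    (hA : ∀ i j l, i < n → j < 3 → l < 2 → (i = k ∧ j = 1) ∨ k + 1 ≤ i → A i j l)
    (h : GridNullIn n A fun i j l => (J i j l ∨ (i = k ∧ j = 1) ∨ (i = k + 1 ∧ j ≠ 1)) ∨
      xRegion (k + 3) b i j l) :
    GridNullIn n A fun i j l => J i j l ∨ xRegion (k + 1) a i j l := by
  have h₁ : GridNullIn n A fun i j l => J i j l ∨ (k + 1 ≤ i ∧ (i = k + 1 → j ≠ 1) ∧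
      (i = k + 2 → j ≠ 1 ∧ l = a) ∧ (i = k + 3 → l = a → j = 1) ∧ (i = k + 4 → j = 1 → l ≠ b)) ∨
      (i = k ∧ j = 1) :=
    h.of_dominated [((k + 2, 0, a), (k + 1, 0, b)), ((k + 2, 2, a), (k + 1, 2, b))]
      ⟨by grind, by and_intros <;> grind [List.Forall]⟩
  have h₂ : GridNullIn n A fun i j l => J i j l ∨ (k + 1 ≤ i ∧ (i = k + 1 → (j = 1 ↔ l = b)) ∧
      (i = k + 2 → j ≠ 1 ∧ l = a) ∧ (i = k + 3 → l = a → j = 1)) ∨ (i = k ∧ j = 1) :=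
    h₁.of_dominated [((k + 4, 1, b), (k + 3, 0, b)), ((k + 1, 1, b), (k, 1, a))]
      ⟨by grind, by and_intros <;> grind (splits := 20) [List.Forall]⟩
  have h₃ : GridNullIn n A fun i j l => J i j l ∨ (k + 1 ≤ i ∧ (i = k + 1 → (j = 1 ↔ l = b)) ∧
      (i = k + 2 → j ≠ 1)) ∨ (i = k ∧ j = 1 ∧ l = b) :=
    h₂.of_dominated [((k + 2, 0, b), (k + 1, 0, a)), ((k + 3, 0, a), (k + 1, 0, a)),
      ((k + 2, 2, b), (k + 1, 2, a)), ((k + 3, 2, a), (k + 1, 2, a))]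
      ⟨by grind, by and_intros <;> grind [List.Forall]⟩
  have h₄ : GridNullIn n A fun i j l => J i j l ∨ xRegion (k + 1) a i j l ∨
      (i = k ∧ j = 1 ∧ l = b) :=
    h₃.of_dominated [((k + 1, 1, a), (k, 1, b)), ((k + 2, 1, b), (k, 1, b))]
      ⟨by grind, by and_intros <;> grind [List.Forall]⟩
  exact h₄.of_dominated [] ⟨by grind, trivial⟩

theorem gridNullIn_xRegion : ∀ (m k a b : ℕ) (J : ℕ → ℕ → ℕ → Prop), a + b = 1 → k + 1 + m = n →
    (∀ i j l, J i j l → i + 1 ≤ k ∧ (i + 1 = k → j ≠ 1)) →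
    (∀ i j l, i < n → j < 3 → l < 2 → (i = k ∧ j = 1) ∨ k + 1 ≤ i → A i j l) →
    GridNullIn n A fun i j l => J i j l ∨ xRegion (k + 1) a i j l
  | 0, k, _, _, _, _, _, _, _ => .of_apex k 1 0 (by grind) (by grind)
  | 1, _, _, _, _, hab, hk, hJ, hA => gridNullIn_xRegion_one hab (by omega) hJ hA
  | m + 2, k, a, b, J, hab, hk, hJ, hA => gridNullIn_xRegion_step hab (by omega) hJ hA <|
    gridNullIn_xRegion m (k + 2) b a _ (by omega) (by omega) (by grind) (by grind)

theorem gridNullIn_zRegion_step (hab : a + b = 1) (hk : k + 3 ≤ n)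
    (hJ : ∀ i j l, J i j l → i + 1 ≤ k ∧ (i + 1 = k → (j = 1 ↔ l = a)))
    (hA : ∀ i j l, i < n → j < 3 → l < 2 →
      tripleRegion k a i j l ∧ (i = k + 1 → l = a → j ≠ 1) → A i j l)
    (h : GridNullIn n A fun i j l => (J i j l ∨ (k ≤ i ∧ i ≤ k + 1 ∧ (j = 1 ↔ l = b))) ∨
      zRegion (k + 2) b i j l) :
    GridNullIn n A fun i j l => J i j l ∨ zRegion k a i j l := by
  have h₁ : GridNullIn n A fun i j l => J i j l ∨ (k ≤ i ∧ i ≤ k + 1 ∧ (j = 1 ↔ l = b)) ∨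
      xRegion (k + 3) b i j l ∨ (i = k + 2 ∧ j = 1 ∧ l = a) :=
    h.of_dominated [((k + 3, 1, b), (k + 2, 1, a)), ((k + 4, 1, a), (k + 2, 1, a))]
      ⟨by grind, by and_intros <;> grind (splits := 20) [List.Forall]⟩
  have h₂ : GridNullIn n A fun i j l => J i j l ∨ (k ≤ i ∧ i ≤ k + 1 ∧ (j = 1 ↔ l = b)) ∨
      xRegion (k + 3) b i j l :=
    h₁.of_dominated [] ⟨by grind, trivial⟩
  have h₃ : GridNullIn n A fun i j l => J i j l ∨ (k ≤ i ∧ (i ≤ k + 1 → (j = 1 ↔ l = b)) ∧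
      (i = k + 2 → j ≠ 1 ∧ l = a) ∧ (i = k + 3 → l = a → j = 1)) :=
    h₂.of_dominated [((k + 4, 1, b), (k + 3, 0, b)), ((k + 2, 0, a), (k, 0, a)),
      ((k + 2, 2, a), (k, 2, a))] ⟨by grind, by and_intros <;> grind (splits := 20) [List.Forall]⟩
  exact h₃.of_dominated [((k + 2, 0, b), (k + 1, 0, a)), ((k + 3, 0, a), (k + 1, 0, a)),
    ((k + 2, 2, b), (k + 1, 2, a)), ((k + 3, 2, a), (k + 1, 2, a)),
    ((k + 2, 1, a), (k + 1, 0, a))]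
    ⟨by grind, by and_intros <;> grind (splits := 20) [List.Forall]⟩

theorem gridNullIn_zRegion : ∀ (m k a b : ℕ) (J : ℕ → ℕ → ℕ → Prop), a + b = 1 → k + 1 + m = n →
    (∀ i j l, J i j l → i + 1 ≤ k ∧ (i + 1 = k → (j = 1 ↔ l = a))) →
    (∀ i j l, i < n → j < 3 → l < 2 →
      tripleRegion k a i j l ∧ (i = k + 1 → l = a → j ≠ 1) → A i j l) →
    GridNullIn n A fun i j l => J i j l ∨ zRegion k a i j l
  | 0, k, a, b, _, _, _, _, hA => .of_apex k 1 b
    ⟨by omega, by omega, by omega, hA _ _ _ (by omega) (by omega) (by omega) (by grind)⟩ (by grind)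
  | 1, k, a, _, _, _, _, _, hA => .of_apex (k + 1) 0 a
    ⟨by omega, by omega, by omega, hA _ _ _ (by omega) (by omega) (by omega) (by grind)⟩ (by grind)
  | m + 2, k, a, b, J, hab, hk, hJ, hA => gridNullIn_zRegion_step hab (by omega) hJ hA <|
    gridNullIn_zRegion m (k + 2) b a _ (by omega) (by omega) (by grind) (by grind)

theorem isGridWedge_edgeRegion {c : ℕ → ℕ} (hab : a + b = 1) (hk : k + 2 ≤ n)
    (h : IsGridWedge n (xRegion (k + 2) b) c) :
    IsGridWedge n (edgeRegion k a) (shift (shift c)) := by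
  have h' := (h.addEdge k 0 a (k + 1) 0 a (by omega) (by omega) (by grind) (by grind)).addEdge
    k 2 a (k + 1) 2 a (by omega) (by omega) (by grind) (by grind)
  exact h'.fold (by grind) [((k + 3, 1, b), (k + 2, 0, b))] ⟨by grind, by grind [List.Forall]⟩

end Regions

section Counts

variable {n : ℕ} {A : ℕ → ℕ → ℕ → Prop} {m k a b : ℕ}

theorem gridNullIn_edgeRegion (hab : a + b = 1) (hk : k + 2 ≤ n)
    (hA : ∀ i j l, i < n → j < 3 → l < 2 →
      (i = k ∧ j ≠ 1) ∨ (i = k + 1 ∧ j = 1) ∨ k + 2 ≤ i → A i j l) :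
    GridNullIn n A (edgeRegion k a) := by
  obtain ⟨m, rfl⟩ := Nat.exists_eq_add_of_le hk
  have h : GridNullIn (k + 2 + m) A fun i j l => (i = k ∧ j ≠ 1) ∨ xRegion (k + 1 + 1) b i j l :=
    gridNullIn_xRegion m (k + 1) b a _ (by omega) (by omega) (by grind) (by grind)
  have h' : GridNullIn (k + 2 + m) A fun i j l => k ≤ i ∧ (i = k → j ≠ 1) ∧
      (i = k + 1 → j ≠ 1 ∧ l = a) ∧ (i = k + 2 → l = a → j = 1) ∧ (i = k + 3 → j = 1 → l ≠ b) :=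
    h.of_dominated [((k + 1, 0, a), (k, 0, b)), ((k + 1, 2, a), (k, 2, b))]
      ⟨by grind, by and_intros <;> grind [List.Forall]⟩
  exact h'.of_dominated [((k + 3, 1, b), (k + 2, 0, b))] ⟨by grind, by grind [List.Forall]⟩

/-- The number of spheres of each dimension plus one, for `yRegion` with `m` layers. -/
def yCount : ℕ → ℕ → ℕ
  | 0 => Pi.single 0 1
  | 1 => Pi.single 2 1
  | 2 => Pi.single 3 1 + shift (shift (shift (Pi.single 0 1)))
  | m + 3 => Pi.single ((3 * (m + 3) + 1) / 2) 1 +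
      shift (shift (shift (tripleCount (m + 1) + shift (yCount m))))

/-- The number of spheres of each dimension plus one, for `xRegion` with `m` layers. -/
def xCount : ℕ → ℕ → ℕ
  | 0 => Pi.single 0 1
  | m + 1 => tripleCount (m + 1) + shift (yCount m)

lemma yCount_add_two (m : ℕ) :
    yCount (m + 2) = Pi.single ((3 * (m + 2) + 1) / 2) 1 + shift (shift (shift (xCount m))) := by
  rcases m with _ | m <;> rfl

lemma yCount_zero_one (m : ℕ) : yCount (m + 1) 0 = 0 ∧ yCount (m + 1) 1 = 0 := by
  rcases m with _ | m
  · simp [yCount]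
  · simp only [yCount_add_two, Pi.add_apply, Pi.single_apply, shift]
    constructor <;> rw [if_neg (by omega)]

theorem isGridWedge_yRegion_one (hab : a + b = 1) (hk : k + 1 = n) :
    IsGridWedge n (yRegion k a) (yCount 1) := by
  have h₀ : IsGridWedge n (fun _ _ _ => False) (Pi.single 0 1) := .of_empty (by simp)
  have h := (h₀.addEdge k 0 a k 0 b (by omega) (by omega) (by grind) (by simp)).addEdge
    k 2 a k 2 b (by omega) (by omega) (by grind) (by grind)
  rw [shift_single, shift_single] at h
  exact h.fold (by grind) [((k, 1, b), (k, 0, a))] ⟨by grind, by grind [List.Forall]⟩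

theorem isGridWedge_yRegion_delete (hab : a + b = 1) (hk : k + 2 + m = n) :
    IsGridWedge n (fun i j l => yRegion k a i j l ∧ (i = k → j ≠ 1))
      (Pi.single ((3 * (m + 2) + 1) / 2) 1) := by
  have hmid : IsGridWedge n (midRegion (k + 1)) (Pi.single (3 * (m + 1) / 2) 1) :=
    (isGridWedge_mid_side (m + 1) (k + 1) (by omega)).1
  have h := (hmid.addEdge k 0 a k 0 b (by omega) (by omega) (by grind) (by grind)).addEdge
    k 2 a k 2 b (by omega) (by omega) (by grind) (by grind)
  rw [shift_single, shift_single, show 3 * (m + 1) / 2 + 1 + 1 = (3 * (m + 2) + 1) / 2 by omega]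
    at h
  exact h.fold (by grind) [((k + 1, 0, a), (k, 0, b)), ((k + 1, 2, a), (k, 2, b))]
    ⟨by grind, by and_intros <;> grind [List.Forall]⟩

/-- Removing the point `(k, 1, b)` and its neighbours leaves `edgeRegion`, up to dominated
points. -/
theorem isGridWedge_yRegion_step (hab : a + b = 1) (hk : k + 2 + m = n)
    (h : IsGridWedge n (xRegion (k + 2) b) (xCount m)) :
    IsGridWedge n (yRegion k a) (yCount (m + 2)) := by
  have hlink : IsGridWedge n
      (fun i j l => k ≤ i ∧ (i = k → j ≠ 1 ∧ l = a) ∧ (i = k + 1 → l = a))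
      (shift (shift (xCount m))) :=
    (isGridWedge_edgeRegion hab (by omega) h).fold (by grind)
      [((k + 1, 1, a), (k, 0, a)), ((k + 2, 0, a), (k, 0, a)), ((k + 2, 2, a), (k, 2, a))]
      ⟨by grind, by and_intros <;> grind [List.Forall]⟩
  have hnull : GridNullIn n (fun i j l => yRegion k a i j l ∧ (i = k → j ≠ 1))
      fun i j l => k ≤ i ∧ (i = k → j ≠ 1 ∧ l = a) ∧ (i = k + 1 → l = a) :=
    (gridNullIn_edgeRegion (k := k) hab (by omega) (by grind)).of_dominated
      [((k + 1, 1, a), (k, 0, a)), ((k + 2, 0, a), (k, 0, a)), ((k + 2, 2, a), (k, 2, a))]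
      ⟨by grind, by and_intros <;> grind [List.Forall]⟩
  rw [yCount_add_two]
  exact (isGridWedge_yRegion_delete hab hk).split hlink k 1 b (by grind) (by grind) (by grind)
    (by rw [Pi.single_apply, if_neg (by omega)]) (by rw [Pi.single_apply, if_neg (by omega)]) rfl
    hnull

theorem isGridWedge_xRegion_one (hab : a + b = 1) (hk : k + 1 = n) :
    IsGridWedge n (xRegion k a) (xCount 1) := by
  have h₀ : IsGridWedge n (fun _ _ _ => False) (Pi.single 0 1) := .of_empty (by simp)
  have h := h₀.addEdge k 0 a k 1 a (by omega) (by omega) (by grind) (by simp)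
  rw [← zero_add (shift _)] at h
  exact h.fold (by grind) [((k, 2, a), (k, 0, a)), ((k, 1, b), (k, 0, a))]
    ⟨by grind, by and_intros <;> grind [List.Forall]⟩

theorem isGridWedge_xRegion_delete (hab : a + b = 1) (hk : k + 2 + m = n) :
    IsGridWedge n
      (fun i j l => k ≤ i ∧ (i = k → (j = 1 ↔ l = b)) ∧ (i = k + 1 → l = a → j ≠ 1))
      (tripleCount (m + 2)) := by
  have h := (isGridWedge_tripleRegion (n := n) m (k + 2) b a (by omega) (by omega)).add_triple_edges
    (k := k) hab (by omega)
  rw [shift_tripleCount] at h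
  exact h.fold (by grind) [((k + 1, 0, b), (k, 0, a)), ((k + 2, 0, a), (k, 0, a)),
    ((k + 1, 2, b), (k, 2, a)), ((k + 2, 2, a), (k, 2, a)), ((k + 2, 1, b), (k, 1, b))]
    ⟨by grind, by and_intros <;> grind [List.Forall]⟩

/-- Removing the point `(k, 1, a)` and its neighbours leaves `yRegion`, up to dominated points. -/
theorem isGridWedge_xRegion_step (hab : a + b = 1) (hk : k + 2 + m = n)
    (h : IsGridWedge n (yRegion (k + 1) a) (yCount (m + 1))) :
    IsGridWedge n (xRegion k a) (xCount (m + 2)) := by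
  have hlink : IsGridWedge n (fun i j l => k + 1 ≤ i ∧ (i = k + 1 → l = a → j ≠ 1))
      (yCount (m + 1)) :=
    h.fold (by grind) [((k + 2, 0, b), (k + 1, 0, a)), ((k + 2, 2, b), (k + 1, 2, a))]
      ⟨by grind, by and_intros <;> grind [List.Forall]⟩
  have hz : GridNullIn n
      (fun i j l => k ≤ i ∧ (i = k → (j = 1 ↔ l = b)) ∧ (i = k + 1 → l = a → j ≠ 1))
      fun i j l => False ∨ zRegion k a i j l :=
    gridNullIn_zRegion (m + 1) k a b _ hab (by omega) (by simp) (by grind)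
  have hnull' : GridNullIn n
      (fun i j l => k ≤ i ∧ (i = k → (j = 1 ↔ l = b)) ∧ (i = k + 1 → l = a → j ≠ 1))
      fun i j l => (k + 1 ≤ i ∧ (i = k + 1 → l = a → j ≠ 1)) ∨ (i = k ∧ j = 1 ∧ l = b) :=
    hz.of_dominated [((k + 1, 0, b), (k, 1, b)), ((k + 1, 2, b), (k, 1, b)),
      ((k + 2, 1, b), (k, 1, b))] ⟨by grind, by and_intros <;> grind [List.Forall]⟩
  exact (isGridWedge_xRegion_delete hab hk).split hlink k 1 a (by grind) (by grind) (by grind)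
    (by rw [← shift_tripleCount]; rfl) (by rw [← shift_tripleCount]; rfl) (yCount_zero_one m).1
    (hnull'.of_dominated [] ⟨by grind, trivial⟩)

theorem isGridWedge_xRegion_yRegion : ∀ m k a b, a + b = 1 → k + m = n →
    IsGridWedge n (xRegion k a) (xCount m) ∧ IsGridWedge n (yRegion k a) (yCount m)
  | 0, _, _, _, _, _ => ⟨.of_empty (by grind), .of_empty (by grind)⟩
  | 1, _, _, _, hab, hk => ⟨isGridWedge_xRegion_one hab hk, isGridWedge_yRegion_one hab hk⟩
  | m + 2, k, a, b, hab, hk =>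
    ⟨isGridWedge_xRegion_step hab (by omega)
        (isGridWedge_xRegion_yRegion (m + 1) (k + 1) a b hab (by omega)).2,
      isGridWedge_yRegion_step hab (by omega)
        (isGridWedge_xRegion_yRegion m (k + 2) b a (by omega) (by omega)).1⟩

theorem isGridWedge_univ_one : IsGridWedge 1 (fun _ _ _ => True) (Pi.single 2 1) := by
  have h₀ : IsGridWedge 1 (fun _ _ _ => False) (Pi.single 0 1) := .of_empty (by simp)
  have h := (h₀.addEdge 0 0 0 0 0 1 (by omega) (by omega) (by grind) (by simp)).addEdge
    0 2 0 0 2 1 (by omega) (by omega) (by grind) (by grind)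
  rw [shift_single, shift_single] at h
  exact h.fold (by grind) [((0, 1, 0), (0, 0, 1)), ((0, 1, 1), (0, 0, 0))]
    ⟨by grind, by and_intros <;> grind [List.Forall]⟩

/-- Removing the point `(0, 1, 0)` from the grid leaves `yRegion`, and removing its neighbours too
leaves `edgeRegion`, up to dominated points. -/
theorem isGridWedge_univ_add_two (m : ℕ) : IsGridWedge (m + 2) (fun _ _ _ => True)
    (yCount (m + 2) + shift (shift (shift (xCount m)))) := by
  have hdelete : IsGridWedge (m + 2) (fun i j l => i = 0 → l = 0 → j ≠ 1) (yCount (m + 2)) :=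
    (isGridWedge_xRegion_yRegion (m + 2) 0 0 1 rfl (by omega)).2.fold (by grind)
      [((1, 0, 1), (0, 0, 0)), ((1, 2, 1), (0, 2, 0))]
      ⟨by grind, by and_intros <;> grind [List.Forall]⟩
  have hlink : IsGridWedge (m + 2)
      (fun i j l => (i = 0 → j ≠ 1 ∧ l = 1) ∧ (i = 1 → l = 0 → j ≠ 1))
      (shift (shift (xCount m))) :=
    (isGridWedge_edgeRegion (k := 0) (a := 1) (b := 0) rfl (by omega)
      (isGridWedge_xRegion_yRegion m 2 0 1 rfl (by omega)).1).fold (by grind)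
      [((1, 0, 0), (0, 0, 1)), ((1, 1, 1), (0, 0, 1)), ((2, 0, 1), (0, 0, 1)),
        ((1, 2, 0), (0, 2, 1)), ((2, 2, 1), (0, 2, 1))]
      ⟨by grind, by and_intros <;> grind [List.Forall]⟩
  have hnull : GridNullIn (m + 2) (fun i j l => i = 0 → l = 0 → j ≠ 1)
      fun i j l => (i = 0 → j ≠ 1 ∧ l = 1) ∧ (i = 1 → l = 0 → j ≠ 1) :=
    (gridNullIn_edgeRegion (k := 0) (a := 1) (b := 0) rfl (by omega) (by grind)).of_dominated
      [((1, 0, 0), (0, 0, 1)), ((1, 1, 1), (0, 0, 1)), ((2, 0, 1), (0, 0, 1)),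
        ((1, 2, 0), (0, 2, 1)), ((2, 2, 1), (0, 2, 1))]
      ⟨by grind, by and_intros <;> grind [List.Forall]⟩
  exact hdelete.split hlink 0 1 0 (by grind) (by grind) (by grind) (yCount_zero_one _).1
    (yCount_zero_one _).2 rfl hnull

/-- The number of spheres of each dimension plus one, for the grid with `m` layers. -/
def gridCount : ℕ → ℕ → ℕ
  | 0 => Pi.single 0 1
  | 1 => Pi.single 2 1
  | m + 2 => yCount (m + 2) + shift (shift (shift (xCount m)))

theorem isGridWedge_univ : ∀ n, IsGridWedge n (fun _ _ _ => True) (gridCount n)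
  | 0 => .of_empty (by simp)
  | 1 => isGridWedge_univ_one
  | m + 2 => isGridWedge_univ_add_two m

theorem isSphereWedge_grid {n : ℕ} (hn : 1 ≤ n) :
    IsSphereWedge (grid n fun _ _ _ => True) fun k => gridCount n (k + 1) := by
  rcases isGridWedge_univ n with ⟨-, h⟩ | h
  · exact (h (0, 0, 0) (indepComplex_rel_self.2
      ⟨by omega, by norm_num, by norm_num, trivial⟩)).elim
  · exact h.2

lemma gridCount_add_single {m : ℕ} (hm : 1 ≤ m) :
    gridCount m + Pi.single ((3 * m + 1) / 2) 1 = 2 • yCount m := by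
  rcases m with _ | _ | m
  · omega
  · simp [gridCount, yCount, two_smul]
  · rw [gridCount, two_smul]
    nth_rw 3 [yCount_add_two]
    abel

lemma shift_add (c c' : ℕ → ℕ) : shift (c + c') = shift c + shift c' := by
  funext k
  rcases k with _ | k <;> rfl

lemma yCount_add_three (m k : ℕ) : yCount (m + 3) k =
    (if k = (3 * m + 10) / 2 then 1 else 0) + (if m % 2 = 1 ∧ k = (3 * m + 9) / 2 then 1 else 0) +
      if 4 ≤ k then yCount m (k - 4) else 0 := by
  have htriple : tripleCount (m + 3) k = if m % 2 = 1 ∧ k = (3 * m + 9) / 2 then 1 else 0 := by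
    by_cases h : m % 2 = 1
    · rw [tripleCount, if_pos (by omega), Pi.single_apply]
      grind
    · rw [tripleCount, if_neg (by omega), if_neg (by omega), Pi.zero_apply]
  have hshift : yCount (m + 3) = Pi.single ((3 * m + 10) / 2) 1 + tripleCount (m + 3) +
      shift (shift (shift (shift (yCount m)))) := by
    rw [yCount, shift_add, shift_add, shift_add, shift_tripleCount, ← add_assoc,
      show 3 * (m + 3) + 1 = 3 * m + 10 by ring]
  rw [hshift, Pi.add_apply, Pi.add_apply, htriple, Pi.single_apply]
  rcases k with _ | _ | _ | _ | k <;> simp [shift]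

lemma yCount_add_six (m k : ℕ) : yCount (m + 6) k =
    (if k = (3 * m + 19) / 2 then 1 else 0) + (if k = (3 * m + 18) / 2 then 2 else 0) +
      if 8 ≤ k then yCount m (k - 8) else 0 := by
  rw [show m + 6 = m + 3 + 3 by ring, yCount_add_three, yCount_add_three,
    show k - 4 - 4 = k - 8 by omega]
  split_ifs <;> omega

section ClosedForms

variable (q k : ℕ)

lemma yCount_six_mul : yCount (6 * q) k =
    if 8 * q < k ∧ k ≤ 9 * q then 3 else if k = 8 * q then 1 else 0 := by
  induction q generalizing k with
  | zero =>
    simp only [Nat.mul_zero, yCount, Pi.single_apply]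
    split_ifs <;> omega
  | succ q ih =>
    rw [show 6 * (q + 1) = 6 * q + 6 by ring, yCount_add_six, ih]
    split_ifs <;> omega

lemma yCount_six_mul_add_one : yCount (6 * q + 1) k =
    if k = 9 * q + 2 then 1 else if 8 * q + 2 ≤ k ∧ k ≤ 9 * q + 1 then 3 else 0 := by
  induction q generalizing k with
  | zero =>
    simp only [Nat.mul_zero, Nat.zero_add, yCount, Pi.single_apply]
    split_ifs <;> omega
  | succ q ih =>
    rw [show 6 * (q + 1) + 1 = 6 * q + 1 + 6 by ring, yCount_add_six, ih]
    split_ifs <;> omega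

lemma yCount_six_mul_add_two : yCount (6 * q + 2) k =
    if 8 * q + 3 < k ∧ k ≤ 9 * q + 3 then 3 else if k = 8 * q + 3 then 2 else 0 := by
  induction q generalizing k with
  | zero =>
    simp only [Nat.mul_zero, Nat.zero_add, yCount, shift_single, Pi.add_apply, Pi.single_apply]
    split_ifs <;> omega
  | succ q ih =>
    rw [show 6 * (q + 1) + 2 = 6 * q + 2 + 6 by ring, yCount_add_six, ih]
    split_ifs <;> omega

lemma yCount_six_mul_add_three : yCount (6 * q + 3) k =
    if k = 9 * q + 5 then 1 else
      if 8 * q + 5 ≤ k ∧ k ≤ 9 * q + 4 then 3 else if k = 8 * q + 4 then 1 else 0 := by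
  rw [yCount_add_three (6 * q), yCount_six_mul]
  split_ifs <;> omega

lemma yCount_six_mul_add_four : yCount (6 * q + 4) k =
    if 8 * q + 6 ≤ k ∧ k ≤ 9 * q + 6 then 3 else 0 := by
  rw [yCount_add_three (6 * q + 1), yCount_six_mul_add_one]
  split_ifs <;> omega

lemma yCount_six_mul_add_five : yCount (6 * q + 5) k =
    if k = 9 * q + 8 then 1 else
      if 8 * q + 8 ≤ k ∧ k ≤ 9 * q + 7 then 3 else if k = 8 * q + 7 then 2 else 0 := by
  rw [yCount_add_three (6 * q + 2), yCount_six_mul_add_two]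
  split_ifs <;> omega

end ClosedForms

end Counts

section CrossPolytope

variable {ι : Type} {d : ι → ℕ} {i j : ι}

/-- The vertices of the `i`-th cross-polytope of a bouquet: `(l, s)` is the end of sign `s` of the
axis `l`. -/
def bouquetVertex (d : ι → ℕ) (i : ι) (p : Fin (d i + 1) × Bool) : Option (ι × ℕ × Bool) :=
  if p = (0, true) then none else some (i, p.1, p.2)

lemma bouquetVertex_injective (d : ι → ℕ) (i : ι) : Function.Injective (bouquetVertex d i) := by
  rintro ⟨l, s⟩ ⟨l', s'⟩ h
  unfold bouquetVertex at h
  split_ifs at h with h1 h2 h2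
  · rw [h1, h2]
  · simpa [Prod.ext_iff, Fin.ext_iff] using h

lemma eq_of_bouquetVertex_eq_some {p : Fin (d i + 1) × Bool} {l : ℕ} {s : Bool}
    (h : bouquetVertex d i p = some (j, l, s)) : i = j := by
  unfold bouquetVertex at h
  split_ifs at h
  simp only [Option.some.injEq, Prod.mk.injEq] at h
  exact h.1

lemma bouquet_rel_bouquetVertex [Finite ι] {p q : Fin (d i + 1) × Bool} :
    (bouquet d).Rel (bouquetVertex d i p) (bouquetVertex d i q) ↔ (p.1 = q.1 → p.2 = q.2) := by
  obtain ⟨⟨l, hl⟩, s⟩ := p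
  obtain ⟨⟨l', hl'⟩, s'⟩ := q
  unfold bouquetVertex
  split_ifs with h1 h2 h2 <;>
    simp only [Prod.mk.injEq, Fin.ext_iff, Fin.val_zero] at h1 h2 <;>
    simp only [bouquet, bouquetRel, IsBouquetVertex, Fin.mk.injEq] <;> grind

/-- The positive part of `a` or of `-a`. -/
noncomputable def signedPart (s : Bool) (a : ℝ) : ℝ := bif s then a⁺ else a⁻

lemma signedPart_nonneg (s : Bool) (a : ℝ) : 0 ≤ signedPart s a := by
  cases s
  exacts [negPart_nonneg a, posPart_nonneg a]

lemma eq_of_signedPart_ne_zero {s s' : Bool} {a : ℝ} (h : signedPart s a ≠ 0)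
    (h' : signedPart s' a ≠ 0) : s = s' := by
  rcases le_total 0 a with ha | ha <;> cases s <;> cases s' <;> simp_all [signedPart]

lemma signedPart_sub_signedPart (a : ℝ) : signedPart true a - signedPart false a = a :=
  posPart_sub_negPart a

lemma signedPart_add_signedPart (a : ℝ) : signedPart true a + signedPart false a = |a| :=
  posPart_add_negPart a

lemma signedPart_sub {f : Bool → ℝ} (hf : ∀ s, 0 ≤ f s) (h : f true = 0 ∨ f false = 0)
    (s : Bool) : signedPart s (f true - f false) = f s := by
  cases s <;> rcases h with h | h <;> simp [signedPart, h, hf]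

/-- The barycentric coordinates of the point of the `i`-th cross-polytope with Cartesian
coordinates `q`. -/
noncomputable def crossPolytopePoint (d : ι → ℕ) (i : ι) (q : Fin (d i + 1) → ℝ) :
    Option (ι × ℕ × Bool) → ℝ :=
  Function.extend (bouquetVertex d i) (fun p => signedPart p.2 (q p.1)) 0

lemma crossPolytopePoint_bouquetVertex (q : Fin (d i + 1) → ℝ) (p : Fin (d i + 1) × Bool) :
    crossPolytopePoint d i q (bouquetVertex d i p) = signedPart p.2 (q p.1) :=
  (bouquetVertex_injective d i).extend_apply _ _ p

lemma exists_of_crossPolytopePoint_ne_zero {q : Fin (d i + 1) → ℝ} {v : Option (ι × ℕ × Bool)}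
    (h : crossPolytopePoint d i q v ≠ 0) : ∃ p, bouquetVertex d i p = v := by
  by_contra h'
  exact h (Function.extend_apply' _ _ v h')

lemma crossPolytopePoint_injective (d : ι → ℕ) (i : ι) :
    Function.Injective (crossPolytopePoint d i) := fun q q' h => funext fun l => by
  rw [← signedPart_sub_signedPart (q l), ← signedPart_sub_signedPart (q' l),
    ← crossPolytopePoint_bouquetVertex q (l, true), ← crossPolytopePoint_bouquetVertex q (l, false),
    h, crossPolytopePoint_bouquetVertex, crossPolytopePoint_bouquetVertex]

lemma finsum_eq_sum_bouquetVertex {f : Option (ι × ℕ × Bool) → ℝ}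
    (hf : ∀ v, f v ≠ 0 → ∃ p, bouquetVertex d i p = v) :
    ∑ᶠ v, f v = ∑ p, f (bouquetVertex d i p) := by
  rw [finsum_eq_sum_of_support_subset (s := Finset.univ.map ⟨_, bouquetVertex_injective d i⟩) f
    (fun v hv => by simpa using hf v hv), Finset.sum_map]
  rfl

lemma isPoint_crossPolytopePoint [Finite ι] {q : Fin (d i + 1) → ℝ} (hq : ∑ l, |q l| = 1) :
    (bouquet d).IsPoint (crossPolytopePoint d i q) where
  nonneg v := by
    by_cases hv : ∃ p, bouquetVertex d i p = v
    · obtain ⟨p, rfl⟩ := hv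
      rw [crossPolytopePoint_bouquetVertex]
      exact signedPart_nonneg _ _
    · rw [crossPolytopePoint, Function.extend_apply' _ _ _ hv]
      exact le_rfl
  rel u v hu hv := by
    obtain ⟨p, rfl⟩ := exists_of_crossPolytopePoint_ne_zero hu
    obtain ⟨p', rfl⟩ := exists_of_crossPolytopePoint_ne_zero hv
    rw [crossPolytopePoint_bouquetVertex] at hu hv
    exact bouquet_rel_bouquetVertex.2 fun h => eq_of_signedPart_ne_zero hu (h ▸ hv)
  finsum_eq_one := by
    rw [finsum_eq_sum_bouquetVertex fun v => exists_of_crossPolytopePoint_ne_zero,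
      Fintype.sum_prod_type]
    simp only [crossPolytopePoint_bouquetVertex, Fintype.sum_bool, signedPart_add_signedPart, hq]

lemma IsPoint.exists_bouquetVertex [Finite ι] [Nonempty ι] {f : Option (ι × ℕ × Bool) → ℝ}
    (hf : (bouquet d).IsPoint f) : ∃ i, ∀ v, f v ≠ 0 → ∃ p, bouquetVertex d i p = v := by
  by_cases h : ∃ i l s, f (some (i, l, s)) ≠ 0
  · obtain ⟨i, l, s, h⟩ := h
    refine ⟨i, ?_⟩
    rintro (_ | ⟨j, l', s'⟩) hv
    · exact ⟨(0, true), if_pos rfl⟩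
    · obtain ⟨rfl, -, ⟨hl', hs'⟩, -⟩ := hf.rel h hv
      refine ⟨(⟨l', Nat.lt_succ_of_le hl'⟩, s'), if_neg fun h => ?_⟩
      simp_all [Fin.ext_iff]
  · push Not at h
    obtain ⟨i⟩ := ‹Nonempty ι›
    refine ⟨i, ?_⟩
    rintro (_ | ⟨j, l', s'⟩) hv
    · exact ⟨(0, true), if_pos rfl⟩
    · exact (hv (h _ _ _)).elim

theorem IsPoint.exists_eq_crossPolytopePoint [Finite ι] [Nonempty ι]
    {f : Option (ι × ℕ × Bool) → ℝ} (hf : (bouquet d).IsPoint f) :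
    ∃ (i : ι) (q : Fin (d i + 1) → ℝ), ∑ l, |q l| = 1 ∧ crossPolytopePoint d i q = f := by
  obtain ⟨i, hi⟩ := hf.exists_bouquetVertex
  let q (l : Fin (d i + 1)) : ℝ :=
    f (bouquetVertex d i (l, true)) - f (bouquetVertex d i (l, false))
  have hq (l s) : signedPart s (q l) = f (bouquetVertex d i (l, s)) := by
    refine signedPart_sub (f := fun s => f (bouquetVertex d i (l, s))) (fun s => hf.nonneg _) ?_ s
    by_contra! h
    simpa using bouquet_rel_bouquetVertex.1 (hf.rel h.1 h.2) rfl
  refine ⟨i, q, ?_, funext fun v => ?_⟩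
  · rw [← hf.finsum_eq_one, finsum_eq_sum_bouquetVertex hi, Fintype.sum_prod_type]
    simp only [Fintype.sum_bool, ← signedPart_add_signedPart, hq]
  · by_cases hv : ∃ p, bouquetVertex d i p = v
    · obtain ⟨p, rfl⟩ := hv
      rw [crossPolytopePoint_bouquetVertex, hq]
    · rw [not_imp_comm.1 (hi v) hv, not_imp_comm.1 exists_of_crossPolytopePoint_ne_zero hv]

lemma continuous_crossPolytopePoint (d : ι → ℕ) (i : ι) :
    Continuous (crossPolytopePoint d i) := by
  refine continuous_pi fun v => ?_
  by_cases hv : ∃ p, bouquetVertex d i p = v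
  · obtain ⟨⟨l, s⟩, rfl⟩ := hv
    simp only [crossPolytopePoint_bouquetVertex]
    cases s
    exacts [(continuous_apply l).neg.max continuous_const,
      (continuous_apply l).max continuous_const]
  · exact continuous_const.congr fun x => (Function.extend_apply' _ _ v hv).symm

end CrossPolytope

section UnitSum

variable {k : ℕ}

/-- The rescaling of a vector to norm one for the sum norm. -/
noncomputable def unitSum (p : EuclideanSpace ℝ (Fin (k + 1))) (l : Fin (k + 1)) : ℝ :=
  p l / ∑ j, |p j|

lemma sum_abs_pos (p : sph k) : 0 < ∑ j, |p.1 j| := by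
  refine (Finset.sum_nonneg fun _ _ => abs_nonneg _).lt_of_ne' fun h => ?_
  have hp : p.1 = 0 := by
    ext j
    simpa using (Finset.sum_eq_zero_iff_of_nonneg fun _ _ => abs_nonneg _).1 h j (Finset.mem_univ j)
  simpa [hp] using p.2

lemma sum_abs_unitSum (p : sph k) : ∑ l, |unitSum p.1 l| = 1 := by
  have h := sum_abs_pos p
  simp only [unitSum, abs_div, abs_of_pos h]
  rw [← Finset.sum_div, div_self h.ne']

lemma continuous_unitSum : Continuous fun p : sph k => unitSum p.1 := by
  refine continuous_pi fun l => Continuous.div ?_ ?_ fun p => (sum_abs_pos p).ne' <;> fun_prop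

lemma unitSum_injective : Function.Injective fun p : sph k => unitSum p.1 := by
  refine fun p q h => Subtype.ext ((sameRay_iff_of_norm_eq ?_).1 <|
    .inr <| .inr ⟨_, _, sum_abs_pos q, sum_abs_pos p, ?_⟩)
  · rw [mem_sphere_zero_iff_norm.1 p.2, mem_sphere_zero_iff_norm.1 q.2]
  · ext l
    have hl := congrFun h l
    simp only [unitSum, div_eq_div_iff (sum_abs_pos p).ne' (sum_abs_pos q).ne'] at hl
    simp only [PiLp.smul_apply, smul_eq_mul, mul_comm _ (p.1 l), hl, mul_comm]

lemma exists_unitSum_eq {q : Fin (k + 1) → ℝ} (hq : ∑ l, |q l| = 1) :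
    ∃ p : sph k, unitSum p.1 = q := by
  let v : EuclideanSpace ℝ (Fin (k + 1)) := WithLp.toLp 2 q
  have hv : v ≠ 0 := by
    intro h
    have h0 (l) : q l = 0 := congrFun (congrArg WithLp.ofLp h) l
    simp [h0] at hq
  have hn : 0 < ‖v‖ := norm_pos_iff.2 hv
  refine ⟨⟨‖v‖⁻¹ • v, by simp [norm_smul, hn.ne']⟩, funext fun l => ?_⟩
  have hvl (l) : (‖v‖⁻¹ • v) l = ‖v‖⁻¹ * q l := rfl
  simp only [unitSum, hvl, abs_mul, ← Finset.mul_sum, hq, abs_of_pos (inv_pos.2 hn)]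
  field_simp

lemma unitSum_basePt (l : Fin (k + 1)) : unitSum (basePt k).1 l = if l = 0 then 1 else 0 := by
  simp [unitSum, basePt, apply_ite abs]

lemma eq_basePt {p : sph k}
    (h : ∀ l s, (l, s) ≠ ((0 : Fin (k + 1)), true) → signedPart s (unitSum p.1 l) = 0) :
    p = basePt k := by
  have hne (l) (hl : l ≠ 0) : unitSum p.1 l = 0 := by
    rw [← signedPart_sub_signedPart (unitSum p.1 l), h l true (by simp [hl]),
      h l false (by simp), sub_zero]
  have hzero : unitSum p.1 0 = 1 := by
    have hsum := sum_abs_unitSum p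
    rw [Finset.sum_eq_single 0 (fun l _ hl => by rw [hne l hl, abs_zero]) (by simp),
      ← signedPart_add_signedPart, h 0 false (by simp), add_zero] at hsum
    rw [← signedPart_sub_signedPart (unitSum p.1 0), hsum, h 0 false (by simp), sub_zero]
  refine unitSum_injective (funext fun l => ?_)
  dsimp only
  rw [unitSum_basePt]
  split_ifs with hl
  exacts [hl ▸ hzero, hne l hl]

end UnitSum

section BasePoint

variable {ι : Type} {d : ι → ℕ} {i j : ι} {p : sph (d i)} {q : sph (d j)}

lemma crossPolytopePoint_basePt (v : Option (ι × ℕ × Bool)) :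
    crossPolytopePoint d i (unitSum (basePt (d i)).1) v = if v = none then 1 else 0 := by
  by_cases hv : ∃ a, bouquetVertex d i a = v
  · obtain ⟨⟨l, s⟩, rfl⟩ := hv
    rw [crossPolytopePoint_bouquetVertex, unitSum_basePt]
    cases s <;> by_cases hl : l = 0 <;> simp [signedPart, bouquetVertex, hl]
  · rw [not_imp_comm.1 exists_of_crossPolytopePoint_ne_zero hv, if_neg]
    rintro rfl
    exact hv ⟨(0, true), if_pos rfl⟩

lemma exists_crossPolytopePoint_some_ne_zero (hp : p ≠ basePt (d i)) :
    ∃ l s, crossPolytopePoint d i (unitSum p.1) (some (i, l, s)) ≠ 0 := by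
  by_contra! h
  refine hp (eq_basePt fun l s hls => ?_)
  rw [← crossPolytopePoint_bouquetVertex _ (l, s), bouquetVertex, if_neg hls]
  exact h _ _

lemma eq_basePt_of_crossPolytopePoint_eq
    (h : crossPolytopePoint d i (unitSum p.1) = crossPolytopePoint d j (unitSum q.1))
    (hp : p = basePt (d i)) : q = basePt (d j) := by
  by_contra hq
  obtain ⟨l, s, hls⟩ := exists_crossPolytopePoint_some_ne_zero hq
  rw [← h, hp, crossPolytopePoint_basePt] at hls
  simp at hls

theorem crossPolytopePoint_unitSum_eq_iff :
    crossPolytopePoint d i (unitSum p.1) = crossPolytopePoint d j (unitSum q.1) ↔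
      (⟨i, p⟩ : Σ i, sph (d i)) = ⟨j, q⟩ ∨ p = basePt (d i) ∧ q = basePt (d j) := by
  constructor
  · intro h
    by_cases hp : p = basePt (d i)
    · exact .inr ⟨hp, eq_basePt_of_crossPolytopePoint_eq h hp⟩
    · obtain ⟨l, s, hls⟩ := exists_crossPolytopePoint_some_ne_zero hp
      obtain ⟨a, ha⟩ := exists_of_crossPolytopePoint_ne_zero (h ▸ hls)
      obtain rfl := eq_of_bouquetVertex_eq_some ha
      exact .inl (congrArg _ (unitSum_injective (crossPolytopePoint_injective d j h)))
  · rintro (h | ⟨rfl, rfl⟩)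
    · cases h
      rfl
    · exact funext fun v => (crossPolytopePoint_basePt v).trans (crossPolytopePoint_basePt v).symm

end BasePoint

section WedgeMap

variable {c : ℕ → ℕ} [Finite (Σ k, Fin (c k))]

/-- The map from the wedge of spheres to the bouquet of cross-polytopes given on each sphere by
radial projection. -/
noncomputable def wedgeMap (c : ℕ → ℕ) [Finite (Σ k, Fin (c k))] :
    sphereWedge c → (bouquet (Sigma.fst : (Σ k, Fin (c k)) → ℕ)).Realization :=
  Quot.lift (fun z => ⟨crossPolytopePoint Sigma.fst ⟨z.1, z.2.1⟩ (unitSum z.2.2.1),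
    isPoint_crossPolytopePoint (sum_abs_unitSum z.2.2)⟩) (by
      rintro ⟨k, j, p⟩ ⟨k', j', p'⟩ (h | h)
      · rw [h]
      · exact Subtype.ext (crossPolytopePoint_unitSum_eq_iff.2 (.inr h)))

lemma continuous_wedgeMap : Continuous (wedgeMap c) := by
  refine continuous_quot_lift _ (continuous_sigma fun k => .subtype_mk ?_ _)
  exact continuous_prod_of_discrete_left.2 fun j =>
    (continuous_crossPolytopePoint Sigma.fst (⟨k, j⟩ : Σ k, Fin (c k))).comp continuous_unitSum

lemma wedgeMap_injective : Function.Injective (wedgeMap c) := by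
  rintro ⟨k, j, p⟩ ⟨k', j', p'⟩ h
  rcases crossPolytopePoint_unitSum_eq_iff.1 (congrArg Subtype.val h) with h | h
  · cases h
    rfl
  · exact Quot.sound (.inr h)

lemma wedgeMap_surjective [Nonempty (Σ k, Fin (c k))] : Function.Surjective (wedgeMap c) := by
  rintro ⟨f, hf⟩
  obtain ⟨⟨k, j⟩, q, hq, rfl⟩ := hf.exists_eq_crossPolytopePoint
  obtain ⟨p, rfl⟩ := exists_unitSum_eq hq
  exact ⟨Quot.mk _ ⟨k, j, p⟩, rfl⟩

lemma compactSpace_sphereWedge : CompactSpace (sphereWedge c) := by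
  let g (z : Σ x : (Σ k, Fin (c k)), sph x.1) : sphereWedge c := Quot.mk _ ⟨z.1.1, z.1.2, z.2⟩
  have hg : Continuous g := continuous_sigma fun x =>
    continuous_quot_mk.comp ((continuous_sigmaMk (σ := fun k => Fin (c k) × sph k)).comp
      (Continuous.prodMk_right x.2))
  have g_surjective : Function.Surjective g := by
    rintro ⟨k, j, p⟩
    exact ⟨⟨⟨k, j⟩, p⟩, rfl⟩
  exact g_surjective.compactSpace hg

theorem nonempty_homeomorph_bouquet [Nonempty (Σ k, Fin (c k))] :
    Nonempty (sphereWedge c ≃ₜ (bouquet (Sigma.fst : (Σ k, Fin (c k)) → ℕ)).Realization) := by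
  have := compactSpace_sphereWedge (c := c)
  exact ⟨Continuous.homeoOfEquivCompactToT2
    (f := Equiv.ofBijective (wedgeMap c) ⟨wedgeMap_injective, wedgeMap_surjective⟩)
    continuous_wedgeMap⟩

end WedgeMap

lemma bouquet_comp_eqv {ι κ : Type} [Finite ι] [Finite κ] (e : ι ≃ κ) (d : κ → ℕ) :
    bouquet (d ∘ e) ≈ₛ bouquet d := by
  refine .of_iso ⟨Option.map (Prod.map e id), Option.map (Prod.map e.symm id), ?_, ?_, ?_, ?_⟩
  · rintro (_ | p) (_ | q) - - <;> simp [bouquet, bouquetRel, IsBouquetVertex]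
  · rintro (_ | p) h
    exacts [h, by simpa [bouquet, bouquetRel, IsBouquetVertex] using h]
  · rintro (_ | p) - <;> simp [Prod.map]
  · rintro (_ | p) - <;> simp [Prod.map]

theorem IsSphereWedge.nonempty_homotopyEquiv {V : Type} {F : FlagComplex V} {c : ℕ → ℕ}
    (h : IsSphereWedge F c) (hc : ∃ k, c k ≠ 0) :
    Nonempty (ContinuousMap.HomotopyEquiv F.Realization (sphereWedge c)) := by
  obtain ⟨ι, _, d, hd, hF⟩ := h
  let e : ι ≃ Σ k, Fin (c k) := (Equiv.sigmaFiberEquiv d).symm.trans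
    (Equiv.sigmaCongrRight fun k => Finite.equivFinOfCardEq (hd k))
  have : Finite (Σ k, Fin (c k)) := .of_equiv ι e
  have : Nonempty (Σ k, Fin (c k)) := hc.elim fun k hk => ⟨⟨k, 0, Nat.pos_of_ne_zero hk⟩⟩
  obtain ⟨f⟩ := (hF.trans (bouquet_comp_eqv e Sigma.fst)).nonempty_homotopyEquiv
  obtain ⟨g⟩ := nonempty_homeomorph_bouquet (c := c)
  exact ⟨f.trans g.symm.toHomotopyEquiv⟩

/-- The realization of `Cplx` in barycentric coordinates agrees with that of `FlagComplex`. -/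
def indepCpxHomeomorph {V : Type} [Fintype V] (G : SimpleGraph V) :
    (indepCpx G).space ≃ₜ (indepComplex G Set.univ).Realization :=
  (Homeomorph.refl (V → ℝ)).subtype fun f => by
    simp only [indepCpx, Finset.mem_filter, Finset.mem_univ, true_and]
    constructor
    · exact fun ⟨hsum, hf, hG⟩ => ⟨hf, fun u v hu hv => ⟨trivial, trivial, hG u hu v hv⟩,
        (finsum_eq_sum_of_fintype _).trans hsum⟩
    · exact fun ⟨hf, hG, hsum⟩ => ⟨(finsum_eq_sum_of_fintype _).symm.trans hsum, hf,
        fun u hu v hv => (hG hu hv).2.2⟩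

theorem indepComplex_Gam_eqv {n : ℕ} (hn : 1 ≤ n) :
    indepComplex (Gam n) Set.univ ≈ₛ grid n fun _ _ _ => True := by
  have : NeZero n := ⟨by omega⟩
  refine .of_iso ⟨fun a : GV n => ((a.1 : ℕ), (a.2.1 : ℕ), (a.2.2 : ℕ)),
    fun a => (Fin.ofNat n a.1, Fin.ofNat 3 a.2.1, Fin.ofNat 2 a.2.2), ?_, ?_, ?_, ?_⟩
  · rintro ⟨i, j, l⟩ ⟨i', j', l'⟩ - -
    simp only [indepComplex, gridSet, gridGraph, Gam, boxProd_adj, pathGraph_adj, gridAdj,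
      Set.mem_ofPred_eq, Set.mem_univ, Fin.is_lt, true_and, Prod.mk.injEq, Fin.ext_iff]
    omega
  · exact fun _ _ => indepComplex_rel_self.2 trivial
  · rintro ⟨i, j, l⟩ -
    simp
  · rintro ⟨i, j, l⟩ ⟨⟨hi, hj, hl, -⟩, -⟩
    exact Prod.ext (Nat.mod_eq_of_lt hi) (Prod.ext (Nat.mod_eq_of_lt hj) (Nat.mod_eq_of_lt hl))

theorem nonempty_homotopyEquiv_of_two_mul_yCount {n : ℕ} {c : ℕ → ℕ} (hn : 1 ≤ n)
    (h : ∀ k, c k + (if k + 1 = (3 * n + 1) / 2 then 1 else 0) = 2 * yCount n (k + 1))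
    (hc : ∃ k, c k ≠ 0) :
    Nonempty (ContinuousMap.HomotopyEquiv (indepCpx (Gam n)).space (sphereWedge c)) := by
  have gridCount_eq (k) : gridCount n (k + 1) = c k := by
    have hk := congrFun (gridCount_add_single hn) (k + 1)
    simp only [Pi.add_apply, Pi.single_apply, Pi.smul_apply, smul_eq_mul] at hk
    rwa [← h, Nat.add_right_cancel_iff] at hk
  have hwedge := (isSphereWedge_grid hn).congr (indepComplex_Gam_eqv hn)
  rw [funext gridCount_eq] at hwedge
  obtain ⟨e⟩ := hwedge.nonempty_homotopyEquiv hc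
  exact ⟨(indepCpxHomeomorph (Gam n)).toHomotopyEquiv.trans e⟩

end FlagComplex

/-- Theorem 6.11: the homotopy types of the independence complexes of the grid graphs
`Γ_n = P_n × P_3 × P_2`, as explicit wedges of spheres. -/
theorem indep_Gamma_homotopyEquiv :
    (∀ m : ℕ, 1 ≤ m → Nonempty (ContinuousMap.HomotopyEquiv
      (indepCpx (Gam (6 * m))).space
      (sphereWedge fun d => if d = 9 * m - 1 then 5 else if d = 8 * m - 1 then 2
        else if 8 * m ≤ d ∧ d ≤ 9 * m - 2 then 6 else 0))) ∧
    (∀ m : ℕ, Nonempty (ContinuousMap.HomotopyEquiv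
      (indepCpx (Gam (6 * m + 1))).space
      (sphereWedge fun d => if d = 9 * m + 1 then 1
        else if 8 * m + 1 ≤ d ∧ d ≤ 9 * m then 6 else 0))) ∧
    (Nonempty (ContinuousMap.HomotopyEquiv (indepCpx (Gam 2)).space
      (sphereWedge fun d => if d = 2 then 3 else 0))) ∧
    (∀ m : ℕ, 1 ≤ m → Nonempty (ContinuousMap.HomotopyEquiv
      (indepCpx (Gam (6 * m + 2))).space
      (sphereWedge fun d => if d = 9 * m + 2 then 5 else if d = 8 * m + 2 then 4
        else if 8 * m + 3 ≤ d ∧ d ≤ 9 * m + 1 then 6 else 0))) ∧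
    (∀ m : ℕ, Nonempty (ContinuousMap.HomotopyEquiv
      (indepCpx (Gam (6 * m + 3))).space
      (sphereWedge fun d => if d = 9 * m + 4 then 1 else if d = 8 * m + 3 then 2
        else if 8 * m + 4 ≤ d ∧ d ≤ 9 * m + 3 then 6 else 0))) ∧
    (∀ m : ℕ, Nonempty (ContinuousMap.HomotopyEquiv
      (indepCpx (Gam (6 * m + 4))).space
      (sphereWedge fun d => if d = 9 * m + 5 then 5
        else if 8 * m + 5 ≤ d ∧ d ≤ 9 * m + 4 then 6 else 0))) ∧
    (∀ m : ℕ, Nonempty (ContinuousMap.HomotopyEquiv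
      (indepCpx (Gam (6 * m + 5))).space
      (sphereWedge fun d => if d = 9 * m + 7 then 1 else if d = 8 * m + 6 then 4
        else if 8 * m + 7 ≤ d ∧ d ≤ 9 * m + 6 then 6 else 0))) := by
  exact ⟨fun m hm => FlagComplex.nonempty_homotopyEquiv_of_two_mul_yCount (by omega)
      (fun k => by rw [FlagComplex.yCount_six_mul]; split_ifs <;> omega)
      ⟨9 * m - 1, by simp⟩,
    fun m => FlagComplex.nonempty_homotopyEquiv_of_two_mul_yCount (by omega)
      (fun k => by rw [FlagComplex.yCount_six_mul_add_one]; split_ifs <;> omega)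
      ⟨9 * m + 1, by simp⟩,
    FlagComplex.nonempty_homotopyEquiv_of_two_mul_yCount (by omega)
      (fun k => by rw [FlagComplex.yCount_six_mul_add_two 0]; split_ifs <;> omega)
      ⟨2, by simp⟩,
    fun m hm => FlagComplex.nonempty_homotopyEquiv_of_two_mul_yCount (by omega)
      (fun k => by rw [FlagComplex.yCount_six_mul_add_two]; split_ifs <;> omega)
      ⟨9 * m + 2, by simp⟩,
    fun m => FlagComplex.nonempty_homotopyEquiv_of_two_mul_yCount (by omega)
      (fun k => by rw [FlagComplex.yCount_six_mul_add_three]; split_ifs <;> omega)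
      ⟨9 * m + 4, by simp⟩,
    fun m => FlagComplex.nonempty_homotopyEquiv_of_two_mul_yCount (by omega)
      (fun k => by rw [FlagComplex.yCount_six_mul_add_four]; split_ifs <;> omega)
      ⟨9 * m + 5, by simp⟩,
    fun m => FlagComplex.nonempty_homotopyEquiv_of_two_mul_yCount (by omega)
      (fun k => by rw [FlagComplex.yCount_six_mul_add_five]; split_ifs <;> omega)
      ⟨9 * m + 7, by simp⟩⟩
end
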